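/- arXiv:1710.02512 — 2 statements merged into one kernel-verified Lean document; each statement's English description precedes it below -/
import Mathlib

section
/- Let q be an even prime power with q > 8 and let n ≥ 5. Then every k-cap in PG(n, q) satisfies k < q^{n−1} − q^{n−2} + 2√5·q^{n−3} − 9q^{n−4} − 2(q^{n−5} + ⋯ + q + 1) + 1, where q^{n−5} + ⋯ + q + 1 denotes the geometric sum Σ_{i=0}^{n−5} q^i. -/
open Module

/-- Points of the projective space `PG(n, q)` over the field `F` (with `q = |F|`). -/
abbrev PGPoint (F : Type*) [Field F] (n : ℕ) := Projectivization F (Fin (n + 1) → F)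

/-- The set of projective points lying in the projective subspace determined by
a linear subspace `W`. -/
def ptsIn {F : Type*} [Field F] {n : ℕ} (W : Submodule F (Fin (n + 1) → F)) :
    Set (PGPoint F n) := {P | P.submodule ≤ W}

/-- Three points of `PG(n, q)` are collinear if they lie on a common line. -/
def Coll3 {F : Type*} [Field F] {n : ℕ} (P₁ P₂ P₃ : PGPoint F n) : Prop :=
  Module.finrank F ↥(P₁.submodule ⊔ P₂.submodule ⊔ P₃.submodule) ≤ 2

/-- A cap (a plane arc when `n = 2`): a set of points no three of which are collinear. -/
def IsCap {F : Type*} [Field F] {n : ℕ} (K : Set (PGPoint F n)) : Prop :=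
  ∀ P₁ ∈ K, ∀ P₂ ∈ K, ∀ P₃ ∈ K, P₁ ≠ P₂ → P₁ ≠ P₃ → P₂ ≠ P₃ → ¬ Coll3 P₁ P₂ P₃

/-- A complete cap: a cap that is not contained in a cap with one more point. -/
def IsCompleteCap {F : Type*} [Field F] {n : ℕ} (K : Set (PGPoint F n)) : Prop :=
  IsCap K ∧ ∀ P ∉ K, ¬ IsCap (insert P K)

/-- A tangent line of `K`: a line (2-dimensional linear subspace) meeting `K`
in exactly one point. -/
def IsTangent {F : Type*} [Field F] {n : ℕ} (K : Set (PGPoint F n))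
    (W : Submodule F (Fin (n + 1) → F)) : Prop :=
  Module.finrank F W = 2 ∧ (ptsIn W ∩ K).ncard = 1

section CapAux
open Finset
set_option linter.unusedSectionVars false
variable {F : Type*} [Field F] [Fintype F] [DecidableEq F] {V : Type*} [AddCommGroup V] [Module F V]
  [FiniteDimensional F V] [DecidableEq V]

noncomputable instance dualFintypeAux : Fintype (Dual F V) :=
  haveI : Finite (Dual F V) := Module.finite_of_finite F
  Fintype.ofFinite _

/-- pair independence -/
def Ind2 (F : Type*) [Field F] {V : Type*} [AddCommGroup V] [Module F V] (x y : V) : Prop :=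
  ∀ a b : F, a • x + b • y = 0 → a = 0 ∧ b = 0

/-- triple independence -/
def Ind3 (F : Type*) [Field F] {V : Type*} [AddCommGroup V] [Module F V] (x y z : V) : Prop :=
  ∀ a b c : F, a • x + b • y + c • z = 0 → a = 0 ∧ b = 0 ∧ c = 0

/-- vector representatives of a cap -/
structure VCap (F : Type*) [Field F] {V : Type*} [AddCommGroup V] [Module F V]
    (S : Finset V) : Prop where
  ne0 : ∀ x ∈ S, x ≠ 0
  two : ∀ x ∈ S, ∀ y ∈ S, x ≠ y → Ind2 F x y
  three : ∀ x ∈ S, ∀ y ∈ S, ∀ z ∈ S, x ≠ y → x ≠ z → y ≠ z → Ind3 F x y z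

theorem card_ann (U : Submodule F V) (p : Dual F V → Prop) [DecidablePred p]
    (hp : ∀ f, p f ↔ ∀ u ∈ U, f u = 0) :
    #{f : Dual F V | p f} * Fintype.card F ^ (finrank F U)
      = Fintype.card F ^ finrank F V := by
  have h1 : #{f : Dual F V | p f} = Nat.card U.dualAnnihilator := by
    rw [← Fintype.card_subtype, ← Nat.card_eq_fintype_card]
    apply Nat.card_congr
    apply Equiv.subtypeEquivRight
    intro f
    simp [Submodule.mem_dualAnnihilator, hp]
  have h2 := Subspace.finrank_add_finrank_dualAnnihilator_eq U
  rw [h1, Module.natCard_eq_pow_finrank (K := F), Nat.card_eq_fintype_card, ← pow_add, add_comm, h2]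

theorem ann1 {x : V} (hx : x ≠ 0) :
    #{f : Dual F V | f x = 0} * Fintype.card F = Fintype.card F ^ finrank F V := by
  rw [← card_ann (F := F) (Submodule.span F {x}) (fun f => f x = 0), finrank_span_singleton hx,
    pow_one]
  intro f
  constructor
  · rintro h u hu
    obtain ⟨a, rfl⟩ := Submodule.mem_span_singleton.1 hu
    simp [h]
  · intro h; exact h x (Submodule.mem_span_singleton_self x)

theorem ann2 {x y : V} (h : Ind2 F x y) :
    #{f : Dual F V | f x = 0 ∧ f y = 0} * Fintype.card F ^ 2 = Fintype.card F ^ finrank F V := by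
  have hl : LinearIndependent F ![x, y] := LinearIndependent.pair_iff.2 h
  have hr := finrank_span_eq_card hl
  rw [← card_ann (F := F) (Submodule.span F (Set.range ![x, y]))
    (fun f => f x = 0 ∧ f y = 0), hr, Fintype.card_fin]
  intro f
  constructor
  · rintro h u hu
    have : Submodule.span F (Set.range ![x, y]) ≤ LinearMap.ker f := by
      rw [Submodule.span_le]
      rintro _ ⟨i, rfl⟩
      fin_cases i <;> simp [h]
    exact this hu
  · intro h
    exact ⟨h x (Submodule.subset_span ⟨0, rfl⟩), h y (Submodule.subset_span ⟨1, rfl⟩)⟩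

theorem ann3 {x y z : V} (h : Ind3 F x y z) :
    #{f : Dual F V | f x = 0 ∧ f y = 0 ∧ f z = 0} * Fintype.card F ^ 3
      = Fintype.card F ^ finrank F V := by
  have hl : LinearIndependent F ![x, y, z] := by
    rw [Fintype.linearIndependent_iff]
    intro g hg i
    simp only [Fin.sum_univ_three, Matrix.cons_val_zero, Matrix.cons_val_one, Matrix.cons_val] at hg
    have := h _ _ _ hg
    fin_cases i
    · exact this.1
    · exact this.2.1
    · exact this.2.2
  have hr := finrank_span_eq_card hl
  rw [← card_ann (F := F) (Submodule.span F (Set.range ![x, y, z]))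
    (fun f => f x = 0 ∧ f y = 0 ∧ f z = 0), hr, Fintype.card_fin]
  intro f
  constructor
  · rintro h u hu
    have : Submodule.span F (Set.range ![x, y, z]) ≤ LinearMap.ker f := by
      rw [Submodule.span_le]
      rintro _ ⟨i, rfl⟩
      fin_cases i <;> simp [h]
    exact this hu
  · intro h
    exact ⟨h x (Submodule.subset_span ⟨0, rfl⟩), h y (Submodule.subset_span ⟨1, rfl⟩),
      h z (Submodule.subset_span ⟨2, rfl⟩)⟩

/-- number of points of `S` on the hyperplane `f`. -/
noncomputable def ZZ (S : Finset V) (f : Dual F V) : ℕ := #{v ∈ S | f v = 0}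

/-- the centred indicator -/
noncomputable def gg (f : Dual F V) (v : V) : ℝ :=
  (Fintype.card F : ℝ) * (if f v = 0 then 1 else 0) - 1

noncomputable def uu (S : Finset V) (f : Dual F V) : ℝ :=
  (Fintype.card F : ℝ) * ZZ S f - #S

theorem uu_eq (S : Finset V) (f : Dual F V) : uu S f = ∑ v ∈ S, gg f v := by
  simp only [uu, gg, ZZ, Finset.sum_sub_distrib, ← Finset.mul_sum, Finset.sum_boole]
  simp

theorem qpos : (0 : ℝ) < (Fintype.card F : ℝ) := by
  exact_mod_cast Fintype.card_pos

theorem sum_gg1 {x : V} (hx : x ≠ 0) : ∑ f : Dual F V, gg f x = 0 := by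
  have h := ann1 (F := F) hx
  have hN : Fintype.card (Dual F V) = Fintype.card F ^ finrank F V := by
    rw [Module.card_eq_pow_finrank (K := F), Subspace.dual_finrank_eq]
  simp only [gg, Finset.sum_sub_distrib, ← Finset.mul_sum, Finset.sum_boole, Finset.sum_const,
    card_univ, hN, ← h]
  push_cast
  ring_nf
  exact sub_eq_zero.2 (mul_comm _ _)

theorem sum_gg2 {x y : V} (hx : x ≠ 0) (hy : y ≠ 0) (h : Ind2 F x y) :
    ∑ f : Dual F V, gg f x * gg f y = 0 := by
  have h2 := ann2 (F := F) h
  have h1 := sum_gg1 (F := F) hx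
  have h1' := sum_gg1 (F := F) hy
  have hN : Fintype.card (Dual F V) = Fintype.card F ^ finrank F V := by
    rw [Module.card_eq_pow_finrank (K := F), Subspace.dual_finrank_eq]
  have e : ∀ f : Dual F V, gg f x * gg f y = (Fintype.card F : ℝ) ^ 2 *
      (if f x = 0 ∧ f y = 0 then 1 else 0) - gg f x - gg f y - 1 := by
    intro f
    unfold gg
    by_cases hx : f x = 0 <;> by_cases hy : f y = 0 <;> simp [hx, hy] <;> ring
  simp only [e, Finset.sum_sub_distrib, ← Finset.mul_sum, Finset.sum_boole, Finset.sum_const,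
    card_univ, hN, ← h2, h1, h1']
  push_cast
  ring_nf
  exact sub_eq_zero.2 (mul_comm _ _)

theorem sum_gg3 {x y z : V} (hx : x ≠ 0) (hy : y ≠ 0) (hz : z ≠ 0) (hxy : Ind2 F x y)
    (hxz : Ind2 F x z) (hyz : Ind2 F y z) (h : Ind3 F x y z) :
    ∑ f : Dual F V, gg f x * gg f y * gg f z = 0 := by
  have h3 := ann3 (F := F) h
  have hN : Fintype.card (Dual F V) = Fintype.card F ^ finrank F V := by
    rw [Module.card_eq_pow_finrank (K := F), Subspace.dual_finrank_eq]
  have e : ∀ f : Dual F V, gg f x * gg f y * gg f z = (Fintype.card F : ℝ) ^ 3 *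
      (if f x = 0 ∧ f y = 0 ∧ f z = 0 then 1 else 0) - gg f x * gg f y - gg f x * gg f z
      - gg f y * gg f z - gg f x - gg f y - gg f z - 1 := by
    intro f
    unfold gg
    by_cases hx : f x = 0 <;> by_cases hy : f y = 0 <;> by_cases hz : f z = 0 <;>
      simp [hx, hy, hz] <;> ring
  simp only [e, Finset.sum_sub_distrib, ← Finset.mul_sum, Finset.sum_boole, Finset.sum_const,
    card_univ, hN, ← h3, sum_gg1 hx, sum_gg1 hy, sum_gg1 hz, sum_gg2 hx hy hxy,
    sum_gg2 hx hz hxz, sum_gg2 hy hz hyz]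
  push_cast
  ring_nf
  exact sub_eq_zero.2 (mul_comm _ _)

theorem gg_sq (f : Dual F V) (v : V) : gg f v * gg f v =
    ((Fintype.card F : ℝ) - 2) * gg f v + ((Fintype.card F : ℝ) - 1) := by
  unfold gg
  by_cases h : f v = 0 <;> simp [h] <;> ring

theorem sum_ggsq {x : V} (hx : x ≠ 0) : ∑ f : Dual F V, gg f x * gg f x
    = ((Fintype.card F : ℝ) - 1) * (Fintype.card F : ℝ) ^ finrank F V := by
  have hN : Fintype.card (Dual F V) = Fintype.card F ^ finrank F V := by
    rw [Module.card_eq_pow_finrank (K := F), Subspace.dual_finrank_eq]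
  simp only [gg_sq, Finset.sum_add_distrib, ← Finset.mul_sum, sum_gg1 hx, Finset.sum_const,
    card_univ, hN]
  simp; ring

theorem sum_ggsq_mul {x y : V} (hx : x ≠ 0) (hy : y ≠ 0) (h : Ind2 F x y) :
    ∑ f : Dual F V, gg f x * gg f x * gg f y = 0 := by
  simp only [gg_sq, add_mul, Finset.sum_add_distrib, mul_assoc, ← Finset.mul_sum, sum_gg1 hy,
    sum_gg2 hx hy h]
  simp

theorem sum_ggcube {x : V} (hx : x ≠ 0) : ∑ f : Dual F V, gg f x * gg f x * gg f x
    = ((Fintype.card F : ℝ) - 1) * ((Fintype.card F : ℝ) - 2) *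
      (Fintype.card F : ℝ) ^ finrank F V := by
  have e : ∀ f : Dual F V, gg f x * gg f x * gg f x = ((Fintype.card F : ℝ) - 2) * (gg f x * gg f x)
      + ((Fintype.card F : ℝ) - 1) * gg f x := by
    intro f
    rw [gg_sq]; linear_combination (((Fintype.card F : ℝ) - 2)) * gg_sq f x
  simp only [e, Finset.sum_add_distrib, ← Finset.mul_sum, sum_gg1 hx, sum_ggsq hx]
  ring

theorem Ind2.symm {x y : V} (h : Ind2 F x y) : Ind2 F y x := fun a b hab => by
  have := h b a (by rw [add_comm]; exact hab)
  exact ⟨this.2, this.1⟩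

theorem moment2 {S : Finset V} (hS : VCap F S) : ∑ f : Dual F V, uu S f ^ 2
    = #S * (((Fintype.card F : ℝ) - 1) * (Fintype.card F : ℝ) ^ finrank F V) := by
  have : ∀ f : Dual F V, uu S f ^ 2 = ∑ x ∈ S, ∑ y ∈ S, gg f x * gg f y := by
    intro f
    rw [uu_eq, sq, Finset.sum_mul_sum]
  simp only [this]
  rw [Finset.sum_comm]
  rw [← nsmul_eq_mul, ← Finset.sum_const]
  apply Finset.sum_congr rfl
  intro x hx
  rw [Finset.sum_comm, Finset.sum_eq_single_of_mem x hx]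
  · exact sum_ggsq (hS.ne0 x hx)
  · intro y hy hyx
    exact sum_gg2 (hS.ne0 x hx) (hS.ne0 y hy) (hS.two x hx y hy hyx.symm)

theorem moment3 {S : Finset V} (hS : VCap F S) : ∑ f : Dual F V, uu S f ^ 3
    = #S * (((Fintype.card F : ℝ) - 1) * ((Fintype.card F : ℝ) - 2) *
      (Fintype.card F : ℝ) ^ finrank F V) := by
  have : ∀ f : Dual F V, uu S f ^ 3 = ∑ x ∈ S, ∑ y ∈ S, ∑ z ∈ S, gg f x * gg f y * gg f z := by
    intro f
    rw [uu_eq, pow_succ, sq, Finset.sum_mul_sum, Finset.sum_mul]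
    apply Finset.sum_congr rfl
    intro x hx
    rw [Finset.sum_mul_sum]
  simp only [this]
  rw [Finset.sum_comm]
  rw [← nsmul_eq_mul, ← Finset.sum_const]
  apply Finset.sum_congr rfl
  intro x hx
  rw [Finset.sum_comm, Finset.sum_eq_single_of_mem x hx]
  · rw [Finset.sum_comm, Finset.sum_eq_single_of_mem x hx]
    · exact sum_ggcube (hS.ne0 x hx)
    · intro y hy hyx
      exact sum_ggsq_mul (hS.ne0 x hx) (hS.ne0 y hy) (hS.two x hx y hy hyx.symm)
  · intro y hy hyx
    rw [Finset.sum_comm]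
    apply Finset.sum_eq_zero
    intro z hz
    have nx := hS.ne0 x hx
    have ny := hS.ne0 y hy
    by_cases h1 : z = x
    · subst h1
      rw [← sum_ggsq_mul nx ny (hS.two z hx y hy hyx.symm)]
      apply Finset.sum_congr rfl
      intro f _; ring
    by_cases h2 : z = y
    · subst h2
      rw [← sum_ggsq_mul ny nx (hS.two z hy x hx hyx)]
      apply Finset.sum_congr rfl
      intro f _; ring
    exact sum_gg3 nx ny (hS.ne0 z hz) (hS.two x hx y hy hyx.symm) (hS.two x hx z hz (Ne.symm h1))
      (hS.two y hy z hz (Ne.symm h2)) (hS.three x hx y hy z hz hyx.symm (Ne.symm h1) (Ne.symm h2))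


theorem sum_parallel {S : Finset V} {f0 : Dual F V} (h0 : ∀ v ∈ S, f0 v ≠ 0) (f : Dual F V) :
    ∑ c : F, ZZ S (f + c • f0) = #S := by
  simp only [ZZ, Finset.card_filter]
  rw [Finset.sum_comm, Finset.card_eq_sum_ones]
  apply Finset.sum_congr rfl
  intro v hv
  rw [Finset.sum_eq_single (-(f v) / f0 v)]
  · have := h0 v hv
    simp [this]
  · intro c _ hc
    rw [if_neg]
    intro h
    apply hc
    have := h0 v hv
    simp at h
    field_simp
    linear_combination h
  · simp

theorem sum_parallel_uu {S : Finset V} {f0 : Dual F V} (h0 : ∀ v ∈ S, f0 v ≠ 0) (f : Dual F V) :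
    ∑ c : F, uu S (f + c • f0) = 0 := by
  have h := sum_parallel h0 f
  simp only [uu, Finset.sum_sub_distrib, ← Finset.mul_sum, ← Nat.cast_sum, h]
  simp

theorem affine_ineq {S : Finset V} (hS : VCap F S) (hne : S.Nonempty) {f0 : Dual F V}
    (h0 : ∀ v ∈ S, f0 v ≠ 0) (m : ℝ)
    (hm : ∀ f : Dual F V, (∀ c : F, f ≠ c • f0) → (ZZ S f : ℝ) ≤ m) (hq2 : 2 < Fintype.card F) :
    0 ≤ ((Fintype.card F : ℝ) - 2) * ((Fintype.card F : ℝ) ^ finrank F V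
        - (Fintype.card F : ℝ) * (#S : ℝ) ^ 2)
      + ((Fintype.card F : ℝ) - 1) * ((Fintype.card F : ℝ) * m - #S) *
        ((Fintype.card F : ℝ) ^ finrank F V - (Fintype.card F : ℝ) * #S) := by
  classical
  set q : ℝ := (Fintype.card F : ℝ) with hq
  have hq2' : (2 : ℝ) < q := by rw [hq]; exact_mod_cast hq2
  set N : ℝ := q ^ finrank F V with hN
  set a : ℝ := (#S : ℝ) with ha
  have ha0 : 0 < a := by rw [ha]; exact_mod_cast hne.card_pos
  set M : ℝ := q * m - a with hM
  have hf0 : f0 ≠ 0 := by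
    rintro rfl
    obtain ⟨v, hv⟩ := hne
    exact h0 v hv rfl
  have hinj : Function.Injective (fun c : F => c • f0) := smul_left_injective F hf0
  -- values on the line through `f0`
  have hz : uu S (0 : Dual F V) = (q - 1) * a := by
    simp [uu, ZZ]; ring
  have hc : ∀ c : F, c ≠ 0 → uu S (c • f0) = - a := by
    intro c hc
    have : ZZ S (c • f0) = 0 := by
      rw [ZZ, Finset.card_eq_zero, Finset.filter_eq_empty_iff]
      intro v hv
      simp [hc, h0 v hv]
    simp [uu, this, ha]
  have hsum : ∀ φ : ℝ → ℝ, ∑ c : F, φ (uu S (c • f0)) = φ ((q - 1) * a) + (q - 1) * φ (- a) := by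
    intro φ
    rw [← Finset.add_sum_erase _ _ (Finset.mem_univ (0 : F)), zero_smul, hz]
    congr 1
    rw [Finset.sum_congr rfl (g := fun _ => φ (- a))
      (fun c hc' => by rw [hc c (Finset.ne_of_mem_erase hc')])]
    rw [Finset.sum_const, Finset.card_erase_of_mem (Finset.mem_univ _), Finset.card_univ,
      nsmul_eq_mul, Nat.cast_sub (by omega)]
    simp [hq]
  -- lower bound outside of that line
  have hlow : ∀ f : Dual F V, (∀ c : F, f ≠ c • f0) → 0 ≤ uu S f + (q - 1) * M := by
    intro f hf
    have h1 := sum_parallel_uu h0 f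
    rw [← Finset.add_sum_erase _ _ (Finset.mem_univ (0 : F)), zero_smul, add_zero] at h1
    have h2 : ∑ c ∈ Finset.univ.erase (0 : F), uu S (f + c • f0) ≤
        ∑ c ∈ Finset.univ.erase (0 : F), M := by
      apply Finset.sum_le_sum
      intro c _
      have := hm (f + c • f0) (by
        intro c' h
        apply hf (c' - c)
        ext v
        have h' := LinearMap.congr_fun h v
        simp at h' ⊢
        linear_combination h')
      simp only [uu, hM]
      have := mul_le_mul_of_nonneg_left this (le_of_lt (lt_trans two_pos hq2'))
      linarith
    rw [Finset.sum_const, Finset.card_erase_of_mem (Finset.mem_univ _), Finset.card_univ,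
      nsmul_eq_mul, Nat.cast_sub (by omega)] at h2
    push_cast at h2
    linarith
  have hm2 := moment2 (F := F) hS
  have hm3 := moment3 (F := F) hS
  have hsplit : ∀ φ : ℝ → ℝ, ∑ f : Dual F V, φ (uu S f) =
      ∑ c : F, φ (uu S (c • f0)) +
        ∑ f ∈ Finset.univ \ (Finset.univ.map ⟨_, hinj⟩), φ (uu S f) := by
    intro φ
    rw [add_comm, ← Finset.sum_sdiff (Finset.subset_univ (Finset.univ.map ⟨_, hinj⟩)),
      Finset.sum_map]
    rfl
  have key : 0 ≤ ∑ f ∈ Finset.univ \ (Finset.univ.map ⟨_, hinj⟩),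
      (fun u : ℝ => u ^ 3 + (q - 1) * M * u ^ 2) (uu S f) := by
    apply Finset.sum_nonneg
    intro f hf
    have := hlow f (by
      intro c h
      simp at hf
      exact hf c h.symm)
    simp only
    nlinarith [mul_nonneg (sq_nonneg (uu S f)) this]
  have e1 := hsplit (fun u : ℝ => u ^ 3 + (q - 1) * M * u ^ 2)
  have e0 := hsum (fun u : ℝ => u ^ 3 + (q - 1) * M * u ^ 2)
  rw [show ∑ c : F, (fun u : ℝ => u ^ 3 + (q - 1) * M * u ^ 2) (uu S (c • f0)) = _ from e0] at e1
  simp only [Finset.sum_add_distrib, ← Finset.mul_sum] at e1 key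
  rw [hm2, hm3] at e1
  rw [← hq, ← hN, ← ha] at e1
  have e2 : 0 ≤ ((q - 1) * a) * ((q - 2) * (N - q * a ^ 2) + (q - 1) * M * (N - q * a)) := by
    refine key.trans (le_of_eq ?_)
    linear_combination -e1
  exact nonneg_of_mul_nonneg_right e2 (by apply mul_pos <;> linarith)

theorem section_exists {S : Finset V} (hS : VCap F S) (f : Dual F V) :
    ∃ T : Finset (LinearMap.ker f), VCap F T ∧ #T = ZZ S f ∧ ∀ t, t ∈ T ↔ (t : V) ∈ S := by
  classical
  refine ⟨S.subtype (· ∈ LinearMap.ker f), ⟨?_, ?_, ?_⟩, ?_, ?_⟩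
  · rintro ⟨x, hx'⟩ hx h
    rw [Finset.mem_subtype] at hx
    exact hS.ne0 x hx (by simpa using h)
  · rintro ⟨x, hx'⟩ hx ⟨y, hy'⟩ hy hxy a b hab
    rw [Finset.mem_subtype] at hx hy
    exact hS.two x hx y hy (by simpa using hxy) a b (by simpa [Subtype.ext_iff] using hab)
  · rintro ⟨x, hx'⟩ hx ⟨y, hy'⟩ hy ⟨z, hz'⟩ hz hxy hxz hyz a b c hab
    rw [Finset.mem_subtype] at hx hy hz
    exact hS.three x hx y hy z hz (by simpa using hxy) (by simpa using hxz) (by simpa using hyz)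
      a b c (by simpa [Subtype.ext_iff] using hab)
  · rw [Finset.card_subtype, ZZ]
    simp [LinearMap.mem_ker]
  · intro t
    rw [Finset.mem_subtype]

theorem finrank_ker_dual {f : Dual F V} (hf : f ≠ 0) :
    finrank F (LinearMap.ker f) + 1 = finrank F V :=
  Module.Dual.finrank_ker_add_one_of_ne_zero hf

theorem VCap.subset {S T : Finset V} (hS : VCap F S) (h : T ⊆ S) : VCap F T :=
  ⟨fun x hx => hS.ne0 x (h hx), fun x hx y hy => hS.two x (h hx) y (h hy),
    fun x hx y hy z hz => hS.three x (h hx) y (h hy) z (h hz)⟩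

noncomputable instance dualDecAux : DecidableEq (Dual F V) := Classical.decEq _

theorem Ind3.swap {x y z : V} (h : Ind3 F x y z) : Ind3 F x z y := fun a b c hh => by
  have := h a c b (by rw [← hh]; abel)
  tauto

theorem Ind3.rot {x y z : V} (h : Ind3 F x y z) : Ind3 F y z x := fun a b c hh => by
  have := h c a b (by rw [← hh]; abel)
  tauto

theorem Ind3.left {x y z : V} (h : Ind3 F x y z) : Ind2 F x y := fun a b hh => by
  have := h a b 0 (by simpa using hh)
  tauto

theorem Ind3.ne {x y z : V} (h : Ind3 F x y z) : y ≠ z := by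
  rintro rfl
  have := h 0 1 (-1) (by simp)
  exact one_ne_zero this.2.1

theorem Ind2.ne0 {x y : V} (h : Ind2 F x y) : x ≠ 0 := by
  rintro rfl
  have := h 1 0 (by simp)
  exact one_ne_zero this.1

theorem kill3 (hd : finrank F V = 3) {x y z : V} (h : Ind3 F x y z) {f : Dual F V}
    (hx : f x = 0) (hy : f y = 0) (hz : f z = 0) : f = 0 := by
  have h3 := ann3 (F := F) h
  rw [hd] at h3
  have h1 : #{f : Dual F V | f x = 0 ∧ f y = 0 ∧ f z = 0} = 1 :=
    Nat.eq_of_mul_eq_mul_right (pow_pos Fintype.card_pos 3) (by rw [h3, one_mul])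
  exact Finset.card_le_one.1 h1.le f (by simp [hx, hy, hz]) 0 (by simp)

/-- double counting functionals against points -/
theorem kill_sum (p : Dual F V → Prop) [DecidablePred p] (p0 : p 0) (B : Finset V) (c : ℕ)
    (hc : ∀ b ∈ B, #{f : Dual F V | p f ∧ f b = 0} = c) :
    ∑ f ∈ ({f : Dual F V | p f} : Finset (Dual F V)).erase 0, ZZ B f + #B = #B * c := by
  have h0 : ZZ B (0 : Dual F V) = #B := by simp [ZZ]
  conv_lhs => rw [← h0]
  rw [Finset.sum_erase_add _ _ (by simp [p0])]
  simp only [ZZ, Finset.card_filter]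
  rw [Finset.sum_comm, ← smul_eq_mul, ← Finset.sum_const]
  apply Finset.sum_congr rfl
  intro b hb
  rw [← hc b hb, Finset.card_filter, Finset.sum_filter]
  apply Finset.sum_congr rfl
  intro f _
  by_cases h1 : p f <;> by_cases h2 : f b = 0 <;> simp [h1, h2]

/-- `B` projects injectively from `P`. -/
structure PB (F : Type*) [Field F] {V : Type*} [AddCommGroup V] [Module F V]
    (P : V) (B : Finset V) : Prop where
  ne0 : P ≠ 0
  two : ∀ b ∈ B, Ind2 F P b
  three : ∀ b ∈ B, ∀ b' ∈ B, b ≠ b' → Ind3 F P b b'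

theorem ann1_three (hd : finrank F V = 3) {P : V} (hP : P ≠ 0) :
    #(({f : Dual F V | f P = 0} : Finset (Dual F V)).erase 0) + 1 = Fintype.card F ^ 2 := by
  rw [Finset.card_erase_add_one (by simp)]
  have := ann1 (F := F) hP
  rw [hd] at this
  exact Nat.eq_of_mul_eq_mul_right Fintype.card_pos (by rw [this]; ring)

theorem pencil_sum (hd : finrank F V = 3) {P : V} {B : Finset V} (h : PB F P B) :
    ∑ f ∈ ({f : Dual F V | f P = 0} : Finset (Dual F V)).erase 0, ZZ B f + #B
      = #B * Fintype.card F := by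
  apply kill_sum (fun f => f P = 0) (by simp)
  intro b hb
  have := ann2 (F := F) (h.two b hb)
  rw [hd] at this
  exact Nat.eq_of_mul_eq_mul_right (pow_pos Fintype.card_pos 2) (by rw [this]; ring)

theorem pencil_le_one (hd : finrank F V = 3) {P : V} {B : Finset V} (h : PB F P B)
    {f : Dual F V} (hf : f ∈ ({f : Dual F V | f P = 0} : Finset (Dual F V)).erase 0) :
    ZZ B f ≤ 1 := by
  rw [ZZ, Finset.card_le_one]
  intro a ha b hb
  simp only [Finset.mem_filter, Finset.mem_erase, Finset.mem_univ, true_and] at ha hb hf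
  by_contra hab
  exact hf.1 (kill3 hd (h.three a ha.1 b hb.1 hab) hf.2 ha.2 hb.2)

theorem pencil_bound (hd : finrank F V = 3) {P : V} {B : Finset V} (h : PB F P B) :
    #B ≤ Fintype.card F + 1 := by
  have h1 := pencil_sum hd h
  have h2 := ann1_three hd h.ne0
  have h3 := Finset.sum_le_card_nsmul _ (fun f => ZZ B f) 1 (fun f hf => pencil_le_one hd h hf)
  have hq : 1 < Fintype.card F := Fintype.one_lt_card
  simp only [smul_eq_mul, mul_one] at h3
  nlinarith

theorem pencil_cover (hd : finrank F V = 3) {P : V} {B : Finset V} (h : PB F P B)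
    (hB : #B = Fintype.card F + 1) {f : Dual F V} (hf : f ≠ 0) (hfP : f P = 0) :
    ∃ b ∈ B, f b = 0 := by
  have h1 := pencil_sum hd h
  have h2 := ann1_three hd h.ne0
  by_contra hcon
  push Not at hcon
  have hz : ZZ B f = 0 := by
    rw [ZZ, Finset.card_eq_zero, Finset.filter_eq_empty_iff]
    exact fun v hv => hcon v hv
  have h3 : ∑ g ∈ ({f : Dual F V | f P = 0} : Finset (Dual F V)).erase 0, ZZ B g <
    ∑ g ∈ ({f : Dual F V | f P = 0} : Finset (Dual F V)).erase 0, 1 := by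
    apply Finset.sum_lt_sum (fun f hf => pencil_le_one hd h hf)
    exact ⟨f, by simp [hf, hfP], by omega⟩
  simp only [Finset.sum_const, smul_eq_mul, mul_one] at h3
  rw [hB] at h1
  nlinarith

theorem pencil_ext (hd : finrank F V = 3) {P : V} {B : Finset V} (h : PB F P B)
    (hB : #B ≤ Fintype.card F) : ∃ f : Dual F V, f ≠ 0 ∧ f P = 0 ∧ ∀ b ∈ B, f b ≠ 0 := by
  have h1 := pencil_sum hd h
  have h2 := ann1_three hd h.ne0
  have hq : 1 < Fintype.card F := Fintype.one_lt_card
  by_contra hcon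
  push Not at hcon
  have h3 := Finset.card_nsmul_le_sum
    (({f : Dual F V | f P = 0} : Finset (Dual F V)).erase 0) (fun f => ZZ B f) 1 (by
      intro f hf
      simp only [Finset.mem_filter, Finset.mem_erase, Finset.mem_univ, true_and] at hf
      obtain ⟨b, hb, hfb⟩ := hcon f hf.1 hf.2
      exact Finset.card_pos.2 ⟨b, by simp [hb, hfb]⟩)
  simp only [smul_eq_mul, mul_one] at h3
  nlinarith

theorem VCap.pb {A : Finset V} (hA : VCap F A) {P : V} (hP : P ∈ A) : PB F P (A.erase P) where
  ne0 := hA.ne0 P hP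
  two b hb := hA.two P hP b (Finset.mem_of_mem_erase hb) (Finset.ne_of_mem_erase hb).symm
  three b hb b' hb' hbb := hA.three P hP b (Finset.mem_of_mem_erase hb) b'
    (Finset.mem_of_mem_erase hb') (Finset.ne_of_mem_erase hb).symm
    (Finset.ne_of_mem_erase hb').symm hbb

theorem PB.insert {P : V} {B : Finset V} (h : PB F P B) {w : V} (h2 : Ind2 F P w)
    (h3 : ∀ z ∈ B, Ind3 F P w z) : PB F P (insert w B) ∧ #(insert w B) = #B + 1 := by
  refine ⟨⟨h.ne0, ?_, ?_⟩, ?_⟩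
  · intro b hb
    rcases Finset.mem_insert.1 hb with rfl | hb
    · exact h2
    · exact h.two b hb
  · intro b hb b' hb' hbb
    rcases Finset.mem_insert.1 hb with h1 | h1 <;> rcases Finset.mem_insert.1 hb' with h4 | h4
    · exact absurd (h1.trans h4.symm) hbb
    · subst h1; exact h3 b' h4
    · subst h4; exact (h3 b h1).swap
    · exact h.three b h1 b' h4 hbb
  · apply Finset.card_insert_of_notMem
    intro hw
    exact (h3 w hw).ne rfl

theorem arc_bound (hd : finrank F V = 3) {A : Finset V} (hA : VCap F A) :
    #A ≤ Fintype.card F + 2 := by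
  rcases A.eq_empty_or_nonempty with rfl | ⟨P, hP⟩
  · simp
  have := pencil_bound hd (hA.pb hP)
  rw [Finset.card_erase_of_mem hP] at this
  omega

theorem tangent_bound (hd : finrank F V = 3) {A : Finset V} (hA : VCap F A) {P w : V} (hP : P ∈ A)
    (h2 : Ind2 F P w) (h3 : ∀ z ∈ A, z ≠ P → Ind3 F P w z) : #A ≤ Fintype.card F + 1 := by
  obtain ⟨h, hc⟩ := (hA.pb hP).insert h2
    (fun z hz => h3 z (Finset.mem_of_mem_erase hz) (Finset.ne_of_mem_erase hz))
  have := pencil_bound hd h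
  rw [hc, Finset.card_erase_of_mem hP] at this
  omega

theorem tangent_unique (hd : finrank F V = 3) {A : Finset V} (hA : VCap F A)
    (hc : #A = Fintype.card F + 1) {P w w' : V} (hP : P ∈ A)
    (h2 : Ind2 F P w) (h3 : ∀ z ∈ A, z ≠ P → Ind3 F P w z)
    (h2' : Ind2 F P w') (h3' : ∀ z ∈ A, z ≠ P → Ind3 F P w' z) : ¬ Ind3 F P w w' := by
  intro h
  obtain ⟨hb, hc1⟩ := (hA.pb hP).insert h2
    (fun z hz => h3 z (Finset.mem_of_mem_erase hz) (Finset.ne_of_mem_erase hz))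
  obtain ⟨hb', hc2⟩ := hb.insert h2' (by
    intro z hz
    rcases Finset.mem_insert.1 hz with rfl | hz
    · exact h.swap
    · exact h3' z (Finset.mem_of_mem_erase hz) (Finset.ne_of_mem_erase hz))
  have := pencil_bound hd hb'
  rw [hc2, hc1, Finset.card_erase_of_mem hP] at this
  omega

theorem span_of_not_ind3 {P Q z : V} (h : ¬ Ind3 F P Q z) (h2 : Ind2 F P z) :
    ∃ α β : F, Q = α • P + β • z := by
  unfold Ind3 at h
  push Not at h
  obtain ⟨a, b, c, hs, hne⟩ := h
  have hb : b ≠ 0 := by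
    rintro rfl
    have := h2 a c (by simpa using hs)
    exact hne this.1 rfl this.2
  refine ⟨-a / b, -c / b, ?_⟩
  have : Q = b⁻¹ • (b • Q) := by rw [smul_smul, inv_mul_cancel₀ hb, one_smul]
  rw [this, eq_sub_of_add_eq' (eq_sub_of_add_eq hs)]
  module

/-- each point of a bisecant is on some tangent -/
theorem tangent_on_bisecant {A : Finset V} (hA : VCap F A)
    (hodd : Odd #A) {x y : V} (hx : x ∈ A) (hy : y ∈ A) (hxy : x ≠ y)
    {m : F} (hm : m ≠ 0) :
    ∃ P ∈ (A.erase x).erase y, Ind2 F P (x + m • y) ∧ ∀ z ∈ A, z ≠ P → Ind3 F P (x + m • y) z := by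
  set Q := x + m • y with hQ
  have mem : ∀ P ∈ (A.erase x).erase y, P ∈ A ∧ P ≠ x ∧ P ≠ y := by
    intro P hP
    simp only [Finset.mem_erase] at hP
    tauto
  have i3 : ∀ P ∈ (A.erase x).erase y, Ind3 F P x y := fun P hP =>
    hA.three P (mem P hP).1 x hx y hy (mem P hP).2.1 (mem P hP).2.2 hxy
  have i2 : ∀ P ∈ (A.erase x).erase y, Ind2 F P Q := by
    intro P hP a b h
    have := i3 P hP a b (b * m) (by rw [← h, hQ]; module)
    tauto
  by_contra hcon
  push Not at hcon
  have h1 : ∀ P ∈ (A.erase x).erase y, ∃ z ∈ (A.erase x).erase y, z ≠ P ∧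
      ∃ α β : F, Q = α • P + β • z := by
    intro P hP
    obtain ⟨z, hz, hzP, hn⟩ := hcon P hP (i2 P hP)
    refine ⟨z, ?_, hzP, span_of_not_ind3 hn (hA.two P (mem P hP).1 z hz hzP.symm)⟩
    simp only [Finset.mem_erase]
    refine ⟨?_, ?_, hz⟩
    · rintro rfl
      apply hn
      intro a b c h
      have := i3 P hP a b (b * m + c) (by rw [← h, hQ]; module)
      obtain ⟨h1, h2, h3⟩ := this
      subst h2
      simp at h3
      exact ⟨h1, rfl, h3⟩
    · rintro rfl
      apply hn
      intro a b c h
      have := i3 P hP a (b + c) (b * m) (by rw [← h, hQ]; module)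
      obtain ⟨h1, h2, h3⟩ := this
      have hb : b = 0 := by simpa [hm] using h3
      subst hb
      simp at h2
      exact ⟨h1, rfl, h2⟩
  have huniq : ∀ P ∈ (A.erase x).erase y, ∀ z ∈ A, ∀ z' ∈ A, z ≠ P → z' ≠ P →
      (∃ α β : F, Q = α • P + β • z) → (∃ α β : F, Q = α • P + β • z') → z = z' := by
    rintro P hP z hz z' hz' hzP hzP' ⟨α, β, h1⟩ ⟨α', β', h2⟩
    by_contra hne
    have := hA.three P (mem P hP).1 z hz z' hz' hzP.symm hzP'.symm hne (α - α') β (-β') (by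
      have : (α • P + β • z) - (α' • P + β' • z') = 0 := by rw [← h1, ← h2, sub_self]
      rw [← this]; module)
    have hb := this.2.1
    subst hb
    have := i2 P hP α (-1) (by rw [h1]; module)
    exact one_ne_zero (neg_eq_zero.1 this.2)
  choose! σ hσ using h1
  have hsum : ∑ P ∈ (A.erase x).erase y, (1 : ZMod 2) = 0 := by
    apply Finset.sum_involution (fun P _ => σ P)
    · intro P hP; decide
    · intro P hP _; exact (hσ P hP).2.1
    · intro P hP; exact (hσ P hP).1
    · intro P hP
      have a1 := hσ P hP
      have a2 := hσ (σ P) a1.1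
      apply huniq (σ P) a1.1 _ (mem _ a2.1).1 _ (mem _ hP).1 a2.2.1 a1.2.1.symm a2.2.2
      obtain ⟨α, β, h⟩ := a1.2.2
      exact ⟨β, α, by rw [h]; abel⟩
  rw [Finset.sum_const, nsmul_eq_mul, mul_one, ZMod.natCast_eq_zero_iff_even,
    Finset.card_erase_of_mem (by simp [hy, hxy.symm]), Finset.card_erase_of_mem hx] at hsum
  have : 2 ≤ #A := by
    have := Finset.one_lt_card.2 ⟨x, hx, y, hy, hxy⟩
    omega
  rw [Nat.odd_iff] at hodd
  rw [Nat.even_iff] at hsum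
  omega

theorem nucleus (hd : finrank F V = 3) {A : Finset V} (hA : VCap F A)
    (hc : #A = Fintype.card F + 1) (heven : Even (Fintype.card F)) :
    ∃ N : V, ∀ x ∈ A, ∀ y ∈ A, x ≠ y → Ind3 F N x y := by
  have hq : 1 < Fintype.card F := Fintype.one_lt_card
  have tang : ∀ P ∈ A, ∃ g : Dual F V, g P = 0 ∧ ∀ z ∈ A, g z = 0 → z = P := by
    intro P hP
    obtain ⟨g, _, hgP, hg⟩ := pencil_ext hd (hA.pb hP) (by
      rw [Finset.card_erase_of_mem hP]; omega)
    refine ⟨g, hgP, fun z hz hgz => ?_⟩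
    by_contra hne
    exact hg z (Finset.mem_erase.2 ⟨hne, hz⟩) hgz
  obtain ⟨P1, hP1, P2, hP2, hP12⟩ := Finset.one_lt_card.1 (show 1 < #A by omega)
  obtain ⟨g1, hg1, hg1'⟩ := tang P1 hP1
  obtain ⟨g2, hg2, hg2'⟩ := tang P2 hP2
  have hker : LinearMap.ker (g1.prod g2) ≠ ⊥ := by
    apply LinearMap.ker_ne_bot_of_finrank_lt
    rw [hd]; simp
  obtain ⟨N, hN, hN0⟩ := Submodule.exists_mem_ne_zero_of_ne_bot hker
  have hN1 : g1 N = 0 := by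
    have := LinearMap.mem_ker.1 hN
    simp at this; exact this.1
  have hN2 : g2 N = 0 := by
    have := LinearMap.mem_ker.1 hN
    simp at this; exact this.2
  refine ⟨N, fun x hx y hy hxy => ?_⟩
  by_contra hcon
  obtain ⟨α, β, hNe⟩ := span_of_not_ind3 (P := x) (Q := N) (z := y)
    (fun h => hcon h.rot.swap) (hA.two x hx y hy hxy)
  have hα : α ≠ 0 := by
    rintro rfl
    have hβ : β ≠ 0 := by rintro rfl; simp at hNe; exact hN0 hNe
    apply hP12
    rw [← hg1' y hy, ← hg2' y hy]
    · simpa [hNe, hβ] using hN2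
    · simpa [hNe, hβ] using hN1
  have hβ : β ≠ 0 := by
    rintro rfl
    apply hP12
    rw [← hg1' x hx, ← hg2' x hx]
    · simpa [hNe, hα] using hN2
    · simpa [hNe, hα] using hN1
  have hmem : ∀ P ∈ A, ∀ g : Dual F V, g P = 0 → (∀ z ∈ A, g z = 0 → z = P) → g N = 0 →
      P ∈ (A.erase x).erase y := by
    intro P hP g hg hg' hgN
    simp only [Finset.mem_erase]
    refine ⟨?_, ?_, hP⟩
    · rintro rfl
      apply hxy
      apply hg' x hx
      simpa [hNe, hg, hα] using hgN
    · rintro rfl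
      apply hxy
      symm
      apply hg' y hy
      simpa [hNe, hg, hβ] using hgN
  have hodd : Odd #A := by rw [hc]; exact heven.add_one
  have ht : ∀ m : F, m ≠ 0 → ∃ P ∈ (A.erase x).erase y, Ind2 F P (x + m • y) ∧
      ∀ z ∈ A, z ≠ P → Ind3 F P (x + m • y) z :=
    fun m hm => tangent_on_bisecant hA hodd hx hy hxy hm
  choose! π hπ1 hπ2 hπ3 using ht
  have mem : ∀ P ∈ (A.erase x).erase y, P ∈ A ∧ P ≠ x ∧ P ≠ y := by
    intro P hP
    simp only [Finset.mem_erase] at hP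
    tauto
  have i3 : ∀ P ∈ (A.erase x).erase y, Ind3 F P x y := fun P hP =>
    hA.three P (mem P hP).1 x hx y hy (mem P hP).2.1 (mem P hP).2.2 hxy
  have hinj : Set.InjOn π ((Finset.univ.erase (0 : F) : Finset F) : Set F) := by
    intro m hm m' hm' he
    simp at hm hm'
    by_contra hne
    refine tangent_unique hd hA hc (mem _ (hπ1 m hm)).1 (hπ2 m hm) (hπ3 m hm)
      (w' := x + m' • y) (he ▸ hπ2 m' hm') (he ▸ hπ3 m' hm') ?_
    intro a b c h
    have := i3 _ (hπ1 m hm) a (b + c) (b * m + c * m') (by rw [← h]; module)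
    obtain ⟨h1, h2, h3⟩ := this
    have h4 : c = -b := by linear_combination h2
    subst h4
    have h5 : b * (m - m') = 0 := by linear_combination h3
    have h6 : b = 0 := (mul_eq_zero.1 h5).resolve_right (sub_ne_zero.2 hne)
    simp [h1, h6]
  have hsurj := Finset.surjOn_of_injOn_of_card_le π (s := Finset.univ.erase (0 : F))
    (t := (A.erase x).erase y) (by
      intro m hm
      simp only [Finset.coe_erase, Finset.coe_univ, Set.mem_diff, Set.mem_univ, true_and,
        Set.mem_singleton_iff] at hm
      exact hπ1 m hm) hinj (by
      rw [Finset.card_erase_of_mem (by simp [hy, hxy.symm]), Finset.card_erase_of_mem hx,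
        Finset.card_erase_of_mem (Finset.mem_univ _), Finset.card_univ]
      omega)
  have final : ∀ P ∈ A, ∀ g : Dual F V, g P = 0 → (∀ z ∈ A, g z = 0 → z = P) → g N = 0 →
      P = π (β / α) := by
    intro P hP g hg hg' hgN
    have hPm := hmem P hP g hg hg' hgN
    obtain ⟨m, hm, rfl⟩ := hsurj hPm
    simp at hm
    congr 1
    by_contra hne
    have hI2 : Ind2 F (π m) N := by
      intro a b h
      have := i3 _ hPm a (b * α) (b * β) (by rw [← h, hNe]; module)
      exact ⟨this.1, by simpa [hα] using this.2.1⟩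
    refine tangent_unique hd hA hc hP (hπ2 m hm) (hπ3 m hm) (w' := N) hI2 ?_ ?_
    · intro z hz hzP a b c h
      have h1 := congrArg g h
      simp [hg, hgN] at h1
      have hcz : c = 0 := h1.resolve_right (fun h => hzP (hg' z hz h))
      subst hcz
      have := hI2 a b (by simpa using h)
      exact ⟨this.1, this.2, rfl⟩
    · intro a b c h
      have := i3 _ hPm a (b + c * α) (b * m + c * β) (by rw [← h, hNe]; module)
      obtain ⟨h1, h2, h3⟩ := this
      have h4 : b = - (c * α) := by linear_combination h2
      subst h4
      have h5 : c * (m * α - β) = 0 := by linear_combination -h3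
      have h6 : c = 0 := by
        refine (mul_eq_zero.1 h5).resolve_right ?_
        intro h
        apply hne
        field_simp
        linear_combination h
      simp [h1, h6]
  exact hP12 ((final P1 hP1 g1 hg1 hg1' hN1).trans (final P2 hP2 g2 hg2 hg2' hN2).symm)

theorem pencil4 (hd : finrank F V = 4) {x w : V} (h : Ind2 F x w) {B : Finset V}
    (hB : ∀ b ∈ B, Ind3 F x w b) :
    #(({f : Dual F V | f x = 0 ∧ f w = 0} : Finset (Dual F V)).erase 0) + 1 = Fintype.card F ^ 2 ∧
    ∑ f ∈ ({f : Dual F V | f x = 0 ∧ f w = 0} : Finset (Dual F V)).erase 0, ZZ B f + #B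
      = #B * Fintype.card F := by
  constructor
  · rw [Finset.card_erase_add_one (by simp)]
    have := ann2 (F := F) h
    rw [hd] at this
    exact Nat.eq_of_mul_eq_mul_right (pow_pos Fintype.card_pos 2) (by rw [this]; ring)
  · apply kill_sum (fun f => f x = 0 ∧ f w = 0) (by simp)
    intro b hb
    have := ann3 (F := F) (hB b hb)
    rw [hd] at this
    simp only [and_assoc]
    exact Nat.eq_of_mul_eq_mul_right (pow_pos Fintype.card_pos 3) (by rw [this]; ring)

theorem pencil4_big (hd : finrank F V = 4) {x w : V} (h : Ind2 F x w) {B : Finset V}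
    (hB : ∀ b ∈ B, Ind3 F x w b) (hc : Fintype.card F ^ 2 ≤ #B) :
    ∃ f : Dual F V, f ≠ 0 ∧ f x = 0 ∧ f w = 0 ∧ Fintype.card F ≤ ZZ B f := by
  obtain ⟨h1, h2⟩ := pencil4 hd h hB
  by_contra hcon
  push Not at hcon
  have hq : 1 < Fintype.card F := Fintype.one_lt_card
  have h3 := Finset.sum_le_card_nsmul
    (({f : Dual F V | f x = 0 ∧ f w = 0} : Finset (Dual F V)).erase 0) (fun f => ZZ B f)
    (Fintype.card F - 1) (by
      intro f hf
      simp only [Finset.mem_filter, Finset.mem_erase, Finset.mem_univ, true_and] at hf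
      have := hcon f hf.1 hf.2.1 hf.2.2
      omega)
  obtain ⟨r, hr⟩ : ∃ r, Fintype.card F = r + 1 := ⟨Fintype.card F - 1, by omega⟩
  rw [hr] at h1 h2 h3 hq hc
  simp only [smul_eq_mul, Nat.add_sub_cancel] at h3
  have hr0 : 0 < r := by omega
  nlinarith [Nat.mul_le_mul_right r hc, Nat.mul_le_mul_right r h1.le]

theorem exists_ind2_in_ker (hd : finrank F V = 3) (g : Dual F V) {P : V} (hP : P ≠ 0) :
    ∃ w, g w = 0 ∧ Ind2 F P w := by
  by_contra hcon
  push Not at hcon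
  have hle : LinearMap.ker g ≤ Submodule.span F {P} := by
    intro w hw
    by_contra hns
    apply hcon w (LinearMap.mem_ker.1 hw)
    intro a b h
    have hb : b = 0 := by
      by_contra hb
      apply hns
      rw [Submodule.mem_span_singleton]
      refine ⟨-a / b, ?_⟩
      have h1 : w = b⁻¹ • (b • w) := by rw [smul_smul, inv_mul_cancel₀ hb, one_smul]
      rw [h1, eq_neg_of_add_eq_zero_right h]
      module
    subst hb
    simp [hP] at h
    exact ⟨h, rfl⟩
  have h1 := Submodule.finrank_mono hle
  rw [finrank_span_singleton hP] at h1
  have h2 : finrank F V ≤ finrank F (LinearMap.ker g) + 1 := by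
    by_cases hg : g = 0
    · subst hg
      rw [LinearMap.ker_zero, finrank_top]; omega
    · rw [finrank_ker_dual hg]
  omega

theorem ZZ_erase {S : Finset V} {x : V} (hx : x ∈ S) {f : Dual F V} (hf : f x = 0) :
    ZZ (S.erase x) f + 1 = ZZ S f := by
  rw [ZZ, ZZ, Finset.filter_erase, Finset.card_erase_add_one]
  simp [hx, hf]

theorem sec_le (hd : finrank F V = 4) {S : Finset V} (hS : VCap F S) {f : Dual F V} (hf : f ≠ 0) :
    ZZ S f ≤ Fintype.card F + 2 := by
  obtain ⟨T, hT, hc, _⟩ := section_exists hS f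
  rw [← hc]
  have := finrank_ker_dual hf
  exact arc_bound (by omega) hT

theorem bisecant_plane (hd : finrank F V = 4) {S : Finset V} (hS : VCap F S)
    (hc : Fintype.card F ^ 2 + 2 ≤ #S) {x y : V} (hx : x ∈ S) (hy : y ∈ S) (hxy : x ≠ y) :
    ∃ f : Dual F V, f ≠ 0 ∧ f x = 0 ∧ f y = 0 ∧ ZZ S f = Fintype.card F + 2 := by
  have hy' : y ∈ S.erase x := by simp [hy, hxy.symm]
  obtain ⟨f, hf, hfx, hfy, hz⟩ := pencil4_big hd (hS.two x hx y hy hxy) (B := (S.erase x).erase y)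
    (by
      intro b hb
      simp only [Finset.mem_erase] at hb
      exact hS.three x hx y hy b hb.2.2 hxy (Ne.symm hb.2.1) (Ne.symm hb.1)) (by
      rw [Finset.card_erase_of_mem hy', Finset.card_erase_of_mem hx]
      omega)
  refine ⟨f, hf, hfx, hfy, le_antisymm (sec_le hd hS hf) ?_⟩
  rw [← ZZ_erase hx hfx, ← ZZ_erase hy' hfy]
  omega

theorem tangent_sec {f₁ : Dual F V} (hd : finrank F V = 4) {S : Finset V} (hS : VCap F S)
    {P w : V} (hP : P ∈ S) (h2 : Ind2 F P w) (h3 : ∀ z ∈ S, z ≠ P → f₁ z = 0 → Ind3 F P w z)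
    {f : Dual F V} (hf : f ≠ 0) (hfP : f P = 0) (hfw : f w = 0) (hff : ∀ z, f₁ z = f z) :
    ZZ S f ≤ Fintype.card F + 1 := by
  obtain ⟨T, hT, hc, hm⟩ := section_exists hS f
  rw [← hc]
  have := finrank_ker_dual hf
  apply tangent_bound (by omega) hT (P := ⟨P, LinearMap.mem_ker.2 hfP⟩)
    (w := ⟨w, LinearMap.mem_ker.2 hfw⟩)
  · rw [hm]; exact hP
  · intro a b h
    exact h2 a b (by simpa [Subtype.ext_iff] using h)
  · rintro ⟨z, hz'⟩ hz hzP a b c h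
    rw [hm] at hz
    exact h3 z hz (by simpa using hzP) ((hff z).trans (LinearMap.mem_ker.1 hz')) a b c
      (by simpa [Subtype.ext_iff] using h)

theorem tangent_plane (hd : finrank F V = 4) {S : Finset V} (hS : VCap F S)
    (hc : Fintype.card F ^ 2 + 2 ≤ #S) {P w : V} (hP : P ∈ S) (h2 : Ind2 F P w)
    (h3 : ∀ z ∈ S, z ≠ P → Ind3 F P w z) :
    ∃ f : Dual F V, f ≠ 0 ∧ ZZ S f = Fintype.card F + 1 := by
  obtain ⟨f, hf, hfx, hfy, hz⟩ := pencil4_big hd h2 (B := S.erase P)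
    (by
      intro b hb
      simp only [Finset.mem_erase] at hb
      exact h3 b hb.2 hb.1) (by
      rw [Finset.card_erase_of_mem hP]
      omega)
  refine ⟨f, hf, le_antisymm
    (tangent_sec hd hS hP h2 (fun z hz hzP _ => h3 z hz hzP) hf hfx hfy (fun _ => rfl)) ?_⟩
  rw [← ZZ_erase hP hfx]
  omega

theorem extend_cap (hd : finrank F V = 4) (heven : Even (Fintype.card F)) {S : Finset V}
    (hS : VCap F S) (hc : Fintype.card F ^ 2 + 2 ≤ #S) {f : Dual F V} (hf : f ≠ 0)
    (hz : ZZ S f = Fintype.card F + 1) : ∃ N, N ∉ S ∧ VCap F (insert N S) := by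
  obtain ⟨T, hT, hTc, hm⟩ := section_exists hS f
  have hd3 : finrank F (LinearMap.ker f) = 3 := by
    have := finrank_ker_dual hf
    omega
  have hq : 1 < Fintype.card F := Fintype.one_lt_card
  rw [hz] at hTc
  obtain ⟨⟨N, hNf⟩, hN⟩ := nucleus hd3 hT hTc heven
  have hNf' : f N = 0 := LinearMap.mem_ker.1 hNf
  have hN3 : ∀ x ∈ S, f x = 0 → ∀ y ∈ S, f y = 0 → x ≠ y → Ind3 F N x y := by
    intro x hx hfx y hy hfy hxy a b c h
    exact hN ⟨x, LinearMap.mem_ker.2 hfx⟩ (by rw [hm]; exact hx) ⟨y, LinearMap.mem_ker.2 hfy⟩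
      (by rw [hm]; exact hy) (by simpa using hxy) a b c (by simpa [Subtype.ext_iff] using h)
  have hT2 : ∀ x ∈ T, ∃ y ∈ T, x ≠ y := by
    intro x hx
    obtain ⟨y, hy, hyx⟩ := Finset.exists_mem_ne (show 1 < #T by omega) x
    exact ⟨y, hy, hyx.symm⟩
  have hN2 : ∀ x ∈ T, Ind2 F ⟨N, hNf⟩ x := by
    intro x hx
    obtain ⟨y, hy, hxy⟩ := hT2 x hx
    exact (hN x hx y hy hxy).left
  obtain ⟨R0, hR0⟩ : T.Nonempty := Finset.card_pos.1 (by omega)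
  have hPB : PB F (⟨N, hNf⟩ : LinearMap.ker f) T := ⟨(hN2 R0 hR0).ne0, hN2, hN⟩
  have main : ∀ x ∈ S, ∀ y ∈ S, x ≠ y → Ind3 F N x y := by
    intro x hx y hy hxy
    by_contra hcon
    obtain ⟨α, β, hNe⟩ := span_of_not_ind3 (P := x) (Q := N) (z := y)
      (fun h => hcon h.rot.swap) (hS.two x hx y hy hxy)
    obtain ⟨f', hf', hfx, hfy, hz'⟩ := bisecant_plane hd hS hc hx hy hxy
    have hfN : f' N = 0 := by simp [hNe, hfx, hfy]
    obtain ⟨R, hR, hfR⟩ : ∃ R ∈ T, f' (R : V) = 0 := by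
      by_cases h0 : f'.comp (LinearMap.ker f).subtype = 0
      · exact ⟨R0, hR0, by simpa using LinearMap.congr_fun h0 R0⟩
      · obtain ⟨R, hR, h⟩ := pencil_cover hd3 hPB hTc h0 (by simpa using hfN)
        exact ⟨R, hR, by simpa using h⟩
    obtain ⟨R, hRf⟩ := R
    have hRf' : f R = 0 := LinearMap.mem_ker.1 hRf
    have hRS : R ∈ S := by have := (hm _).1 hR; exact this
    have hI2 : Ind2 F R N := by
      intro a b h
      have := hN2 _ hR b a (by rw [Subtype.ext_iff]; simp; rw [← h]; abel)
      tauto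
    have := tangent_sec (f₁ := f') hd hS hRS hI2 (by
      intro z hzS hzR _
      by_cases hfz : f z = 0
      · exact (hN3 z hzS hfz R hRS hRf' hzR).swap.rot.swap
      · intro a b c h
        have h1 := congrArg f h
        simp [hRf', hNf', hfz] at h1
        subst h1
        have := hI2 a b (by simpa using h)
        exact ⟨this.1, this.2, rfl⟩) hf' hfR hfN (fun _ => rfl)
    omega
  have hS2 : ∀ x ∈ S, ∃ y ∈ S, x ≠ y := by
    intro x hx
    obtain ⟨y, hy, hyx⟩ := Finset.exists_mem_ne (show 1 < #S by omega) x
    exact ⟨y, hy, hyx.symm⟩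
  have main2 : ∀ x ∈ S, Ind2 F N x := by
    intro x hx
    obtain ⟨y, hy, hxy⟩ := hS2 x hx
    exact (main x hx y hy hxy).left
  have hNS : N ∉ S := by
    intro h
    have := main2 N h 1 (-1) (by simp)
    exact one_ne_zero this.1
  refine ⟨N, hNS, ⟨?_, ?_, ?_⟩⟩
  · intro x hx
    rcases Finset.mem_insert.1 hx with h | h
    · subst h
      intro h0
      exact hPB.ne0 (by rw [Subtype.ext_iff]; simpa using h0)
    · exact hS.ne0 x h
  · intro x hx y hy hxy
    rcases Finset.mem_insert.1 hx with h | h <;> rcases Finset.mem_insert.1 hy with h' | h'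
    · exact absurd (h.trans h'.symm) hxy
    · subst h; exact main2 y h'
    · subst h'; exact (main2 x h).symm
    · exact hS.two x h y h' hxy
  · intro x hx y hy z hz hxy hxz hyz
    rcases Finset.mem_insert.1 hx with h | h <;> rcases Finset.mem_insert.1 hy with h' | h' <;>
      rcases Finset.mem_insert.1 hz with h'' | h''
    · exact absurd (h.trans h'.symm) hxy
    · exact absurd (h.trans h'.symm) hxy
    · exact absurd (h.trans h''.symm) hxz
    · subst h; exact main y h' z h'' hyz
    · exact absurd (h'.trans h''.symm) hyz
    · subst h'; exact (main x h z h'' hxz).swap.rot.rot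
    · subst h''; exact (main x h y h' hxy).rot
    · exact hS.three x h y h' z h'' hxy hxz hyz

theorem small_section (hd : finrank F V = 4) {S : Finset V}
    (hS : VCap F S) (hc : Fintype.card F ^ 2 + 2 ≤ #S) {f : Dual F V} (hf : f ≠ 0)
    (hz : ZZ S f ≠ 0) (hz' : ZZ S f ≤ Fintype.card F) :
    ∃ f : Dual F V, f ≠ 0 ∧ ZZ S f = Fintype.card F + 1 := by
  obtain ⟨T, hT, hTc, hm⟩ := section_exists hS f
  have hd3 : finrank F (LinearMap.ker f) = 3 := by
    have := finrank_ker_dual hf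
    omega
  obtain ⟨P, hP⟩ : T.Nonempty := Finset.card_pos.1 (by omega)
  obtain ⟨g, _, hgP, hg⟩ := pencil_ext hd3 (hT.pb hP) (by
      rw [Finset.card_erase_of_mem hP]; omega)
  obtain ⟨w, hgw, hw⟩ := exists_ind2_in_ker hd3 g (hT.ne0 P hP)
  have h2 : Ind2 F (P : V) (w : V) := by
    intro a b h
    exact hw a b (by rw [Subtype.ext_iff]; simpa using h)
  apply tangent_plane hd hS hc (P := (P : V)) (w := (w : V)) ((hm P).1 hP) h2
  intro z hzS hzP a b c h
  have hc0 : c = 0 := by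
    by_cases hfz : f z = 0
    · have hz2 : (⟨z, LinearMap.mem_ker.2 hfz⟩ : LinearMap.ker f) ∈ T.erase P := by
        rw [Finset.mem_erase, hm]
        exact ⟨fun h => hzP (by rw [← h]), hzS⟩
      have h1 : a • P + b • w + c • (⟨z, LinearMap.mem_ker.2 hfz⟩ : LinearMap.ker f) = 0 := by
        rw [Subtype.ext_iff]; simpa using h
      have h3 := congrArg g h1
      have h4 := hg _ hz2
      simp only [map_add, map_smul, hgP, hgw, mul_zero, zero_add, smul_eq_mul, map_zero,
        mul_eq_zero] at h3
      exact h3.resolve_right h4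
    · have h3 := congrArg f h
      have h5 : f (P : V) = 0 := LinearMap.mem_ker.1 P.2
      have h6 : f (w : V) = 0 := LinearMap.mem_ker.1 w.2
      simp only [map_add, map_smul, h5, h6, mul_zero, zero_add, smul_eq_mul, map_zero,
        mul_eq_zero] at h3
      exact h3.resolve_right hfz
  subst hc0
  have := h2 a b (by simpa using h)
  exact ⟨this.1, this.2, rfl⟩

theorem step_cap (hd : finrank F V = 4) (heven : Even (Fintype.card F))
    (hq16 : 16 ≤ Fintype.card F) {S : Finset V}
    (hS : VCap F S) (hc : Fintype.card F ^ 2 + 2 ≤ #S) : ∃ N, N ∉ S ∧ VCap F (insert N S) := by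
  by_cases hex : ∃ f : Dual F V, f ≠ 0 ∧ ZZ S f = Fintype.card F + 1
  · obtain ⟨f, hf, hz⟩ := hex
    exact extend_cap hd heven hS hc hf hz
  exfalso
  have key : ∀ f : Dual F V, f ≠ 0 → ZZ S f ≠ 0 → ZZ S f = Fintype.card F + 2 := by
    intro f hf hz
    have h1 := sec_le hd hS hf
    have h2 : ZZ S f ≠ Fintype.card F + 1 := fun h => hex ⟨f, hf, h⟩
    have h3 : ¬ ZZ S f ≤ Fintype.card F := fun h => hex (small_section hd hS hc hf hz h)
    omega
  obtain ⟨x, hx, y, hy, hxy⟩ := Finset.one_lt_card.1 (show 1 < #S by omega)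
  have hy' : y ∈ S.erase x := by simp [hy, hxy.symm]
  have hB3 : ∀ b ∈ (S.erase x).erase y, Ind3 F x y b := by
    intro b hb
    simp only [Finset.mem_erase] at hb
    exact hS.three x hx y hy b hb.2.2 hxy (Ne.symm hb.2.1) (Ne.symm hb.1)
  obtain ⟨h1, h2⟩ := pencil4 hd (hS.two x hx y hy hxy) hB3
  have hBc : #((S.erase x).erase y) + 2 = #S := by
    rw [Finset.card_erase_of_mem hy', Finset.card_erase_of_mem hx]
    omega
  have hsum : ∑ f ∈ ({f : Dual F V | f x = 0 ∧ f y = 0} : Finset (Dual F V)).erase 0,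
      ZZ ((S.erase x).erase y) f
      = #(({f : Dual F V | f x = 0 ∧ f y = 0} : Finset (Dual F V)).erase 0) * Fintype.card F := by
    apply Finset.sum_const_nat
    intro f hf
    simp only [Finset.mem_filter, Finset.mem_erase, Finset.mem_univ, true_and] at hf
    have e1 := ZZ_erase hx hf.2.1
    have e2 := ZZ_erase hy' hf.2.2
    have e3 := key f hf.1 (by omega)
    omega
  rw [hsum] at h2
  set q := Fintype.card F with hqd
  have hk : #S = q ^ 2 + q + 2 := by
    obtain ⟨r, hr⟩ : ∃ r, q = r + 1 := ⟨q - 1, by omega⟩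
    set B := #((S.erase x).erase y)
    set A := #(({f : Dual F V | f x = 0 ∧ f y = 0} : Finset (Dual F V)).erase 0)
    have hA : A = r * (r + 2) := by
      rw [hr] at h1; nlinarith
    rw [hA, hr] at h2
    have : r * B = r * ((r + 2) * (r + 1)) := by nlinarith
    have := Nat.eq_of_mul_eq_mul_left (by omega) this
    rw [← hBc, this, hr]; ring
  have hI : ∀ b ∈ S, Ind2 F (x + y) b := by
    intro b hb a c h
    by_cases hbx : b = x
    · subst hbx
      have := hS.two b hx y hy hxy (a + c) a (by rw [← h]; module)
      have ha := this.2
      subst ha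
      simpa using this.1
    by_cases hby : b = y
    · subst hby
      have := hS.two x hx b hy hxy a (a + c) (by rw [← h]; module)
      have ha := this.1
      subst ha
      simpa using this.2
    have := hB3 b (by simp [hb, hbx, hby]) a a c (by rw [← h]; module)
    exact ⟨this.1, this.2.2⟩
  have h5 := kill_sum (fun f : Dual F V => f (x + y) = 0) (by simp) S (q ^ 2) (by
    intro b hb
    have := ann2 (F := F) (hI b hb)
    rw [hd] at this
    exact Nat.eq_of_mul_eq_mul_right (pow_pos Fintype.card_pos 2) (by rw [this]; ring))
  have hdvd : q + 2 ∣ ∑ f ∈ ({f : Dual F V | f (x + y) = 0} : Finset (Dual F V)).erase 0,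
      ZZ S f := by
    apply Finset.dvd_sum
    intro f hf
    simp only [Finset.mem_erase] at hf
    by_cases h : ZZ S f = 0
    · rw [h]; exact dvd_zero _
    · rw [key f hf.1 h]
  obtain ⟨t, ht⟩ := hdvd
  rw [ht, hk] at h5
  have : ((q : ℤ) + 2) ∣ 12 := by
    refine ⟨t - (q ^ 2 + q + 2) * (q - 2) - 3 * (q - 1), ?_⟩
    have h6 : ((q : ℤ) + 2) * t + (q ^ 2 + q + 2) = (q ^ 2 + q + 2) * q ^ 2 := by exact_mod_cast h5
    linear_combination (-1 : ℤ) * h6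
  have := Int.le_of_dvd (by norm_num) this
  omega

theorem cap4 (hd : finrank F V = 4) (heven : Even (Fintype.card F))
    (hq16 : 16 ≤ Fintype.card F) {S : Finset V} (hS : VCap F S) :
    #S ≤ Fintype.card F ^ 2 + 1 := by
  by_contra hcon
  have hcon' : Fintype.card F ^ 2 + 2 ≤ #S := by omega
  haveI : Finite V := Module.finite_of_finite F
  haveI := Fintype.ofFinite V
  have : ∀ n : ℕ, ∃ T : Finset V, VCap F T ∧ Fintype.card F ^ 2 + 2 + n ≤ #T := by
    intro n
    induction n with
    | zero => exact ⟨S, hS, hcon'⟩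
    | succ n ih =>
      obtain ⟨T, hT, hTc⟩ := ih
      obtain ⟨N, hN, hT'⟩ := step_cap hd heven hq16 hT (by omega)
      exact ⟨_, hT', by rw [Finset.card_insert_of_notMem hN]; omega⟩
  obtain ⟨T, _, hT⟩ := this (Fintype.card V)
  have := Finset.card_le_univ T
  omega

theorem aff5 (hd : finrank F V = 5) (heven : Even (Fintype.card F))
    (hq16 : 16 ≤ Fintype.card F) {S : Finset V} (hS : VCap F S) {f0 : Dual F V}
    (h0 : ∀ v ∈ S, f0 v ≠ 0) :
    (#S : ℝ) ≤ (Fintype.card F : ℝ) ^ 3 - (Fintype.card F : ℝ) ^ 2 + 4 * (Fintype.card F : ℝ) := by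
  obtain ⟨r, hr⟩ : ∃ r, Fintype.card F = r + 16 := ⟨Fintype.card F - 16, by omega⟩
  by_contra hcon
  have hbig : (r + 16) ^ 2 * (r + 15) + 4 * (r + 16) + 1 ≤ #S := by
    rw [hr] at hcon
    push Not at hcon
    have : (((r + 16) ^ 2 * (r + 15) + 4 * (r + 16) : ℕ) : ℝ) < (#S : ℝ) := by
      refine lt_of_le_of_lt (le_of_eq ?_) hcon
      push_cast
      ring
    have := Nat.cast_lt.1 this
    omega
  obtain ⟨T, hTS, hTc⟩ := Finset.exists_subset_card_eq hbig
  have hT := hS.subset hTS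
  have h := affine_ineq hT (Finset.card_pos.1 (by rw [hTc]; positivity)) (f0 := f0)
    (fun v hv => h0 v (hTS hv)) ((Fintype.card F : ℝ) ^ 2 + 1) (by
      intro f hf
      have hf0 : f ≠ 0 := by have := hf 0; simpa using this
      obtain ⟨U, hU, hUc, _⟩ := section_exists hT f
      have h1 := finrank_ker_dual hf0
      have := cap4 (by omega) heven hq16 hU
      rw [hUc] at this
      exact_mod_cast this) (by omega)
  rw [hd, hTc, hr] at h
  push_cast at h
  have hr0 : (0 : ℝ) ≤ r := Nat.cast_nonneg r
  have : (0 : ℝ) < (r + 16) * (21204591 + 7723991 * r + 1168335 * r ^ 2 + 93898 * r ^ 3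
    + 4227 * r ^ 4 + 101 * r ^ 5 + r ^ 6) := by positivity
  linarith

theorem aff6 (hd : finrank F V = 6) (heven : Even (Fintype.card F))
    (hq16 : 16 ≤ Fintype.card F) {S : Finset V} (hS : VCap F S) {f0 : Dual F V}
    (h0 : ∀ v ∈ S, f0 v ≠ 0) :
    (#S : ℝ) ≤ (Fintype.card F : ℝ) ^ 4 - 2 * (Fintype.card F : ℝ) ^ 3
      + 10 * (Fintype.card F : ℝ) ^ 2 := by
  obtain ⟨r, hr⟩ : ∃ r, Fintype.card F = r + 16 := ⟨Fintype.card F - 16, by omega⟩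
  by_contra hcon
  have hbig : (r + 16) ^ 3 * (r + 14) + 10 * (r + 16) ^ 2 + 1 ≤ #S := by
    rw [hr] at hcon
    push Not at hcon
    have : (((r + 16) ^ 3 * (r + 14) + 10 * (r + 16) ^ 2 : ℕ) : ℝ) < (#S : ℝ) := by
      refine lt_of_le_of_lt (le_of_eq ?_) hcon
      push_cast
      ring
    have := Nat.cast_lt.1 this
    omega
  obtain ⟨T, hTS, hTc⟩ := Finset.exists_subset_card_eq hbig
  have hT := hS.subset hTS
  have h := affine_ineq hT (Finset.card_pos.1 (by rw [hTc]; positivity)) (f0 := f0)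
    (fun v hv => h0 v (hTS hv))
    ((Fintype.card F : ℝ) ^ 3 - (Fintype.card F : ℝ) ^ 2 + 4 * (Fintype.card F : ℝ)) (by
      intro f hf
      have hf0 : f ≠ 0 := by have := hf 0; simpa using this
      obtain ⟨U, hU, hUc, hm⟩ := section_exists hT f
      have h1 := finrank_ker_dual hf0
      have := aff5 (by omega) heven hq16 hU (f0 := f0.comp (LinearMap.ker f).subtype) (by
        intro v hv
        exact h0 v (hTS ((hm v).1 hv)))
      rw [hUc] at this
      exact this) (by omega)
  rw [hd, hTc, hr] at h
  push_cast at h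
  have hr0 : (0 : ℝ) ≤ r := Nat.cast_nonneg r
  have : (0 : ℝ) < (r + 16) * (12275709951 + 5956966400 * r + 1260724632 * r ^ 2
    + 151929865 * r ^ 3 + 11397296 * r ^ 4 + 544676 * r ^ 5 + 16182 * r ^ 6 + 273 * r ^ 7
    + 2 * r ^ 8) := by positivity
  linarith

theorem exists_not_mul (hd : 2 ≤ finrank F V) (f0 : Dual F V) :
    ∃ f : Dual F V, ∀ c : F, f + c • f0 ≠ 0 := by
  have h : 0 < finrank F (LinearMap.ker f0) := by
    by_cases h : f0 = 0
    · subst h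
      rw [LinearMap.ker_zero, finrank_top]; omega
    · have := finrank_ker_dual h
      omega
  obtain ⟨⟨w, hw'⟩, hw⟩ := Module.finrank_pos_iff_exists_ne_zero.1 h
  have hw0 : w ≠ 0 := by simpa using hw
  have hw1 : f0 w = 0 := LinearMap.mem_ker.1 hw'
  obtain ⟨f, hf⟩ : ∃ f : Dual F V, f w ≠ 0 := by
    by_contra hcon
    push Not at hcon
    exact hw0 ((Module.forall_dual_apply_eq_zero_iff F w).1 hcon)
  refine ⟨f, fun c h => hf ?_⟩
  have := LinearMap.congr_fun h w
  simpa [hw1] using this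

theorem neg_exists {S : Finset V} (hS : VCap F S) (hne : S.Nonempty) (L : ℝ)
    (h : ((Fintype.card F : ℝ) ^ finrank F V) * ((Fintype.card F : ℝ) - 2)
      - ((Fintype.card F : ℝ) - 1) ^ 2 * (#S : ℝ) ^ 2
      + L * ((Fintype.card F : ℝ) ^ finrank F V - ((Fintype.card F : ℝ) - 1) * #S) < 0) :
    ∃ f : Dual F V, f ≠ 0 ∧ uu S f < -L := by
  by_contra hcon
  push Not at hcon
  have h2 := moment2 hS
  have h3 := moment3 hS
  have hu0 : uu S (0 : Dual F V) = ((Fintype.card F : ℝ) - 1) * #S := by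
    simp [uu, ZZ]; ring
  rw [← Finset.sum_erase_add _ _ (Finset.mem_univ (0 : Dual F V)), hu0] at h2 h3
  have hpos : 0 ≤ ∑ f ∈ (Finset.univ : Finset (Dual F V)).erase 0, (uu S f ^ 3 + L * uu S f ^ 2) := by
    apply Finset.sum_nonneg
    intro f hf
    have := hcon f (Finset.ne_of_mem_erase hf)
    have h5 : 0 ≤ uu S f ^ 2 * (uu S f + L) := mul_nonneg (sq_nonneg _) (by linarith)
    nlinarith
  rw [Finset.sum_add_distrib, ← Finset.mul_sum] at hpos
  have hk : (0 : ℝ) < #S := by exact_mod_cast Finset.card_pos.2 hne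
  have hq1 : (0 : ℝ) < (Fintype.card F : ℝ) - 1 := by
    have : (1 : ℝ) < (Fintype.card F : ℝ) := by exact_mod_cast Fintype.one_lt_card
    linarith
  have h6 := mul_neg_of_pos_of_neg (mul_pos hk hq1) h
  have e2 := eq_sub_of_add_eq h2
  have e3 := eq_sub_of_add_eq h3
  rw [e2, e3] at hpos
  nlinarith

end CapAux

section CapAux2
open Finset
universe u v
variable {F : Type v} [Field F] [Fintype F] [DecidableEq F]

theorem affBig (heven : Even (Fintype.card F))
    (hq16 : 16 ≤ Fintype.card F) (j : ℕ) : ∀ (V : Type u) [AddCommGroup V] [Module F V]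
    [FiniteDimensional F V] [DecidableEq V], finrank F V = 6 + j →
    ∀ S : Finset V, VCap F S → ∀ f0 : Dual F V, (∀ v ∈ S, f0 v ≠ 0) →
    (#S : ℝ) ≤ (Fintype.card F : ℝ) ^ j * ((Fintype.card F : ℝ) ^ 4 - 2 * (Fintype.card F : ℝ) ^ 3
      + 10 * (Fintype.card F : ℝ) ^ 2) := by
  induction j with
  | zero =>
    intro V _ _ _ _ hd S hS f0 h0
    rw [pow_zero, one_mul]
    exact aff6 hd heven hq16 hS h0
  | succ j ih =>
    intro V _ _ _ _ hd S hS f0 h0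
    obtain ⟨f, hf⟩ := exists_not_mul (F := F) (V := V) (by omega) f0
    have h1 := sum_parallel h0 f
    have h2 : ∀ c : F, (ZZ S (f + c • f0) : ℝ) ≤ (Fintype.card F : ℝ) ^ j *
        ((Fintype.card F : ℝ) ^ 4 - 2 * (Fintype.card F : ℝ) ^ 3
      + 10 * (Fintype.card F : ℝ) ^ 2) := by
      intro c
      obtain ⟨U, hU, hUc, hm⟩ := section_exists hS (f + c • f0)
      have h3 := finrank_ker_dual (hf c)
      rw [← hUc]
      exact ih (LinearMap.ker (f + c • f0)) (by omega) U hU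
        (f0.comp (LinearMap.ker (f + c • f0)).subtype) (by
        intro v hv
        exact h0 v ((hm v).1 hv))
    rw [← h1, Nat.cast_sum]
    refine (Finset.sum_le_card_nsmul _ _ _ (fun c _ => h2 c)).trans (le_of_eq ?_)
    rw [nsmul_eq_mul, Finset.card_univ]
    ring

theorem final_vec (heven : Even (Fintype.card F)) (hq16 : 16 ≤ Fintype.card F) (j : ℕ)
    (V : Type u) [AddCommGroup V] [Module F V]
    [FiniteDimensional F V] [DecidableEq V] (hd : finrank F V = 6 + j) (K : Finset V)
    (hK : VCap F K) : (#K : ℝ) < (Fintype.card F : ℝ) ^ (j + 2) *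
      ((Fintype.card F : ℝ) ^ 2 - (Fintype.card F : ℝ) + 3) := by
  obtain ⟨r, hr⟩ : ∃ r, Fintype.card F = r + 16 := ⟨Fintype.card F - 16, by omega⟩
  by_contra hcon
  have hr0 : (0 : ℝ) ≤ r := Nat.cast_nonneg r
  set s : ℝ := (Fintype.card F : ℝ) ^ (j + 2) with hs
  have hbig : (r + 16) ^ (j + 2) * ((r + 16) * (r + 15) + 3) ≤ #K := by
    push Not at hcon
    have : (((r + 16) ^ (j + 2) * ((r + 16) * (r + 15) + 3) : ℕ) : ℝ) ≤ (#K : ℝ) := by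
      refine le_trans (le_of_eq ?_) hcon
      rw [hs, hr]
      push_cast
      ring
    exact Nat.cast_le.1 this
  obtain ⟨S, hSK, hSc⟩ := Finset.exists_subset_card_eq hbig
  have hS := hK.subset hSK
  have hScr : (#S : ℝ) = s * ((Fintype.card F : ℝ) ^ 2 - (Fintype.card F : ℝ) + 3) := by
    rw [hSc, hs, hr]
    push_cast
    ring
  have hsq : (Fintype.card F : ℝ) ^ 2 ≤ s := by
    apply pow_le_pow_right₀ (by exact_mod_cast Fintype.card_pos) (by omega)
  have hq : (Fintype.card F : ℝ) = r + 16 := by rw [hr]; push_cast; ring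
  have hN : (Fintype.card F : ℝ) ^ finrank F V = s * (Fintype.card F : ℝ) ^ 4 := by
    rw [hd, hs]; ring
  have hspos : 0 < s := by rw [hs, hr]; positivity
  obtain ⟨f, hf, hfu⟩ := neg_exists hS (Finset.card_pos.1 (by rw [hSc]; positivity))
    (#S - 4 * (Fintype.card F : ℝ) * s) (by
      rw [hN, hScr, hq]
      rw [hq] at hsq
      have h1 : (0 : ℝ) ≤ s * (s - (r + 16) ^ 2) * (2207536 + 684259 * r + 84751 * r ^ 2
        + 5243 * r ^ 3 + 162 * r ^ 4 + 2 * r ^ 5) := by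
        apply mul_nonneg (mul_nonneg hspos.le (by linarith)); positivity
      have h2 : (0 : ℝ) < s * (564211712 + 245516544 * r + 45762192 * r ^ 2 + 4736067 * r ^ 3
        + 293921 * r ^ 4 + 10938 * r ^ 5 + 226 * r ^ 6 + 2 * r ^ 7) := by
        apply mul_pos hspos; positivity
      linarith)
  have hZ : (ZZ S f : ℝ) < 4 * s := by
    rw [uu] at hfu
    have : (Fintype.card F : ℝ) * ZZ S f < (Fintype.card F : ℝ) * (4 * s) := by linarith
    exact lt_of_mul_lt_mul_left this (by positivity)
  have h5 := affBig heven hq16 j V hd (S.filter (fun v => f v ≠ 0))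
    (hS.subset (Finset.filter_subset _ _)) f (by simp)
  have h6 : (ZZ S f : ℝ) + #(S.filter (fun v => f v ≠ 0)) = #S := by
    rw [ZZ]
    exact_mod_cast Finset.card_filter_add_card_filter_not (s := S) (fun v => f v = 0)
  have h7 : (Fintype.card F : ℝ) ^ j * ((Fintype.card F : ℝ) ^ 4 - 2 * (Fintype.card F : ℝ) ^ 3
      + 10 * (Fintype.card F : ℝ) ^ 2) = s * ((Fintype.card F : ℝ) ^ 2
        - 2 * (Fintype.card F : ℝ) + 10) := by rw [hs]; ring
  rw [h7] at h5
  rw [hq] at h5 hScr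
  have h8 : 0 ≤ s * r := mul_nonneg hspos.le hr0
  linarith

theorem card_ge_16 (heven : Even (Fintype.card F)) (h8 : 8 < Fintype.card F) :
    16 ≤ Fintype.card F := by
  obtain ⟨p, _, n, hp, hc⟩ := FiniteField.card' F
  rw [hc] at heven h8 ⊢
  have h2 : p = 2 := by
    have := (Nat.prime_dvd_prime_iff_eq Nat.prime_two hp).1
      (Nat.Prime.dvd_of_dvd_pow Nat.prime_two heven.two_dvd)
    exact this.symm
  subst h2
  have : 3 < (n : ℕ) := by
    by_contra h
    have : 2 ^ (n : ℕ) ≤ 2 ^ 3 := Nat.pow_le_pow_right (by norm_num) (by omega)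
    omega
  calc 16 = 2 ^ 4 := by norm_num
    _ ≤ 2 ^ (n : ℕ) := Nat.pow_le_pow_right (by norm_num) (by omega)

theorem geo_le (q : ℝ) (hq : 2 ≤ q) (m : ℕ) : ∑ i ∈ Finset.range m, q ^ i ≤ q ^ m := by
  induction m with
  | zero => simp
  | succ m ih =>
    rw [Finset.sum_range_succ, pow_succ]
    have : 0 < q ^ m := by positivity
    nlinarith

theorem link {n : ℕ} (K : Set (PGPoint F n)) (hK : IsCap K) :
    ∃ S : Finset (Fin (n + 1) → F), VCap F S ∧ #S = K.ncard := by
  classical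
  have hfin : Finite (PGPoint F n) := by
    have : Finite (Fin (n + 1) → F) := inferInstance
    exact Finite.of_injective (fun P : PGPoint F n => P.rep) (by
      intro P Q h
      rw [← P.mk_rep, ← Q.mk_rep]
      simp only at h
      simp only [h])
  have hKf : K.Finite := Set.toFinite K
  have hinj : Function.Injective (fun P : PGPoint F n => P.rep) := by
    intro P Q h
    rw [← P.mk_rep, ← Q.mk_rep]
    simp only at h
    simp only [h]
  have hsub : ∀ P : PGPoint F n, P.submodule = Submodule.span F {P.rep} := by
    intro P
    rw [Projectivization.submodule_eq]
  have htwo : ∀ P Q : PGPoint F n, P ≠ Q → Ind2 F P.rep Q.rep := by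
    intro P Q hPQ a b h
    by_cases hb : b = 0
    · subst hb
      simp [P.rep_nonzero] at h
      exact ⟨h, rfl⟩
    · exfalso
      apply hPQ
      rw [← P.mk_rep, ← Q.mk_rep, Projectivization.mk_eq_mk_iff' F _ _ P.rep_nonzero Q.rep_nonzero]
      by_cases ha : a = 0
      · subst ha
        simp [Q.rep_nonzero, hb] at h
      refine ⟨-b / a, ?_⟩
      have h1 : P.rep = a⁻¹ • (a • P.rep) := by rw [smul_smul, inv_mul_cancel₀ ha, one_smul]
      rw [h1, eq_neg_of_add_eq_zero_left h]
      module
  refine ⟨hKf.toFinset.image (fun P => P.rep), ⟨?_, ?_, ?_⟩, ?_⟩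
  · intro x hx
    obtain ⟨P, _, rfl⟩ := Finset.mem_image.1 hx
    exact P.rep_nonzero
  · intro x hx y hy hxy
    obtain ⟨P, _, rfl⟩ := Finset.mem_image.1 hx
    obtain ⟨Q, _, rfl⟩ := Finset.mem_image.1 hy
    exact htwo P Q (fun h => hxy (by rw [h]))
  · intro x hx y hy z hz hxy hxz hyz
    obtain ⟨P, hP, rfl⟩ := Finset.mem_image.1 hx
    obtain ⟨Q, hQ, rfl⟩ := Finset.mem_image.1 hy
    obtain ⟨R, hR, rfl⟩ := Finset.mem_image.1 hz
    rw [Set.Finite.mem_toFinset] at hP hQ hR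
    have hPQ : P ≠ Q := fun h => hxy (by rw [h])
    have hPR : P ≠ R := fun h => hxz (by rw [h])
    have hQR : Q ≠ R := fun h => hyz (by rw [h])
    by_contra hcon
    apply hK P hP Q hQ R hR hPQ hPR hQR
    obtain ⟨α, β, hQe⟩ := span_of_not_ind3 hcon (htwo P R hPR)
    unfold Coll3
    have hle : P.submodule ⊔ Q.submodule ⊔ R.submodule ≤ Submodule.span F (({P.rep, R.rep} :
        Finset (Fin (n + 1) → F)) : Set (Fin (n + 1) → F)) := by
      have hp : P.rep ∈ Submodule.span F (({P.rep, R.rep} :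
        Finset (Fin (n + 1) → F)) : Set (Fin (n + 1) → F)) := Submodule.subset_span (by simp)
      have hr : R.rep ∈ Submodule.span F (({P.rep, R.rep} :
        Finset (Fin (n + 1) → F)) : Set (Fin (n + 1) → F)) := Submodule.subset_span (by simp)
      rw [hsub, hsub, hsub]
      refine sup_le (sup_le ?_ ?_) ?_
      · rw [Submodule.span_singleton_le_iff_mem]; exact hp
      · rw [Submodule.span_singleton_le_iff_mem, hQe]
        exact Submodule.add_mem _ (Submodule.smul_mem _ _ hp) (Submodule.smul_mem _ _ hr)
      · rw [Submodule.span_singleton_le_iff_mem]; exact hr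
    exact (Submodule.finrank_mono hle).trans
      ((finrank_span_finset_le_card _).trans Finset.card_le_two)
  · rw [Finset.card_image_of_injective _ hinj, Set.ncard_eq_toFinset_card K hKf]

end CapAux2

theorem stmt11 (F : Type*) [Field F] [Fintype F] (q : ℕ) (hcard : Fintype.card F = q)
    (hqeven : Even q) (hq : 8 < q) (n : ℕ) (hn : 5 ≤ n)
    (K : Set (PGPoint F n)) (hK : IsCap K) :
    (K.ncard : ℝ) < (q : ℝ) ^ (n - 1) - (q : ℝ) ^ (n - 2)
      + 2 * Real.sqrt 5 * (q : ℝ) ^ (n - 3) - 9 * (q : ℝ) ^ (n - 4)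
      - 2 * (∑ i ∈ Finset.range (n - 4), (q : ℝ) ^ i) + 1 := by
  classical
  subst hcard
  have hq16 := card_ge_16 hqeven hq
  obtain ⟨j, rfl⟩ : ∃ j, n = 5 + j := ⟨n - 5, by omega⟩
  obtain ⟨S, hS, hSc⟩ := link K hK
  have h := final_vec hqeven hq16 j (Fin (5 + j + 1) → F)
    (by rw [Module.finrank_fin_fun]; omega) S hS
  rw [hSc] at h
  refine h.trans_le ?_
  have e1 : 5 + j - 1 = j + 4 := by omega
  have e2 : 5 + j - 2 = j + 3 := by omega
  have e3 : 5 + j - 3 = j + 2 := by omega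
  have e4 : 5 + j - 4 = j + 1 := by omega
  rw [e1, e2, e3, e4]
  have hq' : (16 : ℝ) ≤ (Fintype.card F : ℝ) := by exact_mod_cast hq16
  have hg := geo_le (Fintype.card F : ℝ) (by linarith) (j + 1)
  have h5 : (2.2 : ℝ) ≤ Real.sqrt 5 := by
    apply Real.le_sqrt_of_sq_le
    norm_num
  set q : ℝ := (Fintype.card F : ℝ)
  have hp : 0 < q ^ (j + 1) := by positivity
  have p2 : q ^ (j + 2) = q ^ (j + 1) * q := by ring
  have p3 : q ^ (j + 3) = q ^ (j + 2) * q := by ring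
  have p4 : q ^ (j + 4) = q ^ (j + 2) * q ^ 2 := by ring
  have m1 : 0 ≤ q ^ (j + 2) * (Real.sqrt 5 - 2.2) := mul_nonneg (by positivity) (by linarith)
  have m2 : 0 ≤ q ^ (j + 1) * (q - 16) := mul_nonneg hp.le (by linarith)
  rw [p3, p4]
  nlinarith
end

section
/- For every n ≥ 5, every k-cap in PG(n, 8) satisfies k ≤ 478·8^{n−4} − 2(8^{n−5} + ⋯ + 8 + 1) + 1, where 8^{n−5} + ⋯ + 8 + 1 denotes the geometric sum Σ_{i=0}^{n−5} 8^i. -/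
open Module

namespace CapEight

/-- Boolean triples, a concrete model of the field with eight elements. -/
abbrev B3 := Bool × Bool × Bool

def badd (a b : B3) : B3 := (xor a.1 b.1, xor a.2.1 b.2.1, xor a.2.2 b.2.2)

def bmul (a b : B3) : B3 :=
  (xor (a.1 && b.1) (xor (a.2.1 && b.2.2) (a.2.2 && b.2.1)),
   xor (xor (a.1 && b.2.1) (a.2.1 && b.1))
     (xor (xor (a.2.1 && b.2.2) (a.2.2 && b.2.1)) (a.2.2 && b.2.2)),
   xor (xor (a.1 && b.2.2) (a.2.2 && b.1)) (xor (a.2.1 && b.2.1) (a.2.2 && b.2.2)))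

def beq3 (a b : B3) : Bool :=
  !(xor a.1 b.1) && (!(xor a.2.1 b.2.1) && !(xor a.2.2 b.2.2))

theorem beq3_iff (a b : B3) : beq3 a b = true ↔ a = b := by
  revert a b; decide

def all8 (f : B3 → Bool) : Bool :=
  f (false, false, false) && (f (false, false, true) && (f (false, true, false) &&
  (f (false, true, true) && (f (true, false, false) && (f (true, false, true) &&
  (f (true, true, false) && f (true, true, true)))))))

theorem all8_spec (f : B3 → Bool) (h : all8 f = true) (x : B3) : f x = true := by
  obtain ⟨a, b, c⟩ := x
  simp only [all8, Bool.and_eq_true] at h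
  cases a <;> cases b <;> cases c <;> tauto

/-- the two points agree in one of the three forbidden directions -/
def bad2 (x y x' y' : B3) : Bool :=
  beq3 x x' || (beq3 y y' || beq3 (badd x x') (badd y y'))

/-- collinear with a third point -/
def bad3 (x y x' y' x'' y'' : B3) : Bool :=
  beq3 (bmul (badd x' x) (badd y'' y)) (bmul (badd x'' x) (badd y' y))

def o0 : B3 := (false, false, false)
def o1 : B3 := (true, false, false)

def cand (m x y : B3) : Bool :=
  bad2 o0 o0 x y || (bad2 o1 m x y || bad3 o0 o0 o1 m x y)

def chk : Bool :=
  all8 fun m => bad2 o0 o0 o1 m ||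
  all8 fun x => all8 fun y => cand m x y ||
  all8 fun z => all8 fun w => cand m z w || (bad2 x y z w || (bad3 o0 o0 x y z w ||
    (bad3 o1 m x y z w ||
  all8 fun u => all8 fun v => cand m u v || (bad2 x y u v || (bad2 z w u v ||
    (bad3 o0 o0 x y u v || (bad3 o1 m x y u v || (bad3 o0 o0 z w u v || (bad3 o1 m z w u v ||
      bad3 x y z w u v)))))))))

set_option maxRecDepth 100000 in
theorem chk_true : chk = true := by decide +kernel

section
variable {F : Type*} [Field F] [Fintype F]

/-- Boolean to field element. -/
def bc (F : Type*) [Field F] (b : Bool) : F := if b then 1 else 0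

def phi (g : F) (a : B3) : F := bc F a.1 + bc F a.2.1 * g + bc F a.2.2 * g ^ 2

theorem two_zero (h8 : Fintype.card F = 8) : (2 : F) = 0 := by
  have h : ((Fintype.card F : ℕ) : F) = 0 := FiniteField.cast_card_eq_zero F
  rw [h8] at h
  have : (2 : F) ^ 3 = 0 := by norm_num at h ⊢; exact h
  exact pow_eq_zero_iff (by norm_num) |>.1 this

theorem exists_gen (h8 : Fintype.card F = 8) : ∃ g : F, g ^ 3 = g + 1 := by
  classical
  have h2 := two_zero h8
  obtain ⟨a, ha⟩ : ∃ a : F, a ∉ ({0, 1} : Finset F) := by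
    by_contra hcon
    push Not at hcon
    have : Fintype.card F ≤ ({0, 1} : Finset F).card :=
      Finset.card_le_card (fun x _ => hcon x)
    have h3 := Finset.card_le_two (a := (0 : F)) (b := 1)
    omega
  simp only [Finset.mem_insert, Finset.mem_singleton, not_or] at ha
  obtain ⟨ha0, ha1⟩ := ha
  have hp : a ^ 8 = a := by have := FiniteField.pow_card a; rwa [h8] at this
  have hf : a * (a - 1) * ((a ^ 3 - a - 1) * (a ^ 3 + a ^ 2 + 1)) = 0 := by
    linear_combination hp + (a - a ^ 6) * h2
  have h1 : a - 1 ≠ 0 := sub_ne_zero.2 ha1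
  rcases mul_eq_zero.1 hf with h | h
  · exact absurd h (mul_ne_zero ha0 h1)
  rcases mul_eq_zero.1 h with h | h
  · exact ⟨a, by linear_combination h⟩
  · refine ⟨a⁻¹, ?_⟩
    field_simp
    linear_combination (-1 : F) * h + h2

theorem bc_xor (h2 : (2 : F) = 0) (a b : Bool) : bc F (xor a b) = bc F a + bc F b := by
  cases a <;> cases b <;> simp [bc]
  linear_combination -h2

theorem bc_and (a b : Bool) : bc F (a && b) = bc F a * bc F b := by
  cases a <;> cases b <;> simp [bc]

theorem phi_add (h2 : (2 : F) = 0) (g : F) (a b : B3) :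
    phi g (badd a b) = phi g a + phi g b := by
  simp only [phi, badd, bc_xor h2]; ring

theorem phi_mul (h2 : (2 : F) = 0) (g : F) (hg : g ^ 3 = g + 1) (a b : B3) :
    phi g (bmul a b) = phi g a * phi g b := by
  simp only [phi, bmul, bc_xor h2, bc_and]
  linear_combination (-(bc F a.2.1 * bc F b.2.2) - bc F a.2.2 * bc F b.2.1
    - g * (bc F a.2.2 * bc F b.2.2)) * hg

theorem phi_inj (h2 : (2 : F) = 0) (g : F) (hg : g ^ 3 = g + 1) (a b : B3)
    (h : phi g a = phi g b) : a = b := by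
  have hg0 : g ≠ 0 := by rintro rfl; norm_num at hg
  have hg1 : g ≠ 1 := by
    rintro rfl
    have : (1 : F) = 0 := by linear_combination -hg
    exact one_ne_zero this
  have hg1' : g + 1 ≠ 0 := fun h => hg1 (by linear_combination h - h2)
  have hg2 : g ^ 2 + g + 1 ≠ 0 := fun h => hg0 (by
    linear_combination (g - 1) * h - hg)
  have key : ∀ c : B3, phi g c = 0 → c = (false, false, false) := by
    rintro ⟨x, y, z⟩ hc
    cases x <;> cases y <;> cases z <;> simp [phi, bc] at hc ⊢
    · exact hg0 hc
    · exact hg0 hc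
    · have : g * (g + 1) = 0 := by linear_combination hc
      exact (mul_ne_zero hg0 hg1') this
    · have : (g + 1) ^ 2 = 0 := by linear_combination hc + g * h2
      exact (pow_ne_zero 2 hg1') this
    · exact hg1' (by linear_combination hc)
    · exact hg2 (by linear_combination hc)
  have h3 : badd a b = (false, false, false) := by
    apply key
    rw [phi_add h2, h]
    linear_combination (phi g b) * h2
  revert h3
  clear h
  revert a b
  decide

theorem phi_surj (h8 : Fintype.card F = 8) (g : F) (hg : g ^ 3 = g + 1) (x : F) :
    ∃ a, phi g a = x := by
  classical
  have hinj : Function.Injective (phi g) := fun a b => phi_inj (two_zero h8) g hg a b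
  have : Function.Bijective (phi g) := by
    rw [Fintype.bijective_iff_injective_and_card]
    exact ⟨hinj, by rw [h8]; rfl⟩
  exact this.2 x

theorem field5 (h8 : Fintype.card F = 8) (x y : Fin 5 → F)
    (hx : ∀ i j, i ≠ j → x i ≠ x j) (hy : ∀ i j, i ≠ j → y i ≠ y j)
    (hd : ∀ i j, i ≠ j → x j - x i ≠ y j - y i)
    (hc : ∀ i j k, i ≠ j → i ≠ k → j ≠ k →
      (x j - x i) * (y k - y i) ≠ (x k - x i) * (y j - y i)) : False := by
  have h2 := two_zero h8
  obtain ⟨g, hg⟩ := exists_gen h8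
  set d := x 1 - x 0 with hdd
  have hd0 : d ≠ 0 := sub_ne_zero.2 (hx 1 0 (by decide))
  choose X hX using fun i => phi_surj h8 g hg ((x i - x 0) / d)
  choose Y hY using fun i => phi_surj h8 g hg ((y i - y 0) / d)
  have hX0 : X 0 = o0 := phi_inj h2 g hg _ _ (by rw [hX]; simp [phi, o0, bc])
  have hY0 : Y 0 = o0 := phi_inj h2 g hg _ _ (by rw [hY]; simp [phi, o0, bc])
  have hX1 : X 1 = o1 := phi_inj h2 g hg _ _ (by
    rw [hX, ← hdd, div_self hd0]; simp [phi, o1, bc])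
  have b2 : ∀ i j, i ≠ j → bad2 (X i) (Y i) (X j) (Y j) = false := by
    intro i j hij
    rw [Bool.eq_false_iff]
    intro h
    simp only [bad2, Bool.or_eq_true, beq3_iff] at h
    rcases h with h | h | h
    · apply hx i j hij
      have := congrArg (phi g) h
      rw [hX, hX] at this
      field_simp at this
      linear_combination this
    · apply hy i j hij
      have := congrArg (phi g) h
      rw [hY, hY] at this
      field_simp at this
      linear_combination this
    · apply hd i j hij
      have := congrArg (phi g) h
      rw [phi_add h2, phi_add h2, hX, hX, hY, hY] at this
      field_simp at this
      linear_combination this + (x 0 - x i - y 0 + y i) * h2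
  have b3 : ∀ i j k, i ≠ j → i ≠ k → j ≠ k →
      bad3 (X i) (Y i) (X j) (Y j) (X k) (Y k) = false := by
    intro i j k hij hik hjk
    rw [Bool.eq_false_iff]
    intro h
    simp only [bad3, beq3_iff] at h
    apply hc i j k hij hik hjk
    have h := congrArg (phi g) h
    have e : ∀ p q : F, p + q = p - q := fun p q => by linear_combination q * h2
    rw [phi_mul h2 g hg, phi_mul h2 g hg, phi_add h2, phi_add h2, phi_add h2, phi_add h2] at h
    simp only [hX, hY, e] at h
    field_simp at h
    linear_combination h
  have H := chk_true
  have c0 : ∀ j, 1 < j → cand (Y 1) (X j) (Y j) = false := by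
    intro j hj
    have h0 : (0 : Fin 5) ≠ j := by rintro rfl; exact absurd hj (by decide)
    have h1 : (1 : Fin 5) ≠ j := by rintro rfl; exact absurd hj (by decide)
    have a1 := b2 0 j h0
    have a2 := b2 1 j h1
    have a3 := b3 0 1 j (by decide) h0 h1
    rw [hX0, hY0] at a1 a3
    rw [hX1] at a2 a3
    simp [cand, a1, a2, a3]
  have e01 := b2 0 1 (by decide)
  have e23 := b2 2 3 (by decide)
  have e24 := b2 2 4 (by decide)
  have e34 := b2 3 4 (by decide)
  have t023 := b3 0 2 3 (by decide) (by decide) (by decide)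
  have t123 := b3 1 2 3 (by decide) (by decide) (by decide)
  have t024 := b3 0 2 4 (by decide) (by decide) (by decide)
  have t124 := b3 1 2 4 (by decide) (by decide) (by decide)
  have t034 := b3 0 3 4 (by decide) (by decide) (by decide)
  have t134 := b3 1 3 4 (by decide) (by decide) (by decide)
  have t234 := b3 2 3 4 (by decide) (by decide) (by decide)
  rw [hX0, hY0] at e01 t023 t024 t034
  rw [hX1] at e01 t123 t124 t134
  unfold chk at H
  have H := all8_spec _ H (Y 1)
  simp only [e01, Bool.false_or] at H
  have H := all8_spec _ H (X 2)
  have H := all8_spec _ H (Y 2)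
  simp only [c0 2 (by decide), Bool.false_or] at H
  have H := all8_spec _ H (X 3)
  have H := all8_spec _ H (Y 3)
  simp only [c0 3 (by decide), e23, t023, t123, Bool.false_or] at H
  have H := all8_spec _ H (X 4)
  have H := all8_spec _ H (Y 4)
  simp [c0 4 (by decide), e24, e34, t024, t124, t034, t134, t234] at H
end
end CapEight
open Module

namespace CapEight
open scoped Classical
open Submodule

section
variable {F V : Type*} [Field F] [Fintype F] [AddCommGroup V] [Module F V] [Fintype V]

/-- number of elements of `S` in the subspace `E` -/
noncomputable def cnt (S : Finset V) (E : Submodule F V) : ℕ := (S.filter (fun v => v ∈ E)).card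

/-- the subspaces between `U` and `E` of dimension one more than `U` -/
noncomputable def cov (U E : Submodule F V) : Finset (Submodule F V) :=
  (Finset.univ.filter (fun v : V => v ∈ E ∧ v ∉ U)).image (fun v => U ⊔ span F {v})

/-- caps, by representing vectors -/
def Cap (F : Type*) {V : Type*} [Field F] [AddCommGroup V] [Module F V] (S : Finset V) : Prop :=
  (0 : V) ∉ S ∧ ∀ a ∈ S, ∀ b ∈ S, ∀ c ∈ S, c ≠ a → c ≠ b → c ∉ span F {a, b}

/-- points off the cap -/
def Outer (F : Type*) {V : Type*} [Field F] [AddCommGroup V] [Module F V] (S : Finset V)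
    (Q : V) : Prop := Q ≠ 0 ∧ ∀ a ∈ S, Q ∉ span F {a}

/-- cap points on a tangent through `Q` -/
noncomputable def XX (F : Type*) {V : Type*} [Field F] [AddCommGroup V] [Module F V]
    (S : Finset V) (Q : V) : Finset V :=
  S.filter (fun a => ∀ b ∈ S, b ≠ a → Q ∉ span F {a, b})

/-- cap points on a secant through `Q` -/
noncomputable def DD (F : Type*) {V : Type*} [Field F] [AddCommGroup V] [Module F V]
    (S : Finset V) (Q : V) : Finset V :=
  S.filter (fun a => ¬ ∀ b ∈ S, b ≠ a → Q ∉ span F {a, b})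

noncomputable def out (S : Finset V) (E : Submodule F V) : Finset V :=
  Finset.univ.filter (fun Q => Q ∈ E ∧ Outer F S Q)

theorem card_mem (h8 : Fintype.card F = 8) (E : Submodule F V) :
    (Finset.univ.filter (fun v : V => v ∈ E)).card = 8 ^ finrank F E := by
  have := Module.card_eq_pow_finrank (K := F) (V := E)
  rw [← Fintype.card_subtype, ← h8]
  convert this

theorem finrank_sup_span (U : Submodule F V) {v : V} (hv : v ∉ U) :
    finrank F ↥(U ⊔ span F {v}) = finrank F U + 1 := by
  have h0 : v ≠ 0 := by rintro rfl; exact hv U.zero_mem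
  have h := Submodule.finrank_sup_add_finrank_inf_eq U (span F {v})
  rw [finrank_span_singleton h0] at h
  have h2 : U ⊓ span F {v} = ⊥ := by
    rw [eq_bot_iff]
    rintro x ⟨hx1, hx2⟩
    obtain ⟨c, rfl⟩ := mem_span_singleton.1 hx2
    by_cases hc : c = 0
    · simp [hc]
    · exact absurd ((U.smul_mem_iff hc).1 hx1) hv
  rw [h2, finrank_bot] at h
  omega

theorem mem_cov {U E W : Submodule F V} (hUE : U ≤ E) (hW : W ∈ cov U E) :
    U ≤ W ∧ W ≤ E ∧ finrank F W = finrank F U + 1 := by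
  simp only [cov, Finset.mem_image, Finset.mem_filter, Finset.mem_univ, true_and] at hW
  obtain ⟨v, ⟨h1, h2⟩, rfl⟩ := hW
  refine ⟨le_sup_left, sup_le hUE ?_, finrank_sup_span U h2⟩
  rwa [span_singleton_le_iff_mem]

theorem eq_sup_of_mem {U W : Submodule F V} (hUW : U ≤ W) (hr : finrank F W = finrank F U + 1)
    {v : V} (hv : v ∈ W) (hvU : v ∉ U) : W = U ⊔ span F {v} := by
  symm
  apply Submodule.eq_of_le_of_finrank_eq
  · exact sup_le hUW (by rwa [span_singleton_le_iff_mem])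
  · rw [hr, finrank_sup_span U hvU]

theorem mem_cov_iff {U E W : Submodule F V} (hUE : U ≤ E) :
    W ∈ cov U E ↔ U ≤ W ∧ W ≤ E ∧ finrank F W = finrank F U + 1 := by
  refine ⟨mem_cov hUE, ?_⟩
  rintro ⟨h1, h2, h3⟩
  obtain ⟨v, hv, hvU⟩ : ∃ v ∈ W, v ∉ U := by
    by_contra hcon
    push Not at hcon
    have : W = U := le_antisymm hcon h1
    subst this
    omega
  simp only [cov, Finset.mem_image, Finset.mem_filter, Finset.mem_univ, true_and]
  exact ⟨v, ⟨h2 hv, hvU⟩, (eq_sup_of_mem h1 h3 hv hvU).symm⟩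

theorem cov_fiber {U E : Submodule F V} (hUE : U ≤ E) (A : Finset V) :
    ∑ W ∈ cov U E, (A.filter (fun v => v ∈ W ∧ v ∉ U)).card
      = (A.filter (fun v => v ∈ E ∧ v ∉ U)).card := by
  rw [Finset.card_eq_sum_card_fiberwise (f := fun v => U ⊔ span F {v}) (t := cov U E)]
  · apply Finset.sum_congr rfl
    intro W hW
    obtain ⟨h1, h2, h3⟩ := mem_cov hUE hW
    congr 1
    ext v
    simp only [Finset.mem_filter]
    constructor
    · rintro ⟨hA, hv, hU⟩
      exact ⟨⟨hA, h2 hv, hU⟩, (eq_sup_of_mem h1 h3 hv hU).symm⟩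
    · rintro ⟨⟨hA, hv, hU⟩, rfl⟩
      exact ⟨hA, mem_sup_right (mem_span_singleton_self v), hU⟩
  · intro v hv
    simp only [Finset.coe_filter, Set.mem_ofPred_eq] at hv
    simp only [cov, Finset.coe_image, Set.mem_image, Finset.coe_filter, Set.mem_ofPred_eq,
      Finset.mem_univ, true_and]
    exact ⟨v, hv.2, rfl⟩

theorem cnt_split {U W : Submodule F V} (h : U ≤ W) (A : Finset V) :
    cnt A W = cnt A U + (A.filter (fun v => v ∈ W ∧ v ∉ U)).card := by
  unfold cnt
  rw [← Finset.card_filter_add_card_filter_not (s := A.filter (fun v => v ∈ W)) (fun v => v ∈ U),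
    Finset.filter_filter, Finset.filter_filter]
  congr 2
  ext v
  simp only [Finset.mem_filter]
  constructor
  · rintro ⟨a, b, c⟩; exact ⟨a, c⟩
  · rintro ⟨a, b⟩; exact ⟨a, h b, b⟩

theorem cov_sum {U E : Submodule F V} (hUE : U ≤ E) (A : Finset V) :
    ∑ W ∈ cov U E, cnt A W + cnt A U = cnt A E + (cov U E).card * cnt A U := by
  have h : ∑ W ∈ cov U E, cnt A W
      = ∑ W ∈ cov U E, (cnt A U + (A.filter (fun v => v ∈ W ∧ v ∉ U)).card) :=
    Finset.sum_congr rfl fun W hW => cnt_split (mem_cov hUE hW).1 A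
  rw [h, Finset.sum_add_distrib, cov_fiber hUE, cnt_split hUE]
  simp only [Finset.sum_const, smul_eq_mul]
  ring

theorem cov_sum_int {U E : Submodule F V} (hUE : U ≤ E) (A : Finset V) :
    ∑ W ∈ cov U E, ((cnt A W : ℤ) - cnt A U) = cnt A E - cnt A U := by
  have := cov_sum hUE A
  zify at this
  rw [Finset.sum_sub_distrib]
  simp only [Finset.sum_const, smul_eq_mul, nsmul_eq_mul]
  linarith

theorem cov_card (h8 : Fintype.card F = 8) {U E : Submodule F V} (hUE : U ≤ E) :
    (cov U E).card * (7 * 8 ^ finrank F U) + 8 ^ finrank F U = 8 ^ finrank F E := by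
  have h := cov_sum hUE Finset.univ
  have e : ∀ W : Submodule F V, cnt Finset.univ W = 8 ^ finrank F W := card_mem h8
  simp only [e] at h
  rw [Finset.sum_congr rfl (fun W hW => by rw [(mem_cov hUE hW).2.2])] at h
  simp only [Finset.sum_const, smul_eq_mul, pow_succ] at h
  nlinarith

theorem cov_card' (h8 : Fintype.card F = 8) {U E : Submodule F V} (hUE : U ≤ E) (j : ℕ)
    (hj : finrank F E = finrank F U + j) : (cov U E).card * 7 + 1 = 8 ^ j := by
  have h := cov_card h8 hUE
  rw [hj, pow_add] at h
  have hp : 0 < 8 ^ finrank F U := by positivity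
  apply Nat.eq_of_mul_eq_mul_left hp
  rw [← h]; ring

theorem cnt_le {E : Submodule F V} {A B : Finset V} (h : A ⊆ B) : cnt A E ≤ cnt B E :=
  Finset.card_le_card (Finset.filter_subset_filter _ h)

theorem cnt_mono {E E' : Submodule F V} {A : Finset V} (h : E ≤ E') : cnt A E ≤ cnt A E' :=
  Finset.card_le_card (fun v hv => by
    simp only [Finset.mem_filter] at hv ⊢; exact ⟨hv.1, h hv.2⟩)

theorem cnt_eq_card {E : Submodule F V} {A : Finset V} (h : ∀ a ∈ A, a ∈ E) :
    cnt A E = A.card := by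
  unfold cnt; rw [Finset.filter_true_of_mem h]

variable {S : Finset V}

theorem XX_add_DD (S : Finset V) (Q : V) (E : Submodule F V) :
    cnt (XX F S Q) E + cnt (DD F S Q) E = cnt S E := by
  unfold cnt XX DD
  rw [Finset.filter_filter, Finset.filter_filter,
    ← Finset.card_filter_add_card_filter_not (s := S.filter (fun v => v ∈ E))
      (fun a => ∀ b ∈ S, b ≠ a → Q ∉ span F {a, b}), Finset.filter_filter, Finset.filter_filter]
  simp only [and_comm]

theorem mem_XX {Q a : V} :
    a ∈ XX F S Q ↔ a ∈ S ∧ ∀ b ∈ S, b ≠ a → Q ∉ span F {a, b} := by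
  simp only [XX, Finset.mem_filter]

theorem mem_DD {Q a : V} :
    a ∈ DD F S Q ↔ a ∈ S ∧ ∃ b ∈ S, b ≠ a ∧ Q ∈ span F {a, b} := by
  simp only [DD, Finset.mem_filter]; push Not; rfl

theorem mem_out {E : Submodule F V} {Q : V} : Q ∈ out S E ↔ Q ∈ E ∧ Outer F S Q := by
  simp [out]

theorem Cap.ne_zero (hS : Cap F S) {a : V} (ha : a ∈ S) : a ≠ 0 := by
  rintro rfl; exact hS.1 ha

theorem Cap.not_mem_single (hS : Cap F S) {a b : V} (ha : a ∈ S) (hb : b ∈ S) (h : a ≠ b) :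
    a ∉ span F {b} := by
  have := hS.2 b hb b hb a ha h h
  simpa using this

theorem Cap.subset (hS : Cap F S) {T : Finset V} (h : T ⊆ S) : Cap F T :=
  ⟨fun h0 => hS.1 (h h0), fun a ha b hb c hc => hS.2 a (h ha) b (h hb) c (h hc)⟩

theorem exch {a b Q : V} (h : Q ∈ span F {a, b}) (hb : Q ∉ span F {b}) : a ∈ span F {Q, b} :=
  mem_span_insert_exchange h hb

theorem mem_comm {a b Q : V} : Q ∈ span F {a, b} ↔ Q ∈ span F {b, a} := by
  rw [Set.pair_comm]

theorem mem_single_symm {a Q : V} (hQ : Q ≠ 0) (h : Q ∈ span F {a}) : a ∈ span F {Q} := by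
  obtain ⟨c, rfl⟩ := mem_span_singleton.1 h
  have hc : c ≠ 0 := by rintro rfl; simp at hQ
  exact mem_span_singleton.2 ⟨c⁻¹, by rw [smul_smul, inv_mul_cancel₀ hc, one_smul]⟩

theorem pair_le {a b : V} {E : Submodule F V} (ha : a ∈ E) (hb : b ∈ E) : span F {a, b} ≤ E := by
  rw [span_le]; rintro x (rfl | rfl) <;> assumption

theorem single_le {a : V} {E : Submodule F V} (ha : a ∈ E) : span F {a} ≤ E := by
  rwa [span_singleton_le_iff_mem]

theorem span_pair_eq (a b : V) : span F {a, b} = span F {b} ⊔ span F {a} := by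
  rw [span_insert, sup_comm]

theorem finrank_pair {a b : V} (hb : b ≠ 0) (ha : a ∉ span F {b}) :
    finrank F (span F {a, b}) = 2 := by
  rw [span_pair_eq, finrank_sup_span _ ha, finrank_span_singleton hb]

theorem left_mem (a b : V) : a ∈ span F {a, b} := subset_span (by simp)
theorem right_mem (a b : V) : b ∈ span F {a, b} := subset_span (by simp)

theorem Cap.finrank_secant (hS : Cap F S) {a b : V} (ha : a ∈ S) (hb : b ∈ S) (h : a ≠ b) :
    finrank F (span F {a, b}) = 2 :=
  finrank_pair (hS.ne_zero hb) (hS.not_mem_single ha hb h)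

theorem Cap.cnt_secant (hS : Cap F S) {a b : V} (ha : a ∈ S) (hb : b ∈ S) (h : a ≠ b) :
    cnt S (span F {a, b}) = 2 := by
  have : S.filter (fun v => v ∈ span F {a, b}) = {a, b} := by
    ext v
    simp only [Finset.mem_filter, Finset.mem_insert, Finset.mem_singleton]
    constructor
    · rintro ⟨hv, hv2⟩
      by_contra hcon
      push Not at hcon
      exact hS.2 a ha b hb v hv hcon.1 hcon.2 hv2
    · rintro (rfl | rfl)
      · exact ⟨ha, left_mem _ _⟩
      · exact ⟨hb, right_mem _ _⟩
  unfold cnt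
  rw [this, Finset.card_pair h]

/-- a cap point spanned by an outer point and another cap point: secant -/
theorem partner_unique (hS : Cap F S) {Q a b c : V} (hQ : Outer F S Q) (ha : a ∈ S) (hb : b ∈ S)
    (hc : c ∈ S) (hca : c ≠ a) (h1 : Q ∈ span F {a, b}) (h2 : Q ∈ span F {a, c}) :
    c = b := by
  by_contra hne
  have h3 : c ∈ span F {Q, a} := exch (mem_comm.1 h2) (hQ.2 a ha)
  exact hS.2 a ha b hb c hc hca hne (pair_le h1 (left_mem a b) h3)

theorem mem_of_secant {Q a b : V} {E : Submodule F V} (hQ : Outer F S Q) (ha : a ∈ S)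
    (hQE : Q ∈ E) (haE : a ∈ E) (h1 : Q ∈ span F {a, b}) : b ∈ E :=
  pair_le hQE haE (exch (mem_comm.1 h1) (hQ.2 a ha))

theorem cnt_DD (hS : Cap F S) {Q : V} (hQ : Outer F S Q) {E : Submodule F V} (hQE : Q ∈ E) :
    cnt (DD F S Q) E = (((S.filter (fun v => v ∈ E)).offDiag).filter
      (fun p => Q ∈ span F {p.1, p.2})).card := by
  have : (DD F S Q).filter (fun v => v ∈ E) = (((S.filter (fun v => v ∈ E)).offDiag).filter
      (fun p => Q ∈ span F {p.1, p.2})).image Prod.fst := by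
    ext a
    simp only [DD, Finset.mem_filter, Finset.mem_image, Finset.mem_offDiag, Prod.exists,
      exists_and_right, exists_eq_right]
    push Not
    constructor
    · rintro ⟨⟨ha, b, hb, hba, h⟩, haE⟩
      exact ⟨b, ⟨⟨ha, haE⟩, ⟨hb, mem_of_secant hQ ha hQE haE h⟩, hba.symm⟩, h⟩
    · rintro ⟨b, ⟨⟨ha, haE⟩, ⟨hb, hbE⟩, hne⟩, h⟩
      exact ⟨⟨ha, b, hb, hne.symm, h⟩, haE⟩
  unfold cnt
  rw [this, Finset.card_image_of_injOn]
  rintro ⟨a, b⟩ h1 ⟨a', b'⟩ h2 (rfl : a = a')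
  simp only [Finset.coe_filter, Finset.mem_offDiag, Finset.mem_filter, Set.mem_ofPred_eq] at h1 h2
  obtain ⟨⟨⟨ha, haE⟩, ⟨hb, hbE⟩, hne⟩, h1⟩ := h1
  obtain ⟨⟨_, ⟨hb', hbE'⟩, hne'⟩, h2⟩ := h2
  rw [partner_unique hS hQ ha hb hb' hne'.symm h1 h2]

theorem card_nonzero_span (h8 : Fintype.card F = 8) {a : V} (ha : a ≠ 0) :
    (Finset.univ.filter (fun v : V => v ∈ span F {a} ∧ v ≠ 0)).card = 7 := by
  have h := card_mem h8 (span F {a})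
  rw [finrank_span_singleton ha, ← Finset.card_filter_add_card_filter_not (fun v => v ≠ 0),
    Finset.filter_filter, Finset.filter_filter] at h
  have h0 : Finset.univ.filter (fun v : V => v ∈ span F {a} ∧ ¬ v ≠ 0) = {0} := by
    ext v; simp only [Finset.mem_filter, Finset.mem_univ, true_and, Finset.mem_singleton]
    constructor
    · rintro ⟨_, h⟩; simpa using h
    · rintro rfl; simp
  rw [h0] at h
  simp at h
  omega

theorem card_out (h8 : Fintype.card F = 8) (hS : Cap F S) (E : Submodule F V) :
    (out S E).card + 7 * cnt S E + 1 = 8 ^ finrank F E := by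
  have h := card_mem h8 E
  rw [← Finset.card_filter_add_card_filter_not (fun v => Outer F S v),
    Finset.filter_filter, Finset.filter_filter] at h
  have h1 : Finset.univ.filter (fun v : V => v ∈ E ∧ ¬ Outer F S v) =
      insert 0 ((S.filter (fun v => v ∈ E)).biUnion
        (fun a => Finset.univ.filter (fun v : V => v ∈ span F {a} ∧ v ≠ 0))) := by
    ext v
    simp only [Finset.mem_filter, Finset.mem_univ, true_and, Finset.mem_insert,
      Finset.mem_biUnion]
    unfold Outer
    constructor
    · rintro ⟨hv, h⟩
      by_cases h0 : v = 0
      · exact Or.inl h0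
      · right
        push Not at h
        obtain ⟨a, ha, hva⟩ := h h0
        exact ⟨a, ⟨ha, single_le hv (mem_single_symm h0 hva)⟩, hva, h0⟩
    · rintro (rfl | ⟨a, ⟨ha, haE⟩, hv, h0⟩)
      · simp
      · exact ⟨single_le haE hv, fun h => h.2 a ha hv⟩
  have h2 : ((S.filter (fun v => v ∈ E)).biUnion
        (fun a => Finset.univ.filter (fun v : V => v ∈ span F {a} ∧ v ≠ 0))).card
        = cnt S E * 7 := by
    rw [Finset.card_biUnion]
    · rw [Finset.sum_congr rfl (fun a ha => card_nonzero_span h8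
        (hS.ne_zero (Finset.mem_filter.1 ha).1))]
      simp [cnt]
    · intro a ha b hb hab
      rw [Function.onFun, Finset.disjoint_left]
      intro v hv hv'
      simp only [Finset.mem_filter, Finset.mem_univ, true_and, Finset.mem_coe] at hv hv' ha hb
      refine hS.not_mem_single ha.1 hb.1 hab ?_
      exact single_le hv'.1 (mem_single_symm hv.2 hv.1)
  rw [h1, Finset.card_insert_of_notMem (by simp), h2] at h
  unfold out
  omega

theorem out_secant (h8 : Fintype.card F = 8) (hS : Cap F S) {a b : V} (ha : a ∈ S) (hb : b ∈ S)
    (h : a ≠ b) : (out S (span F {a, b})).card = 49 := by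
  have h1 := card_out h8 hS (span F {a, b})
  rw [hS.cnt_secant ha hb h, hS.finrank_secant ha hb h] at h1
  omega

theorem double_count (hS : Cap F S) (E : Submodule F V) (g : V → ℤ) :
    ∑ Q ∈ out S E, (cnt (DD F S Q) E : ℤ) * g Q =
      ∑ p ∈ (S.filter (fun v => v ∈ E)).offDiag, ∑ Q ∈ out S (span F {p.1, p.2}), g Q := by
  have h1 : ∀ Q ∈ out S E, (cnt (DD F S Q) E : ℤ) * g Q =
      ∑ p ∈ (S.filter (fun v => v ∈ E)).offDiag, if Q ∈ span F {p.1, p.2} then g Q else 0 := by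
    intro Q hQ
    simp only [out, Finset.mem_filter, Finset.mem_univ, true_and] at hQ
    rw [cnt_DD hS hQ.2 hQ.1, ← Finset.sum_filter, Finset.sum_const, nsmul_eq_mul]
  rw [Finset.sum_congr rfl h1, Finset.sum_comm]
  apply Finset.sum_congr rfl
  rintro ⟨a, b⟩ hp
  simp only [Finset.mem_offDiag, Finset.mem_filter] at hp
  rw [← Finset.sum_filter]
  apply Finset.sum_congr _ (fun _ _ => rfl)
  ext Q
  simp only [out, Finset.mem_filter, Finset.mem_univ, true_and]
  constructor
  · rintro ⟨⟨_, h⟩, h2⟩; exact ⟨h2, h⟩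
  · rintro ⟨h2, h⟩; exact ⟨⟨pair_le hp.1.2 hp.2.1.2 h2, h⟩, h2⟩

theorem sum_DD (h8 : Fintype.card F = 8) (hS : Cap F S) (E : Submodule F V) :
    ∑ Q ∈ out S E, (cnt (DD F S Q) E : ℤ) = 49 * ((cnt S E : ℤ) * (cnt S E - 1)) := by
  have h := double_count hS E (fun _ => 1)
  simp only [mul_one, Finset.sum_const, nsmul_eq_mul] at h
  rw [h, Finset.sum_congr rfl (g := fun _ => (49 : ℤ))]
  · rw [Finset.sum_const, Finset.offDiag_card]
    change (((cnt S E) * (cnt S E) - cnt S E : ℕ) • (49 : ℤ)) = _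
    rw [nsmul_eq_mul, Nat.cast_sub (Nat.le_mul_self _)]
    push_cast; ring
  · rintro ⟨a, b⟩ hp
    simp only [Finset.mem_offDiag, Finset.mem_filter] at hp
    rw [out_secant h8 hS hp.1.1 hp.2.1.1 hp.2.2]
    rfl

theorem Cap.insert_cap (hS : Cap F S) {Q : V} (hQ : Outer F S Q)
    (h : ∀ a ∈ S, ∀ b ∈ S, a ≠ b → Q ∉ span F {a, b}) : Cap F (insert Q S) := by
  refine ⟨?_, ?_⟩
  · simp only [Finset.mem_insert, not_or]
    exact ⟨hQ.1.symm, hS.1⟩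
  have key : ∀ a ∈ S, ∀ c ∈ S, c ≠ a → c ∉ span F {a, Q} := by
    intro a ha c hc hca hmem
    by_cases h2 : c ∈ span F {a}
    · exact hS.not_mem_single hc ha hca h2
    · have h1 : Q ∈ span F {c, a} := exch (mem_comm.1 hmem) h2
      exact h c hc a ha hca h1
  intro a ha b hb c hc hca hcb
  rw [Finset.mem_insert] at ha hb hc
  rcases ha with rfl | ha <;> rcases hb with rfl | hb <;> rcases hc with rfl | hc
  · exact absurd rfl hca
  · exact fun hm => hQ.2 c hc (mem_single_symm (hS.ne_zero hc) (by simpa using hm))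
  · exact absurd rfl hca
  · intro hm; exact key b hb c hc hcb (mem_comm.1 hm)
  · exact absurd rfl hcb
  · exact key a ha c hc hca
  · by_cases hab : a = b
    · subst hab; intro hm; exact hQ.2 a ha (by simpa using hm)
    · exact h a ha b hb hab
  · exact hS.2 a ha b hb c hc hca hcb

theorem completion (hS : Cap F S) (E : Submodule F V) (hE : ∀ a ∈ S, a ∈ E) :
    ∃ T : Finset V, S ⊆ T ∧ Cap F T ∧ (∀ a ∈ T, a ∈ E) ∧
      ∀ Q ∈ E, Outer F T Q → ∃ a ∈ T, ∃ b ∈ T, a ≠ b ∧ Q ∈ span F {a, b} := by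
  obtain ⟨T, hST, hT⟩ := (Set.toFinite ({T | Cap F T ∧ ∀ a ∈ T, a ∈ E} :
    Set (Finset V))).exists_le_maximal
    (a := S) ⟨hS, hE⟩
  refine ⟨T, hST, hT.1.1, hT.1.2, ?_⟩
  intro Q hQE hQ
  by_contra hcon
  push Not at hcon
  have h1 := hT.1.1.insert_cap hQ hcon
  have h2 : insert Q T ≤ T := hT.2 (y := insert Q T) ⟨h1, by
    intro a ha
    rcases Finset.mem_insert.1 ha with rfl | ha
    · exact hQE
    · exact hT.1.2 a ha⟩ (Finset.subset_insert _ _)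
  have : Q ∈ T := h2 (Finset.mem_insert_self _ _)
  exact hQ.2 Q this (mem_span_singleton_self Q)

theorem outer_add (hS : Cap F S) {a b : V} (ha : a ∈ S) (hb : b ∈ S) (h : a ≠ b) :
    Outer F S (a + b) ∧ a + b ∈ span F {a, b} := by
  have hm : a + b ∈ span F {a, b} := add_mem (left_mem a b) (right_mem a b)
  have h0 : a + b ≠ 0 := by
    intro h0
    apply hS.not_mem_single ha hb h
    rw [eq_neg_of_add_eq_zero_left h0]
    exact neg_mem (mem_span_singleton_self b)
  refine ⟨⟨h0, ?_⟩, hm⟩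
  intro c hc hmc
  have hc2 : c ∈ span F {a, b} := single_le hm (mem_single_symm h0 hmc)
  by_cases hca : c = a
  · subst hca
    apply hS.not_mem_single hb ha h.symm
    have := sub_mem hmc (mem_span_singleton_self c)
    simpa using this
  by_cases hcb : c = b
  · subst hcb
    apply hS.not_mem_single ha hb h
    have := sub_mem hmc (mem_span_singleton_self c)
    simpa using this
  exact hS.2 a ha b hb c hc hca hcb hc2

end
end CapEight
open Module

namespace CapEight
open scoped Classical
open Submodule

section
variable {F V : Type*} [Field F] [Fintype F] [AddCommGroup V] [Module F V] [Fintype V]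
variable {S : Finset V}

theorem same_line (hS : Cap F S) {Q c c' : V} (hc : c ∈ S) (hc' : c' ∈ S) (hne : c' ≠ c)
    (h : c' ∈ span F {Q, c}) : Q ∈ span F {c, c'} :=
  mem_comm.1 (exch h (hS.not_mem_single hc' hc hne))

theorem fline_eq {Q c c' : V} (hQ : Outer F S Q) (hc : c ∈ S) (hc' : c' ∈ S)
    (h : Q ∈ span F {c, c'}) : span F {Q, c} = span F {Q, c'} := by
  apply le_antisymm
  · exact pair_le (left_mem _ _) (exch h (hQ.2 c' hc'))
  · exact pair_le (left_mem _ _) (exch (mem_comm.1 h) (hQ.2 c hc))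

/-- lines through `Q` meeting a part `A` of the cap -/
theorem lines_bound (hS : Cap F S) {Q : V} (hQ : Outer F S Q) (A : Finset V) (hA : A ⊆ S) :
    A.card + (A.filter (fun c => c ∈ XX F S Q)).card ≤
      2 * (A.image (fun c => span F {Q, c})).card := by
  have h1 := Finset.card_eq_sum_card_image (fun c => span F {Q, c}) A
  have h2 := Finset.card_eq_sum_card_fiberwise (f := fun c => span F {Q, c})
    (s := A.filter (fun c => c ∈ XX F S Q)) (t := A.image (fun c => span F {Q, c})) (by
      intro c hc
      exact Finset.mem_coe.2 (Finset.mem_image_of_mem _ (Finset.mem_filter.1 hc).1))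
  rw [h2]
  nth_rw 1 [h1]
  rw [← Finset.sum_add_distrib, mul_comm 2, ← smul_eq_mul]
  apply Finset.sum_le_card_nsmul
  intro t _
  by_cases hex : ∃ c ∈ A, c ∈ XX F S Q ∧ span F {Q, c} = t
  · obtain ⟨c, hc, hcX, hct⟩ := hex
    have e1 : A.filter (fun c => span F {Q, c} = t) ⊆ {c} := by
      intro c' hc'
      obtain ⟨hc', hct'⟩ := Finset.mem_filter.1 hc'
      rw [Finset.mem_singleton]
      by_contra hne
      have h3 : c' ∈ span F {Q, c} := by rw [hct, ← hct']; exact right_mem _ _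
      exact (mem_XX.1 hcX).2 c' (hA hc') hne
        (same_line hS (hA hc) (hA hc') hne h3)
    have e2 : (A.filter (fun c => c ∈ XX F S Q)).filter (fun c => span F {Q, c} = t) ⊆ {c} :=
      fun x hx => e1 (by
        simp only [Finset.mem_filter] at hx ⊢
        exact ⟨hx.1.1, hx.2⟩)
    have := Finset.card_le_card e1
    have := Finset.card_le_card e2
    simp only [Finset.card_singleton] at *
    omega
  · push Not at hex
    have e2 : (A.filter (fun c => c ∈ XX F S Q)).filter (fun c => span F {Q, c} = t) = ∅ := by
      ext x
      simp only [Finset.mem_filter, Finset.notMem_empty, iff_false]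
      rintro ⟨⟨h1, h2⟩, h3⟩
      exact hex x h1 h2 h3
    rw [e2, Finset.card_empty, add_zero]
    by_contra hcon
    push Not at hcon
    obtain ⟨x, hx, y, hy, z, hz, hxy, hxz, hyz⟩ := Finset.two_lt_card.1 hcon
    simp only [Finset.mem_filter] at hx hy hz
    have k1 : y ∈ span F {Q, x} := by rw [hx.2, ← hy.2]; exact right_mem _ _
    have k2 : z ∈ span F {Q, x} := by rw [hx.2, ← hz.2]; exact right_mem _ _
    exact hyz (partner_unique hS hQ (hA hx.1) (hA hz.1) (hA hy.1) hxy.symm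
      (same_line hS (hA hx.1) (hA hz.1) hxz.symm k2) (same_line hS (hA hx.1) (hA hy.1) hxy.symm k1))

theorem segre (h8 : Fintype.card F = 8) (hS : Cap F S) {W : Submodule F V}
    (hW : finrank F W = 3) {Q a b : V} (hQ : Outer F S Q) (ha : a ∈ S) (hb : b ∈ S) (hab : a ≠ b)
    (haW : a ∈ W) (hbW : b ∈ W) (hQab : Q ∈ span F {a, b}) :
    cnt S W + cnt (XX F S Q) W ≤ 10 := by
  by_contra hcon
  push Not at hcon
  set A := (S.filter (fun v => v ∈ W)) \ {a, b} with hAdef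
  have hAS : A ⊆ S := fun x hx => (Finset.mem_filter.1 (Finset.mem_sdiff.1 hx).1).1
  have hAcard : A.card + 2 = cnt S W := by
    have hsub : ({a, b} : Finset V) ⊆ S.filter (fun v => v ∈ W) := by
      intro x hx
      simp only [Finset.mem_insert, Finset.mem_singleton] at hx
      rcases hx with rfl | rfl
      · simp [ha, haW]
      · simp [hb, hbW]
    have := Finset.card_sdiff_add_card_eq_card hsub
    rw [Finset.card_pair hab] at this
    exact this
  have hX : (XX F S Q).filter (fun v => v ∈ W) ⊆ A.filter (fun c => c ∈ XX F S Q) := by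
    intro x hx
    obtain ⟨hx1, hx2⟩ := Finset.mem_filter.1 hx
    obtain ⟨hx3, hx4⟩ := mem_XX.1 hx1
    simp only [hAdef, Finset.mem_filter, Finset.mem_sdiff, Finset.mem_insert,
      Finset.mem_singleton, not_or]
    refine ⟨⟨⟨hx3, hx2⟩, ?_, ?_⟩, hx1⟩
    · rintro rfl; exact hx4 b hb hab.symm hQab
    · rintro rfl; exact hx4 a ha hab (mem_comm.1 hQab)
  have hXc := Finset.card_le_card hX
  have hlb := lines_bound hS hQ A hAS
  have h5 : 5 ≤ (A.image (fun c => span F {Q, c})).card := by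
    unfold cnt at hcon hAcard; omega
  obtain ⟨L, hL, hLc⟩ := Finset.exists_subset_card_eq h5
  have e : Fin 5 ≃ L := (Fintype.equivFinOfCardEq (by simp [hLc])).symm
  have hch : ∀ i : Fin 5, ∃ c ∈ A, span F {Q, c} = (e i : Submodule F V) := by
    intro i
    have := hL (e i).2
    rw [Finset.mem_image] at this
    exact this
  choose c hcA hce using hch
  have hcne : ∀ i j, i ≠ j → span F {Q, c i} ≠ span F {Q, c j} := by
    intro i j hij h
    rw [hce, hce] at h
    exact hij (e.injective (Subtype.ext h))
  have hcinj : ∀ i j, i ≠ j → c i ≠ c j := fun i j hij h => hcne i j hij (by rw [h])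
  have hcS : ∀ i, c i ∈ S := fun i => hAS (hcA i)
  have hcW : ∀ i, c i ∈ W := fun i => (Finset.mem_filter.1 (Finset.mem_sdiff.1 (hcA i)).1).2
  have hcab : ∀ i, c i ≠ a ∧ c i ≠ b := by
    intro i
    have := (Finset.mem_sdiff.1 (hcA i)).2
    simpa using this
  have hcl : ∀ i, c i ∉ span F {a, b} := fun i =>
    hS.2 a ha b hb _ (hcS i) (hcab i).1 (hcab i).2
  have hWeq : W = span F {a, b} ⊔ span F {c 0} :=
    eq_sup_of_mem (pair_le haW hbW) (by rw [hW, hS.finrank_secant ha hb hab]) (hcW 0) (hcl 0)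
  obtain ⟨α, β, hαβ⟩ := mem_span_pair.1 hQab
  have hα : α ≠ 0 := by
    rintro rfl
    exact hQ.2 b hb (mem_span_singleton.2 ⟨β, by rw [← hαβ]; simp⟩)
  have hβ : β ≠ 0 := by
    rintro rfl
    exact hQ.2 a ha (mem_span_singleton.2 ⟨α, by rw [← hαβ]; simp⟩)
  have hco : ∀ i, ∃ γ x y : F, γ ≠ 0 ∧ γ • c i = x • (α • a) + y • (β • b) + c 0 := by
    intro i
    have hi := hcW i
    rw [hWeq] at hi
    obtain ⟨u, hu, w, hw, huw⟩ := mem_sup.1 hi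
    obtain ⟨p, q, hpq⟩ := mem_span_pair.1 hu
    obtain ⟨r, hr⟩ := mem_span_singleton.1 hw
    have hr0 : r ≠ 0 := by
      rintro rfl
      apply hcl i
      rw [← huw, ← hr]
      simpa using hu
    refine ⟨r⁻¹, r⁻¹ * p * α⁻¹, r⁻¹ * q * β⁻¹, inv_ne_zero hr0, ?_⟩
    rw [← huw, ← hpq, ← hr]
    simp only [smul_add, smul_smul, inv_mul_cancel₀ hr0, one_smul]
    congr 3
    · field_simp
    · field_simp
  choose γ x y hγ hxy using hco
  -- differences
  have hdiff : ∀ i j, (x j - x i) • (α • a) + (y j - y i) • (β • b) ∈ span F {c i, c j} := by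
    intro i j
    have : (x j - x i) • (α • a) + (y j - y i) • (β • b) = γ j • c j - γ i • c i := by
      rw [hxy, hxy]; module
    rw [this]
    exact sub_mem (smul_mem _ _ (right_mem _ _)) (smul_mem _ _ (left_mem _ _))
  have hne2 : ∀ i j, i ≠ j → ¬ (x i = x j ∧ y i = y j) := by
    rintro i j hij ⟨h1, h2⟩
    have : γ i • c i = γ j • c j := by rw [hxy, hxy, h1, h2]
    apply hS.not_mem_single (hcS i) (hcS j) (hcinj i j hij)
    rw [← smul_mem_iff _ (hγ i), this]
    exact smul_mem _ _ (mem_span_singleton_self _)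
  have hx : ∀ i j, i ≠ j → x i ≠ x j := by
    intro i j hij h
    have hy : y j - y i ≠ 0 := fun h' => hne2 i j hij ⟨h, by linear_combination -h'⟩
    have := hdiff i j
    rw [h, sub_self, zero_smul, zero_add, smul_mem_iff _ hy, smul_mem_iff _ hβ] at this
    exact hS.2 _ (hcS i) _ (hcS j) b hb (hcab i).2.symm (hcab j).2.symm this
  have hy : ∀ i j, i ≠ j → y i ≠ y j := by
    intro i j hij h
    have hx : x j - x i ≠ 0 := fun h' => hne2 i j hij ⟨by linear_combination -h', h⟩
    have := hdiff i j
    rw [h, sub_self, zero_smul, add_zero, smul_mem_iff _ hx, smul_mem_iff _ hα] at this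
    exact hS.2 _ (hcS i) _ (hcS j) a ha (hcab i).1.symm (hcab j).1.symm this
  refine field5 h8 x y hx hy ?_ ?_
  · intro i j hij h
    have hx0 : y j - y i ≠ 0 := by rw [← h]; exact sub_ne_zero.2 (hx j i hij.symm)
    have := hdiff i j
    rw [h, ← smul_add, hαβ, smul_mem_iff _ hx0] at this
    exact hcne i j hij (fline_eq hQ (hcS i) (hcS j) this)
  · intro i j k hij hik hjk h
    have hu : x j - x i ≠ 0 := sub_ne_zero.2 (hx j i hij.symm)
    apply hS.2 _ (hcS i) _ (hcS j) _ (hcS k) (hcinj k i hik.symm) (hcinj k j hjk.symm)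
    rw [← smul_mem_iff _ (hγ k), ← smul_mem_iff _ hu]
    have : (x j - x i) • (γ k • c k) = (x j - x i) • (γ i • c i)
        + (x k - x i) • (γ j • c j - γ i • c i) := by
      rw [hxy, hxy, hxy]
      rw [← sub_eq_zero]
      have h' : ((x j - x i) * (y k - y i) - (x k - x i) * (y j - y i)) • (β • b) = 0 := by
        rw [h, sub_self, zero_smul]
      rw [← h']
      module
    rw [this]
    exact add_mem (smul_mem _ _ (smul_mem _ _ (left_mem _ _)))
      (smul_mem _ _ (sub_mem (smul_mem _ _ (right_mem _ _)) (smul_mem _ _ (left_mem _ _))))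

/-- summing the Segre bound over planes through a secant -/
theorem segre_sum (h8 : Fintype.card F = 8) (hS : Cap F S) {E : Submodule F V}
    {Q a b : V} (hQ : Outer F S Q) (ha : a ∈ S) (hb : b ∈ S) (hab : a ≠ b)
    (haE : a ∈ E) (hbE : b ∈ E) (hQab : Q ∈ span F {a, b}) :
    cnt S E + cnt (XX F S Q) E ≤ 2 + 8 * (cov (span F {a, b}) E).card := by
  have hle : span F {a, b} ≤ E := pair_le haE hbE
  have h1 := cov_sum_int hle S
  have h2 := cov_sum_int hle (XX F S Q)
  have hx : cnt (XX F S Q) (span F {a, b}) = 0 := by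
    unfold cnt
    rw [Finset.card_eq_zero]
    ext x
    simp only [XX, Finset.mem_filter, Finset.notMem_empty, iff_false]
    rintro ⟨⟨hx1, hx2⟩, hx3⟩
    by_cases hxa : x = a
    · subst hxa; exact hx2 b hb hab.symm hQab
    by_cases hxb : x = b
    · subst hxb; exact hx2 a ha hab (mem_comm.1 hQab)
    exact hS.2 a ha b hb x hx1 hxa hxb hx3
  rw [hS.cnt_secant ha hb hab] at h1
  rw [hx] at h2
  have h3 : ∑ W ∈ cov (span F {a, b}) E, (((cnt S W : ℤ) - (2 : ℕ)) +
      ((cnt (XX F S Q) W : ℤ) - (0 : ℕ))) ≤ ∑ W ∈ cov (span F {a, b}) E, (8 : ℤ) := by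
    apply Finset.sum_le_sum
    intro W hW
    obtain ⟨hW1, hW2, hW3⟩ := mem_cov hle hW
    rw [hS.finrank_secant ha hb hab] at hW3
    have := segre h8 hS hW3 hQ ha hb hab (hW1 (left_mem _ _)) (hW1 (right_mem _ _)) hQab
    push_cast
    omega
  rw [Finset.sum_add_distrib, h1, h2, Finset.sum_const, nsmul_eq_mul] at h3
  push_cast at h3
  omega

theorem segre4 (h8 : Fintype.card F = 8) (hS : Cap F S) {E : Submodule F V}
    (hE : finrank F E = 4)
    {Q a b : V} (hQ : Outer F S Q) (ha : a ∈ S) (hb : b ∈ S) (hab : a ≠ b)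
    (haE : a ∈ E) (hbE : b ∈ E) (hQab : Q ∈ span F {a, b}) :
    cnt S E + cnt (XX F S Q) E ≤ 74 := by
  have h := segre_sum h8 hS hQ ha hb hab haE hbE hQab
  have h2 := cov_card' h8 (pair_le haE hbE) 2 (by rw [hE, hS.finrank_secant ha hb hab])
  omega

theorem segre5 (h8 : Fintype.card F = 8) (hS : Cap F S) {E : Submodule F V}
    (hE : finrank F E = 5)
    {Q a b : V} (hQ : Outer F S Q) (ha : a ∈ S) (hb : b ∈ S) (hab : a ≠ b)
    (haE : a ∈ E) (hbE : b ∈ E) (hQab : Q ∈ span F {a, b}) :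
    cnt S E + cnt (XX F S Q) E ≤ 586 := by
  have h := segre_sum h8 hS hQ ha hb hab haE hbE hQab
  have h2 := cov_card' h8 (pair_le haE hbE) 3 (by rw [hE, hS.finrank_secant ha hb hab])
  omega

end
end CapEight
open Module

namespace CapEight
open scoped Classical
open Submodule

section
variable {F V : Type*} [Field F] [Fintype F] [AddCommGroup V] [Module F V] [Fintype V]
variable {S : Finset V}

theorem pair_seven (h8 : Fintype.card F = 8) (hS : Cap F S) {l p : Submodule F V}
    (hlp : l ≤ p) (hr : finrank F p = finrank F l + 1) {c d : V}
    (hc : c ∈ S) (hd : d ∈ S) (hcp : c ∈ p) (hdp : d ∈ p) (hcl : c ∉ l) (hdl : d ∉ l)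
    (hcd : c ≠ d) :
    7 ≤ ((out S l).filter (fun Q => Q ∈ span F {c, d})).card := by
  rw [eq_sup_of_mem hlp hr hcp hcl] at hdp
  obtain ⟨u, hu, w, hw, huw⟩ := mem_sup.1 hdp
  have hcd' := hS.not_mem_single hd hc hcd.symm
  have hu0 : u ≠ 0 := by
    rintro rfl
    rw [zero_add] at huw
    rw [huw] at hw
    exact hcd' hw
  have hus : u ∈ span F {c, d} := by
    have : u = d - w := by rw [← huw]; abel
    rw [this]
    exact sub_mem (right_mem _ _) (single_le (left_mem _ _) hw)
  rw [← card_nonzero_span h8 hu0]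
  apply Finset.card_le_card
  intro Q hQ
  simp only [Finset.mem_filter, Finset.mem_univ, true_and] at hQ
  obtain ⟨hQ1, hQ0⟩ := hQ
  have hQl := single_le hu hQ1
  have hQs := single_le hus hQ1
  simp only [Finset.mem_filter, mem_out]
  refine ⟨⟨hQl, hQ0, ?_⟩, hQs⟩
  intro e he hQe
  have h1 := mem_single_symm hQ0 hQe
  have hel : e ∈ l := single_le hQl h1
  have hes := single_le hQs h1
  refine hS.2 c hc d hd e he ?_ ?_ hes
  · rintro rfl; exact hcl hel
  · rintro rfl; exact hdl hel

theorem secant_sum (h8 : Fintype.card F = 8) (hS : Cap F S) {H : Submodule F V} {a b : V}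
    (ha : a ∈ S) (hb : b ∈ S) (hab : a ≠ b) (haH : a ∈ H) (hbH : b ∈ H) :
    98 + 7 * ∑ p ∈ cov (span F {a, b}) H, ((cnt S p : ℤ) - 2) * ((cnt S p : ℤ) - 3) ≤
      ∑ Q ∈ out S (span F {a, b}), (cnt (DD F S Q) H : ℤ) := by
  set l := span F {a, b} with hl
  have hlH : l ≤ H := pair_le haH hbH
  set g : V × V → ℕ := fun p => ((out S l).filter (fun Q => Q ∈ span F {p.1, p.2})).card with hg
  have h1 : ∑ Q ∈ out S l, cnt (DD F S Q) H = ∑ p ∈ (S.filter (fun v => v ∈ H)).offDiag, g p := by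
    have : ∀ Q ∈ out S l, cnt (DD F S Q) H = (((S.filter (fun v => v ∈ H)).offDiag).filter
      (fun p => Q ∈ span F {p.1, p.2})).card := fun Q hQ =>
        cnt_DD hS (mem_out.1 hQ).2 (hlH (mem_out.1 hQ).1)
    rw [Finset.sum_congr rfl this]
    exact Finset.sum_card_bipartiteAbove_eq_sum_card_bipartiteBelow
      (fun Q (p : V × V) => Q ∈ span F {p.1, p.2})
  set A : Submodule F V → Finset V := fun p => S.filter (fun v => v ∈ p ∧ v ∉ l) with hA
  have hAc : ∀ p ∈ cov l H, ((A p).card : ℤ) = (cnt S p : ℤ) - 2 := by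
    intro p hp
    have h := cnt_split (mem_cov hlH hp).1 S
    rw [hl, hS.cnt_secant ha hb hab, ← hl] at h
    rw [h]; simp [hA]
  set P1 : Finset (V × V) := {(a, b), (b, a)} with hP1
  set P2 : Finset (V × V) := (cov l H).biUnion (fun p => (A p).offDiag) with hP2
  have hdisj : Disjoint P1 P2 := by
    rw [Finset.disjoint_left]
    rintro ⟨x, y⟩ hx hy
    simp only [hP2, Finset.mem_biUnion, Finset.mem_offDiag, hA, Finset.mem_filter] at hy
    obtain ⟨p, hp, hx1, _⟩ := hy
    simp only [hP1, Finset.mem_insert, Finset.mem_singleton, Prod.mk.injEq] at hx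
    rcases hx with ⟨rfl, rfl⟩ | ⟨rfl, rfl⟩
    · exact hx1.2.2 (left_mem _ _)
    · exact hx1.2.2 (right_mem _ _)
  have hsub : P1 ∪ P2 ⊆ (S.filter (fun v => v ∈ H)).offDiag := by
    apply Finset.union_subset
    · rintro ⟨x, y⟩ hx
      simp only [hP1, Finset.mem_insert, Finset.mem_singleton, Prod.mk.injEq] at hx
      simp only [Finset.mem_offDiag, Finset.mem_filter]
      rcases hx with ⟨rfl, rfl⟩ | ⟨rfl, rfl⟩
      · exact ⟨⟨ha, haH⟩, ⟨hb, hbH⟩, hab⟩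
      · exact ⟨⟨hb, hbH⟩, ⟨ha, haH⟩, hab.symm⟩
    · rintro ⟨x, y⟩ hx
      simp only [hP2, Finset.mem_biUnion, Finset.mem_offDiag, hA, Finset.mem_filter] at hx
      obtain ⟨p, hp, hx1, hx2, hx3⟩ := hx
      simp only [Finset.mem_offDiag, Finset.mem_filter]
      have := (mem_cov hlH hp).2.1
      exact ⟨⟨hx1.1, this hx1.2.1⟩, ⟨hx2.1, this hx2.2.1⟩, hx3⟩
  have h2 : ∑ p ∈ P1, g p + ∑ p ∈ P2, g p ≤ ∑ p ∈ (S.filter (fun v => v ∈ H)).offDiag, g p := by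
    rw [← Finset.sum_union hdisj]
    exact Finset.sum_le_sum_of_subset hsub
  have h3 : ∑ p ∈ P1, g p = 98 := by
    have hne : (a, b) ≠ (b, a) := by
      intro h; exact hab (Prod.mk.injEq _ _ _ _ ▸ h).1
    rw [hP1, Finset.sum_pair hne]
    have e1 : (out S l).filter (fun Q => Q ∈ span F {a, b}) = out S l :=
      Finset.filter_true_of_mem (fun Q hQ => (mem_out.1 hQ).1)
    have e2 : (out S l).filter (fun Q => Q ∈ span F {b, a}) = out S l :=
      Finset.filter_true_of_mem (fun Q hQ => mem_comm.1 (mem_out.1 hQ).1)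
    simp only [hg, e1, e2]
    rw [hl, out_secant h8 hS ha hb hab]
  have h4 : ∑ p ∈ P2, g p = ∑ p ∈ cov l H, ∑ r ∈ (A p).offDiag, g r := by
    rw [hP2, Finset.sum_biUnion]
    intro p hp p' hp' hne
    rw [Function.onFun, Finset.disjoint_left]
    rintro ⟨x, y⟩ hx hx'
    simp only [Finset.mem_offDiag, hA, Finset.mem_filter] at hx hx'
    have k1 := mem_cov hlH hp
    have k2 := mem_cov hlH hp'
    apply hne
    rw [eq_sup_of_mem k1.1 k1.2.2 hx.1.2.1 hx.1.2.2, eq_sup_of_mem k2.1 k2.2.2 hx'.1.2.1 hx.1.2.2]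
  have h5 : ∀ p ∈ cov l H, (7 : ℤ) * (((cnt S p : ℤ) - 2) * ((cnt S p : ℤ) - 3)) ≤
      ((∑ r ∈ (A p).offDiag, g r : ℕ) : ℤ) := by
    intro p hp
    have k := mem_cov hlH hp
    have : (A p).offDiag.card • 7 ≤ ∑ r ∈ (A p).offDiag, g r := by
      apply Finset.card_nsmul_le_sum
      rintro ⟨x, y⟩ hx
      simp only [Finset.mem_offDiag, hA, Finset.mem_filter] at hx
      exact pair_seven h8 hS k.1 k.2.2 hx.1.1 hx.2.1.1 hx.1.2.1 hx.2.1.2.1 hx.1.2.2 hx.2.1.2.2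
        hx.2.2
    rw [Finset.offDiag_card] at this
    zify [Nat.le_mul_self (A p).card] at this
    rw [smul_eq_mul] at this
    push_cast [Nat.le_mul_self (A p).card] at this ⊢
    rw [hAc p hp] at this
    linarith
  have h6 := Finset.sum_le_sum h5
  rw [← Finset.mul_sum] at h6
  zify at h1 h2 h3 h4
  push_cast at h6
  rw [h1]
  linarith

/-- pointwise quadratic estimate -/
theorem quad_est (n : ℤ) : 12 * (n - 2) - 42 ≤ (n - 2) * (n - 3) := by
  by_cases h : n ≤ 8
  · nlinarith
  · nlinarith

theorem secant_est (h8 : Fintype.card F = 8) (hS : Cap F S) {H : Submodule F V}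
    (hH : finrank F H = 4) {a b : V}
    (ha : a ∈ S) (hb : b ∈ S) (hab : a ≠ b) (haH : a ∈ H) (hbH : b ∈ H) :
    14 * (65 - (cnt S H : ℤ)) ≤
      ∑ Q ∈ out S (span F {a, b}), (74 - (cnt S H : ℤ) - cnt (XX F S Q) H) ∧
    ((∃ p, p ≤ H ∧ finrank F p = 3 ∧ a ∈ p ∧ b ∈ p ∧ 10 ≤ cnt S p) → 14 * (65 - (cnt S H : ℤ)) <
      ∑ Q ∈ out S (span F {a, b}), (74 - (cnt S H : ℤ) - cnt (XX F S Q) H)) := by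
  have hle : span F {a, b} ≤ H := pair_le haH hbH
  have h := secant_sum h8 hS ha hb hab haH hbH
  have hc := cov_card' h8 hle 2 (by rw [hH, hS.finrank_secant ha hb hab])
  have hc9 : (cov (span F {a, b}) H).card = 9 := by omega
  have hs := cov_sum_int hle S
  rw [hS.cnt_secant ha hb hab] at hs
  push_cast at hs
  have e : ∑ Q ∈ out S (span F {a, b}), (74 - (cnt S H : ℤ) - cnt (XX F S Q) H) =
      49 * (74 - 2 * cnt S H) + ∑ Q ∈ out S (span F {a, b}), (cnt (DD F S Q) H : ℤ) := by
    have h49 : (49 : ℤ) = ((out S (span F {a, b})).card : ℤ) := by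
      rw [out_secant h8 hS ha hb hab]; rfl
    rw [h49, ← nsmul_eq_mul, ← Finset.sum_const,
      ← Finset.sum_add_distrib]
    apply Finset.sum_congr rfl
    intro Q _
    have := XX_add_DD S Q H
    push_cast [← this]
    ring
  have hlin : ∑ p ∈ cov (span F {a, b}) H, (12 * ((cnt S p : ℤ) - 2) - 42) =
      12 * (cnt S H - 2) - 378 := by
    rw [Finset.sum_sub_distrib, ← Finset.mul_sum, hs, Finset.sum_const, hc9]; rfl
  rw [e]
  constructor
  · have := Finset.sum_le_sum (s := cov (span F {a, b}) H) (fun p _ => quad_est (cnt S p))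
    linarith
  · rintro ⟨p, hpH, hp3, hap, hbp, hp⟩
    have hpc : p ∈ cov (span F {a, b}) H := (mem_cov_iff hle).2
      ⟨pair_le hap hbp, hpH, by rw [hp3, hS.finrank_secant ha hb hab]⟩
    have := Finset.sum_lt_sum (s := cov (span F {a, b}) H) (fun p _ => quad_est (cnt S p))
      ⟨p, hpc, by
        have : (10 : ℤ) ≤ cnt S p := by exact_mod_cast hp
        nlinarith⟩
    linarith

theorem no74 (h8 : Fintype.card F = 8) (hS : Cap F S) {H : Submodule F V}
    (hH : finrank F H = 4) (hSH : ∀ a ∈ S, a ∈ H) (hc : S.card = 74)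
    (hX : ∀ Q ∈ out S H, cnt (XX F S Q) H = 0) : False := by
  have hcH : cnt S H = 74 := by rw [cnt_eq_card hSH, hc]
  obtain ⟨a, ha, b, hb, hab⟩ := Finset.one_lt_card.1 (show 1 < S.card by omega)
  obtain ⟨hQ, hQab⟩ := outer_add hS ha hb hab
  set Q := a + b
  have hQH : Q ∈ H := pair_le (hSH a ha) (hSH b hb) hQab
  have hX0 := hX Q (mem_out.2 ⟨hQH, hQ⟩)
  have hpart : ∀ c ∈ S, ∃ d ∈ S, d ≠ c ∧ Q ∈ span F {c, d} := by
    intro c hc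
    by_contra hcon
    push Not at hcon
    have : c ∈ (XX F S Q).filter (fun v => v ∈ H) :=
      Finset.mem_filter.2 ⟨mem_XX.2 ⟨hc, hcon⟩, hSH c hc⟩
    unfold cnt at hX0
    rw [Finset.card_eq_zero] at hX0
    rw [hX0] at this
    simp at this
  have hQl : span F {Q} ≤ H := single_le hQH
  have hfQ : finrank F (span F {Q}) = 1 := finrank_span_singleton hQ.1
  have hcQ : cnt S (span F {Q}) = 0 := by
    unfold cnt
    rw [Finset.card_eq_zero]
    ext x
    simp only [Finset.mem_filter, Finset.notMem_empty, iff_false]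
    rintro ⟨h1, h2⟩
    exact hQ.2 x h1 (mem_single_symm (hS.ne_zero h1) h2)
  have hnum := cov_card' h8 hQl 3 (by rw [hH, hfQ])
  have hsum := cov_sum hQl S
  rw [hcQ, hcH] at hsum
  obtain ⟨M, hM, hM0⟩ : ∃ M ∈ cov (span F {Q}) H, cnt S M = 0 := by
    by_contra hcon
    push Not at hcon
    have : (cov (span F {Q}) H).card • 2 ≤ ∑ W ∈ cov (span F {Q}) H, cnt S W := by
      apply Finset.card_nsmul_le_sum
      intro M hM
      obtain ⟨hM1, hM2, hM3⟩ := mem_cov hQl hM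
      obtain ⟨c, hc⟩ := Finset.card_pos.1 (Nat.pos_of_ne_zero (hcon M hM))
      obtain ⟨hcS, hcM⟩ := Finset.mem_filter.1 hc
      obtain ⟨d, hd, hdc, hQcd⟩ := hpart c hcS
      have hQM : Q ∈ M := hM1 (mem_span_singleton_self Q)
      have hdM := mem_of_secant hQ hcS hQM hcM hQcd
      rw [← hS.cnt_secant hcS hd hdc.symm]
      exact cnt_mono (pair_le hcM hdM)
    rw [smul_eq_mul] at this
    omega
  obtain ⟨hM1, hM2, hM3⟩ := mem_cov hQl hM
  have hQM : Q ∈ M := hM1 (mem_span_singleton_self Q)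
  have hsum2 := cov_sum hM2 S
  rw [hM0, hcH] at hsum2
  have hdvd : 10 ∣ ∑ W ∈ cov M H, cnt S W := by
    apply Finset.dvd_sum
    intro W hW
    obtain ⟨hW1, hW2, hW3⟩ := mem_cov hM2 hW
    by_cases h0 : cnt S W = 0
    · rw [h0]; simp
    obtain ⟨c, hc⟩ := Finset.card_pos.1 (Nat.pos_of_ne_zero h0)
    obtain ⟨hcS, hcW⟩ := Finset.mem_filter.1 hc
    obtain ⟨d, hd, hdc, hQcd⟩ := hpart c hcS
    have hdW := mem_of_secant hQ hcS (hW1 hQM) hcW hQcd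
    have hlH : span F {c, d} ≤ H := pair_le (hSH c hcS) (hSH d hd)
    have hfr := hS.finrank_secant hcS hd hdc.symm
    have hWc : W ∈ cov (span F {c, d}) H := (mem_cov_iff hlH).2
      ⟨pair_le hcW hdW, hW2, by rw [hW3, hM3, hfr, hfQ]⟩
    have hn9 := cov_card' h8 hlH 2 (by rw [hH, hfr])
    have hs := cov_sum_int hlH S
    rw [hS.cnt_secant hcS hd hdc.symm, hcH] at hs
    push_cast at hs
    have hz : ∑ W ∈ cov (span F {c, d}) H, (8 - ((cnt S W : ℤ) - 2)) = 0 := by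
      rw [Finset.sum_sub_distrib, hs, Finset.sum_const, show (cov (span F {c, d}) H).card = 9 by
        omega]
      norm_num
    have := (Finset.sum_eq_zero_iff_of_nonneg (s := cov (span F {c, d}) H)
      (f := fun W => (8 - ((cnt S W : ℤ) - 2))) (by
        intro W' hW'
        obtain ⟨k1, k2, k3⟩ := mem_cov hlH hW'
        have := segre h8 hS (by rw [k3, hfr]) hQ hcS hd hdc.symm (k1 (left_mem _ _))
          (k1 (right_mem _ _)) hQcd
        omega)).1 hz W hWc
    have : cnt S W = 10 := by omega
    rw [this]
  omega

theorem lemmaH (h8 : Fintype.card F = 8) {C : Finset V} (hC : Cap F C) {H W : Submodule F V}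
    (hH : finrank F H = 4) (hCH : ∀ a ∈ C, a ∈ H) (hWH : W ≤ H) (hW : finrank F W = 3)
    (h10 : 10 ≤ cnt C W) : C.card ≤ 60 := by
  obtain ⟨S, hCS, hS, hSH, hcomp⟩ := completion hC H hCH
  have hcc := Finset.card_le_card hCS
  have hSW : 10 ≤ cnt S W := h10.trans (cnt_le hCS)
  by_contra hcon
  have hcH : cnt S H = S.card := cnt_eq_card hSH
  have h61 : 61 ≤ cnt S H := by omega
  have hle : ∀ Q ∈ out S H, cnt S H + cnt (XX F S Q) H ≤ 74 := by
    intro Q hQ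
    obtain ⟨hQH, hQ⟩ := mem_out.1 hQ
    obtain ⟨a, ha, b, hb, hab, hQab⟩ := hcomp Q hQH hQ
    exact segre4 h8 hS hH hQ ha hb hab (hSH a ha) (hSH b hb) hQab
  obtain ⟨a, ha', b, hb', hab⟩ := Finset.one_lt_card.1 (show 1 < cnt S W by omega)
  obtain ⟨ha, haW⟩ := Finset.mem_filter.1 ha'
  obtain ⟨hb, hbW⟩ := Finset.mem_filter.1 hb'
  obtain ⟨hQ0, hQab⟩ := outer_add hS ha hb hab
  have h74 := hle (a + b) (mem_out.2 ⟨pair_le (hSH a ha) (hSH b hb) hQab, hQ0⟩)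
  have hout := card_out h8 hS H
  rw [hH] at hout
  have hsD := sum_DD h8 hS H
  set c : ℤ := ((cnt S H : ℕ) : ℤ) with hcdef
  have hxd : ∀ Q, (cnt (XX F S Q) H : ℤ) = c - cnt (DD F S Q) H := by
    intro Q
    have := XX_add_DD S Q H
    rw [hcdef]; push_cast [← this]; ring
  set g : V → ℤ := fun Q => 74 - c - cnt (XX F S Q) H with hgdef
  have hg0 : ∀ Q ∈ out S H, 0 ≤ g Q := by
    intro Q hQ
    have := hle Q hQ
    simp only [hgdef, hcdef]; omega
  have hsg : ∑ Q ∈ out S H, g Q = 63 * (c - 65) * (c - 74) := by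
    have : ∀ Q ∈ out S H, g Q = (74 - 2 * c) + cnt (DD F S Q) H := by
      intro Q _; simp only [hgdef, hxd]; ring
    rw [Finset.sum_congr rfl this, Finset.sum_add_distrib, hsD, Finset.sum_const, nsmul_eq_mul]
    have ho : ((out S H).card : ℤ) = 4095 - 7 * c := by rw [hcdef]; omega
    rw [ho]; ring
  have hsg0 : 0 ≤ ∑ Q ∈ out S H, g Q := Finset.sum_nonneg hg0
  have hc61 : 61 ≤ c := by rw [hcdef]; exact_mod_cast h61
  have hc74 : c ≤ 74 := by rw [hcdef]; omega
  have hsecant : ∀ p ∈ (S.filter (fun v => v ∈ H)).offDiag,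
      14 * (65 - c) ≤ ∑ Q ∈ out S (span F {p.1, p.2}), g Q := by
    rintro ⟨x, y⟩ hp
    simp only [Finset.mem_offDiag, Finset.mem_filter] at hp
    exact (secant_est h8 hS hH hp.1.1 hp.2.1.1 hp.2.2 hp.1.2 hp.2.1.2).1
  rcases lt_trichotomy c 65 with hlt | heq | hgt
  · -- small case
    have h1 := double_count hS H g
    have h2 := Finset.card_nsmul_le_sum _ _ _ hsecant
    rw [← h1, Finset.offDiag_card] at h2
    have h3 : ∑ Q ∈ out S H, (cnt (DD F S Q) H : ℤ) * g Q ≤ ∑ Q ∈ out S H, c * g Q := by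
      apply Finset.sum_le_sum
      intro Q hQ
      apply mul_le_mul_of_nonneg_right _ (hg0 Q hQ)
      have := hxd Q
      omega
    rw [← Finset.mul_sum, hsg] at h3
    change ((cnt S H * cnt S H - cnt S H : ℕ)) • _ ≤ _ at h2
    rw [nsmul_eq_mul, Nat.cast_sub (Nat.le_mul_self _)] at h2
    push_cast at h2
    rw [← hcdef] at h2
    clear_value c
    have h4 := h2.trans h3
    clear h2 h3 h1 hsecant hsg0 hsg hg0 hgdef hxd hsD
    interval_cases c <;> norm_num at h4
  · -- c = 65
    have hst := (secant_est h8 hS hH ha hb hab (hSH a ha) (hSH b hb)).2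
      ⟨W, hWH, hW, haW, hbW, hSW⟩
    rw [← hcdef, heq] at hst
    have hz : ∑ Q ∈ out S H, g Q = 0 := by rw [hsg, heq]; norm_num
    have hz2 := (Finset.sum_eq_zero_iff_of_nonneg hg0).1 hz
    have hz3 : ∑ Q ∈ out S (span F {a, b}), g Q = 0 := by
      apply Finset.sum_eq_zero
      intro Q hQ
      obtain ⟨k1, k2⟩ := mem_out.1 hQ
      exact hz2 Q (mem_out.2 ⟨pair_le (hSH a ha) (hSH b hb) k1, k2⟩)
    simp only [hgdef, heq] at hz3
    rw [hz3] at hst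
    norm_num at hst
  · by_cases h : c = 74
    · apply no74 h8 hS hH hSH
      · rw [hcdef] at h; omega
      · intro Q hQ
        have := hle Q hQ
        rw [hcdef] at h
        omega
    · have : c < 74 := lt_of_le_of_ne hc74 h
      rw [hsg] at hsg0
      nlinarith [mul_pos (sub_pos.2 hgt) (sub_pos.2 this)]

end
end CapEight
open Module

namespace CapEight
open scoped Classical
open Submodule

section
variable {F V : Type*} [Field F] [Fintype F] [AddCommGroup V] [Module F V] [Fintype V]
variable {S : Finset V}

theorem cnt_filter {W H : Submodule F V} (h : W ≤ H) (A : Finset V) :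
    cnt (A.filter (fun v => v ∈ H)) W = cnt A W := by
  unfold cnt
  rw [Finset.filter_filter]
  congr 1
  ext v
  simp only [Finset.mem_filter]
  exact ⟨fun h => ⟨h.1, h.2.2⟩, fun h' => ⟨h'.1, h h'.2, h'.2⟩⟩

theorem lemmaH' (h8 : Fintype.card F = 8) (hS : Cap F S) {H W : Submodule F V}
    (hH : finrank F H = 4) (hWH : W ≤ H) (hW : finrank F W = 3)
    (h10 : 10 ≤ cnt S W) : cnt S H ≤ 60 :=
  lemmaH h8 (hS.subset (Finset.filter_subset (fun v => v ∈ H) S)) hH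
    (fun a ha => (Finset.mem_filter.1 ha).2) hWH hW (by rwa [cnt_filter hWH])

theorem plane9 (h8 : Fintype.card F = 8) (hS : Cap F S) {E W : Submodule F V}
    (hE : finrank F E = 5) (hk : 480 ≤ cnt S E) (hWE : W ≤ E) (hW : finrank F W = 3) :
    cnt S W ≤ 9 := by
  by_contra hcon
  have hc := cov_card' h8 hWE 2 (by rw [hE, hW])
  have hs := cov_sum hWE S
  have : ∑ H ∈ cov W E, cnt S H ≤ (cov W E).card • 60 := by
    apply Finset.sum_le_card_nsmul
    intro H hH
    obtain ⟨h1, h2, h3⟩ := mem_cov hWE hH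
    exact lemmaH' h8 hS (by rw [h3, hW]) h1 hW (by omega)
  rw [smul_eq_mul, show (cov W E).card = 9 by omega] at this
  rw [show (cov W E).card = 9 by omega] at hs
  omega

/-- the planes with nine points -/
noncomputable def PP (S : Finset V) (E : Submodule F V) : Finset (Submodule F V) :=
  (Set.toFinite ({W | W ≤ E ∧ finrank F W = 3 ∧ cnt S W = 9} : Set (Submodule F V))).toFinset

theorem mem_PP {E W : Submodule F V} :
    W ∈ PP S E ↔ W ≤ E ∧ finrank F W = 3 ∧ cnt S W = 9 := by
  unfold PP
  rw [Set.Finite.mem_toFinset]; rfl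

theorem PP_large (h8 : Fintype.card F = 8) (hS : Cap F S) {E : Submodule F V}
    (hE : finrank F E = 5) (hSE : ∀ a ∈ S, a ∈ E) (hk : 480 ≤ S.card) :
    S.card * (S.card - 1) * (S.card - 440) ≤ 72 * (PP S E).card := by
  have hcE := cnt_eq_card hSE
  have h1 : ∑ p ∈ S.offDiag, ((PP S E).filter (fun W => p.1 ∈ W ∧ p.2 ∈ W)).card =
      ∑ W ∈ PP S E, (S.offDiag.filter (fun p => p.1 ∈ W ∧ p.2 ∈ W)).card :=
    Finset.sum_card_bipartiteAbove_eq_sum_card_bipartiteBelow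
      (fun (p : V × V) (W : Submodule F V) => p.1 ∈ W ∧ p.2 ∈ W)
  have h2 : ∀ W ∈ PP S E, (S.offDiag.filter (fun p => p.1 ∈ W ∧ p.2 ∈ W)).card = 72 := by
    intro W hW
    have : S.offDiag.filter (fun p => p.1 ∈ W ∧ p.2 ∈ W) =
        (S.filter (fun v => v ∈ W)).offDiag := by
      ext ⟨x, y⟩
      simp only [Finset.mem_filter, Finset.mem_offDiag]
      tauto
    rw [this, Finset.offDiag_card]
    have h9 := (mem_PP.1 hW).2.2
    unfold cnt at h9
    rw [h9]
  rw [Finset.sum_congr rfl h2, Finset.sum_const, smul_eq_mul] at h1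
  have h3 : ∀ p ∈ S.offDiag, S.card - 440 ≤
      ((PP S E).filter (fun W => p.1 ∈ W ∧ p.2 ∈ W)).card := by
    rintro ⟨a, b⟩ hp
    simp only [Finset.mem_offDiag] at hp
    obtain ⟨ha, hb, hab⟩ := hp
    have hle : span F {a, b} ≤ E := pair_le (hSE a ha) (hSE b hb)
    have hfr := hS.finrank_secant ha hb hab
    have hc := cov_card' h8 hle 3 (by rw [hE, hfr])
    have hs := cov_sum hle S
    rw [hS.cnt_secant ha hb hab, hcE] at hs
    have hsub : (cov (span F {a, b}) E).filter (fun W => cnt S W = 9) ⊆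
        (PP S E).filter (fun W => a ∈ W ∧ b ∈ W) := by
      intro W hW
      obtain ⟨hW, h9⟩ := Finset.mem_filter.1 hW
      obtain ⟨k1, k2, k3⟩ := mem_cov hle hW
      exact Finset.mem_filter.2 ⟨mem_PP.2 ⟨k2, by rw [k3, hfr], h9⟩,
        k1 (left_mem _ _), k1 (right_mem _ _)⟩
    have hsc := Finset.card_le_card hsub
    have hb : ∑ W ∈ cov (span F {a, b}) E, cnt S W ≤
        ∑ W ∈ cov (span F {a, b}) E, (8 + if cnt S W = 9 then 1 else 0) := by
      apply Finset.sum_le_sum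
      intro W hW
      obtain ⟨k1, k2, k3⟩ := mem_cov hle hW
      have := plane9 h8 hS hE (by omega) k2 (by rw [k3, hfr])
      split_ifs <;> omega
    rw [Finset.sum_add_distrib, ← Finset.card_filter, Finset.sum_const, smul_eq_mul] at hb
    rw [show (cov (span F {a, b}) E).card = 73 by omega] at hb hs
    simp only
    omega
  have h4 := Finset.card_nsmul_le_sum _ _ _ h3
  rw [h1, Finset.offDiag_card, smul_eq_mul] at h4
  rw [show S.card * (S.card - 1) = S.card * S.card - S.card by rw [Nat.mul_sub, mul_one],
    mul_comm 72]
  exact h4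

theorem free_count (h8 : Fintype.card F = 8) (hS : Cap F S) {W : Submodule F V}
    (hW : finrank F W = 3) (h9 : cnt S W = 9) :
    7 ≤ ((out S W).filter (fun Q => cnt (DD F S Q) W = 0)).card := by
  have ho := card_out h8 hS W
  rw [hW, h9] at ho
  have hs := sum_DD h8 hS W
  rw [h9] at hs
  have hb : ∑ Q ∈ out S W, ((8 : ℤ) + (-8) * if cnt (DD F S Q) W = 0 then 1 else 0) ≤
      ∑ Q ∈ out S W, (cnt (DD F S Q) W : ℤ) := by
    apply Finset.sum_le_sum
    intro Q hQ
    obtain ⟨hQW, hQ⟩ := mem_out.1 hQ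
    split_ifs with h
    · rw [h]; norm_num
    · obtain ⟨a, ha⟩ := Finset.card_pos.1 (Nat.pos_of_ne_zero h)
      obtain ⟨haD, haW⟩ := Finset.mem_filter.1 ha
      obtain ⟨haS, b, hb, hba, hQab⟩ := mem_DD.1 haD
      have hbW := mem_of_secant hQ haS hQW haW hQab
      have h1 := segre h8 hS hW hQ haS hb hba.symm haW hbW hQab
      have h2 := XX_add_DD S Q W
      omega
  rw [Finset.sum_add_distrib, ← Finset.mul_sum, hs, Finset.sum_const, nsmul_eq_mul,
    Finset.sum_boole] at hb
  have : ((out S W).card : ℤ) = 448 := by omega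
  rw [this] at hb
  push_cast at hb
  omega

theorem inter_solids {E H H' : Submodule F V} (hE : finrank F E = 5) (hH : finrank F H = 4)
    (hH' : finrank F H' = 4) (hHE : H ≤ E) (hHE' : H' ≤ E) (hne : H ≠ H') :
    finrank F ↥(H ⊓ H') = 3 := by
  have h1 := Submodule.finrank_sup_add_finrank_inf_eq H H'
  have h2 : finrank F ↥(H ⊔ H') ≤ 5 := hE ▸ Submodule.finrank_mono (sup_le hHE hHE')
  have h3 : finrank F H < finrank F ↥(H ⊔ H') := by
    apply Submodule.finrank_lt_finrank_of_lt
    refine lt_of_le_of_ne le_sup_left ?_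
    intro h
    have hle : H' ≤ H := by rw [h]; exact le_sup_right
    exact hne (Submodule.eq_of_le_of_finrank_eq hle (by rw [hH, hH'])).symm
  omega

theorem filter_inter (X : Finset V) (H H' : Submodule F V) :
    X.filter (fun v => v ∈ H) ∩ X.filter (fun v => v ∈ H') = X.filter (fun v => v ∈ H ⊓ H') := by
  ext v
  simp only [Finset.mem_inter, Finset.mem_filter, Submodule.mem_inf]
  tauto

/-- the nine-point planes in which `Q` is on no secant -/
noncomputable def LL (S : Finset V) (E : Submodule F V) (Q : V) : Finset (Submodule F V) :=
  (PP S E).filter (fun W => Q ∈ W ∧ cnt (DD F S Q) W = 0)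

theorem pair_bound {E : Submodule F V} {Q : V} (hS : Cap F S) (A : Finset V)
    (hA : A ⊆ XX F S Q) (h9 : ∀ W ∈ LL S E Q, cnt A W = 9) :
    72 * (LL S E Q).card ≤ A.card * (A.card - 1) := by
  have h1 : ((LL S E Q).biUnion (fun W => (A.filter (fun v => v ∈ W)).offDiag)).card =
      (LL S E Q).card * 72 := by
    rw [Finset.card_biUnion]
    · rw [Finset.sum_congr rfl (g := fun _ => 72)]
      · rw [Finset.sum_const, smul_eq_mul]
      · intro W hW
        have := h9 W hW
        unfold cnt at this
        rw [Finset.offDiag_card, this]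
    · intro W hW W' hW' hne
      rw [Function.onFun, Finset.disjoint_left]
      rintro ⟨x, y⟩ hx hx'
      simp only [Finset.mem_offDiag, Finset.mem_filter] at hx hx'
      obtain ⟨⟨hxA, hxW⟩, ⟨hyA, hyW⟩, hxy⟩ := hx
      obtain ⟨⟨_, hxW'⟩, ⟨_, hyW'⟩, _⟩ := hx'
      obtain ⟨hxS, hx2⟩ := mem_XX.1 (hA hxA)
      obtain ⟨hyS, hy2⟩ := mem_XX.1 (hA hyA)
      have hQ := hx2 y hyS hxy.symm
      have hfr := hS.finrank_secant hxS hyS hxy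
      obtain ⟨k1, k2, k3⟩ := Finset.mem_filter.1 hW
      obtain ⟨k1', k2', k3'⟩ := Finset.mem_filter.1 hW'
      apply hne
      rw [eq_sup_of_mem (pair_le hxW hyW) (by rw [(mem_PP.1 k1).2.1, hfr]) k2 hQ,
        eq_sup_of_mem (pair_le hxW' hyW') (by rw [(mem_PP.1 k1').2.1, hfr]) k2' hQ]
  have h2 : (LL S E Q).biUnion (fun W => (A.filter (fun v => v ∈ W)).offDiag) ⊆ A.offDiag := by
    rintro ⟨x, y⟩ hx
    simp only [Finset.mem_biUnion, Finset.mem_offDiag, Finset.mem_filter] at hx ⊢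
    obtain ⟨W, hW, h1, h2, h3⟩ := hx
    exact ⟨h1.1, h2.1, h3⟩
  have h3 := Finset.card_le_card h2
  rw [h1, Finset.offDiag_card] at h3
  rw [Nat.mul_sub, mul_one, mul_comm 72]
  exact h3

/-- bad solids -/
def SB (S : Finset V) (E : Submodule F V) (Q : V) (H : Submodule F V) : Prop :=
  H ≤ E ∧ finrank F H = 4 ∧ cnt (XX F S Q) H ≤ 59

theorem solids (h8 : Fintype.card F = 8) (hS : Cap F S) {E : Submodule F V}
    (hE : finrank F E = 5) (hSE : ∀ a ∈ S, a ∈ E) (hk : 480 ≤ S.card) {Q : V}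
    (hQ : Outer F S Q) (hle : S.card + (XX F S Q).card ≤ 586)
    {W : Submodule F V} (hW : W ∈ LL S E Q) :
    (S.card + (XX F S Q).card ≤ 522) ∨
    (∃ H, SB S E Q H ∧ W ≤ H ∧ S.card + (XX F S Q).card ≤ 448 + 2 * cnt (XX F S Q) H) ∨
    (∃ H H', H ≠ H' ∧ SB S E Q H ∧ SB S E Q H' ∧ W ≤ H ∧ W ≤ H' ∧
      S.card + (XX F S Q).card ≤ 374 + 2 * cnt (XX F S Q) H + 2 * cnt (XX F S Q) H') := by
  obtain ⟨hWP, hQW, hDW⟩ := Finset.mem_filter.1 hW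
  obtain ⟨hWE, hW3, hW9⟩ := mem_PP.1 hWP
  have hcE := cnt_eq_card hSE
  have hXS : XX F S Q ⊆ S := fun x hx => (mem_XX.1 hx).1
  have hXE : cnt (XX F S Q) E = (XX F S Q).card := cnt_eq_card fun a ha => hSE a (hXS ha)
  have hXW : cnt (XX F S Q) W = 9 := by have := XX_add_DD S Q W; omega
  have hc := cov_card' h8 hWE 2 (by rw [hE, hW3])
  have hc9 : (cov W E).card = 9 := by omega
  have hsS := cov_sum_int hWE S
  have hsX := cov_sum_int hWE (XX F S Q)
  have hsD := cov_sum_int hWE (DD F S Q)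
  have hDE := XX_add_DD S Q E
  rw [hW9, hcE] at hsS
  rw [hXW, hXE] at hsX
  rw [hDW] at hsD
  rw [hXE, hcE] at hDE
  set bad := (cov W E).filter (fun H => cnt (DD F S Q) H = 0) with hbad
  set good := (cov W E).filter (fun H => ¬ cnt (DD F S Q) H = 0) with hgood
  have hbg : bad.card + good.card = 9 := by
    rw [← hc9]; exact Finset.card_filter_add_card_filter_not _
  have hB : ∀ H ∈ bad, SB S E Q H ∧ W ≤ H ∧ cnt S H = cnt (XX F S Q) H := by
    intro H hH
    obtain ⟨hHc, hD⟩ := Finset.mem_filter.1 hH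
    obtain ⟨k1, k2, k3⟩ := mem_cov hWE hHc
    have hxd := XX_add_DD S Q H
    have heq : cnt S H = cnt (XX F S Q) H := by omega
    refine ⟨⟨k2, by rw [k3, hW3], ?_⟩, k1, heq⟩
    have hSH : Cap F (S.filter (fun v => v ∈ H)) := hS.subset (Finset.filter_subset _ _)
    have hQn : Q ∉ S := fun h => hQ.2 Q h (mem_span_singleton_self Q)
    have hQH : Q ∈ H := k1 hQW
    have hcap : Cap F (insert Q (S.filter (fun v => v ∈ H))) := by
      apply hSH.insert_cap
      · exact ⟨hQ.1, fun a ha => hQ.2 a (Finset.mem_filter.1 ha).1⟩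
      · intro a ha b hb hab hm
        obtain ⟨ha, haH⟩ := Finset.mem_filter.1 ha
        obtain ⟨hb, hbH⟩ := Finset.mem_filter.1 hb
        have : a ∈ (DD F S Q).filter (fun v => v ∈ H) :=
          Finset.mem_filter.2 ⟨mem_DD.2 ⟨ha, b, hb, hab.symm, hm⟩, haH⟩
        unfold cnt at hD
        rw [Finset.card_eq_zero.1 hD] at this
        simp at this
    have hW10 : 10 ≤ cnt (insert Q (S.filter (fun v => v ∈ H))) W := by
      have h1 := cnt_filter k1 S
      unfold cnt at h1 hW9 ⊢
      rw [Finset.filter_insert, if_pos hQW, Finset.card_insert_of_notMem, h1, hW9]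
      simp [hQn]
    have := lemmaH h8 hcap (by rw [k3, hW3] : finrank F H = 4) (by
      intro a ha
      rcases Finset.mem_insert.1 ha with rfl | ha
      · exact hQH
      · exact (Finset.mem_filter.1 ha).2) k1 hW3 hW10
    rw [Finset.card_insert_of_notMem (by simp [hQn])] at this
    change cnt S H + 1 ≤ 60 at this
    omega
  have hG : ∀ H ∈ good, cnt S H + cnt (XX F S Q) H ≤ 74 ∧ cnt (DD F S Q) H ≤ 56 := by
    intro H hH
    obtain ⟨hHc, hD⟩ := Finset.mem_filter.1 hH
    obtain ⟨k1, k2, k3⟩ := mem_cov hWE hHc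
    obtain ⟨a, ha⟩ := Finset.card_pos.1 (Nat.pos_of_ne_zero hD)
    obtain ⟨haD, haH⟩ := Finset.mem_filter.1 ha
    obtain ⟨haS, b, hb, hba, hQab⟩ := mem_DD.1 haD
    have hbH := mem_of_secant hQ haS (k1 hQW) haH hQab
    have h1 := segre4 h8 hS (by rw [k3, hW3]) hQ haS hb hba.symm haH hbH hQab
    have h2 := XX_add_DD S Q H
    have h3 : cnt (XX F S Q) W ≤ cnt (XX F S Q) H := cnt_mono k1
    omega
  have split : ∀ f : Submodule F V → ℤ, ∑ H ∈ cov W E, f H = ∑ H ∈ bad, f H + ∑ H ∈ good, f H :=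
    fun f => (Finset.sum_filter_add_sum_filter_not _ _ _).symm
  have hDsum : (cnt (DD F S Q) E : ℤ) ≤ 56 * good.card := by
    rw [split] at hsD
    have e1 : ∑ H ∈ bad, ((cnt (DD F S Q) H : ℤ) - (0 : ℕ)) = 0 := by
      apply Finset.sum_eq_zero
      intro H hH
      rw [(Finset.mem_filter.1 hH).2]; rfl
    have e2 : ∑ H ∈ good, ((cnt (DD F S Q) H : ℤ) - (0 : ℕ)) ≤ good.card • (56 : ℤ) := by
      apply Finset.sum_le_card_nsmul
      intro H hH
      have := (hG H hH).2
      omega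
    rw [nsmul_eq_mul] at e2
    push_cast at hsD e1 e2
    linarith
  have hsum : (S.card : ℤ) + (XX F S Q).card - 18 ≤ 56 * good.card +
      ∑ H ∈ bad, (2 * (cnt (XX F S Q) H : ℤ) - 18) := by
    have e0 : ∑ H ∈ cov W E, (((cnt S H : ℤ) - (9 : ℕ)) + ((cnt (XX F S Q) H : ℤ) - (9 : ℕ))) =
        (S.card : ℤ) + (XX F S Q).card - 18 := by
      rw [Finset.sum_add_distrib, hsS, hsX]; push_cast; ring
    rw [split] at e0
    have e1 : ∑ H ∈ bad, (((cnt S H : ℤ) - (9 : ℕ)) + ((cnt (XX F S Q) H : ℤ) - (9 : ℕ))) =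
        ∑ H ∈ bad, (2 * (cnt (XX F S Q) H : ℤ) - 18) := by
      apply Finset.sum_congr rfl
      intro H hH
      rw [(hB H hH).2.2]; push_cast; ring
    have e2 : ∑ H ∈ good, (((cnt S H : ℤ) - (9 : ℕ)) + ((cnt (XX F S Q) H : ℤ) - (9 : ℕ))) ≤
        good.card • (56 : ℤ) := by
      apply Finset.sum_le_card_nsmul
      intro H hH
      have := (hG H hH).1
      push_cast
      omega
    rw [nsmul_eq_mul] at e2
    linarith
  have hb3 : bad.card ≤ 2 := by omega
  rcases Nat.lt_or_ge bad.card 1 with h | h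
  · left
    have : bad = ∅ := Finset.card_eq_zero.1 (by omega)
    rw [this, Finset.sum_empty] at hsum
    omega
  rcases Nat.lt_or_ge bad.card 2 with h2 | h2
  · right; left
    obtain ⟨H, hH⟩ := Finset.card_eq_one.1 (show bad.card = 1 by omega)
    obtain ⟨k1, k2, k3⟩ := hB H (by rw [hH]; simp)
    refine ⟨H, k1, k2, ?_⟩
    have hg : good.card = 8 := by omega
    rw [hH, Finset.sum_singleton, hg] at hsum
    push_cast at hsum
    omega
  · right; right
    obtain ⟨H, H', hne, hH⟩ := Finset.card_eq_two.1 (show bad.card = 2 by omega)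
    obtain ⟨k1, k2, k3⟩ := hB H (by rw [hH]; simp)
    obtain ⟨k1', k2', k3'⟩ := hB H' (by rw [hH]; simp)
    refine ⟨H, H', hne, k1, k1', k2, k2', ?_⟩
    have hg : good.card = 7 := by omega
    rw [hH, Finset.sum_pair hne, hg] at hsum
    push_cast at hsum
    omega

end
end CapEight
open Module

namespace CapEight
open scoped Classical
open Submodule

section
variable {F V : Type*} [Field F] [Fintype F] [AddCommGroup V] [Module F V] [Fintype V]
variable {S : Finset V}

theorem LL_bound (h8 : Fintype.card F = 8) (hS : Cap F S) {E : Submodule F V}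
    (hE : finrank F E = 5) (hSE : ∀ a ∈ S, a ∈ E) (hk : 480 ≤ S.card) {Q : V}
    (hQ : Outer F S Q) (hle : S.card + (XX F S Q).card ≤ 586) :
    2 * (LL S E Q).card + 5 * (S.card + (XX F S Q).card) ≤ 2 + 5 * 586 := by
  have hsol := fun W hW => solids h8 hS hE hSE hk hQ hle (W := W) hW
  have hcE := cnt_eq_card hSE
  have hXS : XX F S Q ⊆ S := fun x hx => (mem_XX.1 hx).1
  set X := XX F S Q with hX
  have hint : ∀ H H' : Submodule F V, SB S E Q H → SB S E Q H' → H ≠ H' →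
      cnt X (H ⊓ H') ≤ 9 := by
    intro H H' h1 h2 hne
    exact (cnt_le hXS).trans (plane9 h8 hS hE (by omega) (inf_le_left.trans h1.1)
      (inter_solids hE h1.2.1 h2.2.1 h1.1 h2.1 hne))
  have hun : ∀ H H' : Submodule F V, SB S E Q H → SB S E Q H' → H ≠ H' →
      cnt X H + cnt X H' ≤ (X.filter (fun v => v ∈ H) ∪ X.filter (fun v => v ∈ H')).card + 9 := by
    intro H H' h1 h2 hne
    have h3 := Finset.card_union_add_card_inter (X.filter (fun v => v ∈ H))
      (X.filter (fun v => v ∈ H'))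
    rw [filter_inter] at h3
    have h4 := hint H H' h1 h2 hne
    unfold cnt at h4 ⊢
    omega
  have hux : ∀ H H' : Submodule F V,
      (X.filter (fun v => v ∈ H) ∪ X.filter (fun v => v ∈ H')).card ≤ X.card := fun H H' =>
    Finset.card_le_card (Finset.union_subset (Finset.filter_subset _ _) (Finset.filter_subset _ _))
  have hW9 : ∀ W ∈ LL S E Q, cnt X W = 9 := by
    intro W hW
    obtain ⟨h1, h2, h3⟩ := Finset.mem_filter.1 hW
    have k1 := XX_add_DD S Q W
    have k2 := (mem_PP.1 h1).2.2
    rw [← hX] at k1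
    omega
  rcases Nat.lt_or_ge 566 (S.card + X.card) with hbig | hsmall
  · -- two bad solids through each plane
    have htwo : ∀ W ∈ LL S E Q, ∃ H H', H ≠ H' ∧ SB S E Q H ∧ SB S E Q H' ∧ W ≤ H ∧ W ≤ H' ∧
        S.card + X.card ≤ 374 + 2 * cnt X H + 2 * cnt X H' := by
      intro W hW
      rcases hsol W hW with h | ⟨H, h1, h2, h3⟩ | h
      · omega
      · have k1 := h1.2.2
        rw [← hX] at k1
        omega
      · exact h
    have hkey : ∀ H1 H2 H3 H4 : Submodule F V, H1 ≠ H2 → H3 ≠ H4 → SB S E Q H1 → SB S E Q H2 →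
        SB S E Q H3 → SB S E Q H4 →
        S.card + X.card ≤ 374 + 2 * cnt X H1 + 2 * cnt X H2 →
        S.card + X.card ≤ 374 + 2 * cnt X H3 + 2 * cnt X H4 → H1 = H3 ∨ H1 = H4 := by
      intro H1 H2 H3 H4 h12 h34 b1 b2 b3 b4 e1 e2
      by_contra hcon
      push Not at hcon
      have u1 := hun H1 H2 b1 b2 h12
      have u2 := hun H3 H4 b3 b4 h34
      have i1 := hint H1 H3 b1 b3 hcon.1
      have i2 := hint H1 H4 b1 b4 hcon.2
      have i3 := b2.2.2
      set U := X.filter (fun v => v ∈ H1) ∪ X.filter (fun v => v ∈ H2)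
      set U' := X.filter (fun v => v ∈ H3) ∪ X.filter (fun v => v ∈ H4)
      have hUU := Finset.card_union_add_card_inter U U'
      have hUX : (U ∪ U').card ≤ X.card := Finset.card_le_card
        (Finset.union_subset
          (Finset.union_subset (Finset.filter_subset _ _) (Finset.filter_subset _ _))
          (Finset.union_subset (Finset.filter_subset _ _) (Finset.filter_subset _ _)))
      have hI : U ∩ U' ⊆ (X.filter (fun v => v ∈ H1 ⊓ H3) ∪ X.filter (fun v => v ∈ H1 ⊓ H4)) ∪
          X.filter (fun v => v ∈ H2) := by
        intro v hv
        simp only [U, U', Finset.mem_inter, Finset.mem_union, Finset.mem_filter,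
          Submodule.mem_inf] at hv ⊢
        tauto
      have hI2 := Finset.card_le_card hI
      have hI3 := Finset.card_union_le (X.filter (fun v => v ∈ H1 ⊓ H3) ∪
        X.filter (fun v => v ∈ H1 ⊓ H4)) (X.filter (fun v => v ∈ H2))
      have hI4 := Finset.card_union_le (X.filter (fun v => v ∈ H1 ⊓ H3))
        (X.filter (fun v => v ∈ H1 ⊓ H4))
      rw [← hX] at i3
      unfold cnt at *
      omega
    have h1 : (LL S E Q).card ≤ 1 := by
      rw [Finset.card_le_one]
      intro W hW W' hW'
      obtain ⟨H1, H2, h12, b1, b2, w1, w2, e1⟩ := htwo W hW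
      obtain ⟨H3, H4, h34, b3, b4, w3, w4, e2⟩ := htwo W' hW'
      have c1 := hkey H1 H2 H3 H4 h12 h34 b1 b2 b3 b4 e1 e2
      have c2 := hkey H2 H1 H3 H4 h12.symm h34 b2 b1 b3 b4 (by omega) e2
      have f1 : W = H1 ⊓ H2 := Submodule.eq_of_le_of_finrank_eq (le_inf w1 w2) (by
        rw [inter_solids hE b1.2.1 b2.2.1 b1.1 b2.1 h12]
        exact (mem_PP.1 (Finset.mem_filter.1 hW).1).2.1)
      have f2 : W' = H3 ⊓ H4 := Submodule.eq_of_le_of_finrank_eq (le_inf w3 w4) (by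
        rw [inter_solids hE b3.2.1 b4.2.1 b3.1 b4.1 h34]
        exact (mem_PP.1 (Finset.mem_filter.1 hW').1).2.1)
      rw [f1, f2]
      rcases c1 with rfl | rfl <;> rcases c2 with rfl | rfl
      · exact absurd rfl h12
      · rfl
      · exact inf_comm _ _
      · exact absurd rfl h12
    omega
  · rcases Nat.lt_or_ge 522 (S.card + X.card) with hmid | hlow
    · rcases Finset.eq_empty_or_nonempty (LL S E Q) with hemp | ⟨W0, hW0⟩
      · rw [hemp, Finset.card_empty]; omega
      have hone : ∀ W ∈ LL S E Q, ∃ H, SB S E Q H ∧ W ≤ H ∧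
          S.card + X.card ≤ 448 + 2 * cnt X H := by
        intro W hW
        rcases hsol W hW with h | h | ⟨H, H', h1, h2, h3, h4, h5, h6⟩
        · omega
        · exact h
        · have k1 := hun H H' h2 h3 h1
          have k2 := hux H H'
          omega
      obtain ⟨H0, b0, w0, e0⟩ := hone W0 hW0
      have hall : ∀ W ∈ LL S E Q, W ≤ H0 := by
        intro W hW
        obtain ⟨H, b, w, e⟩ := hone W hW
        by_cases h : H = H0
        · rw [← h]; exact w
        · have k1 := hun H H0 b b0 h
          have k2 := hux H H0
          omega
      have hp := pair_bound (E := E) hS (X.filter (fun v => v ∈ H0)) (Finset.filter_subset _ _) (by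
        intro W hW
        rw [cnt_filter (hall W hW)]
        exact hW9 W hW)
      have hc : (X.filter (fun v => v ∈ H0)).card ≤ 59 := b0.2.2
      have := Nat.mul_le_mul hc (Nat.sub_le_sub_right hc 1)
      omega
    · have hp := pair_bound (E := E) hS X (fun _ h => h) hW9
      have hc : X.card ≤ 42 := by omega
      have := Nat.mul_le_mul hc (Nat.sub_le_sub_right hc 1)
      omega

theorem dim5 (h8 : Fintype.card F = 8) {C : Finset V} (hC : Cap F C) {E : Submodule F V}
    (hE : finrank F E = 5) (hCE : ∀ a ∈ C, a ∈ E) : C.card ≤ 479 := by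
  obtain ⟨S, hCS, hS, hSE, hcomp⟩ := completion hC E hCE
  have hcc := Finset.card_le_card hCS
  by_contra hcon
  have hk : 480 ≤ S.card := by omega
  have hcE := cnt_eq_card hSE
  have hXE : ∀ Q, cnt (XX F S Q) E = (XX F S Q).card := fun Q =>
    cnt_eq_card fun a ha => hSE a (mem_XX.1 ha).1
  have hle : ∀ Q ∈ out S E, S.card + (XX F S Q).card ≤ 586 := by
    intro Q hQ
    obtain ⟨hQH, hQ⟩ := mem_out.1 hQ
    obtain ⟨a, ha, b, hb, hab, hQab⟩ := hcomp Q hQH hQ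
    have := segre5 h8 hS hE hQ ha hb hab (hSE a ha) (hSE b hb) hQab
    rw [hcE, hXE] at this
    exact this
  obtain ⟨a, ha, b, hb, hab⟩ := Finset.one_lt_card.1 (show 1 < S.card by omega)
  obtain ⟨hQ0, hQab⟩ := outer_add hS ha hb hab
  have h586 := hle (a + b) (mem_out.2 ⟨pair_le (hSE a ha) (hSE b hb) hQab, hQ0⟩)
  have hout := card_out h8 hS E
  rw [hE, hcE] at hout
  have hsD := sum_DD h8 hS E
  rw [hcE] at hsD
  have hbig := PP_large h8 hS hE hSE hk
  have hdc : ∑ Q ∈ out S E, ((PP S E).filter (fun W => Q ∈ W ∧ cnt (DD F S Q) W = 0)).card =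
      ∑ W ∈ PP S E, ((out S E).filter (fun Q => Q ∈ W ∧ cnt (DD F S Q) W = 0)).card :=
    Finset.sum_card_bipartiteAbove_eq_sum_card_bipartiteBelow
      (fun (Q : V) (W : Submodule F V) => Q ∈ W ∧ cnt (DD F S Q) W = 0)
  have h7 : (PP S E).card • 7 ≤
      ∑ W ∈ PP S E, ((out S E).filter (fun Q => Q ∈ W ∧ cnt (DD F S Q) W = 0)).card := by
    apply Finset.card_nsmul_le_sum
    intro W hW
    obtain ⟨k1, k2, k3⟩ := mem_PP.1 hW
    refine (free_count h8 hS k2 k3).trans (Finset.card_le_card ?_)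
    intro Q hQ
    simp only [Finset.mem_filter, mem_out] at hQ ⊢
    exact ⟨⟨k1 hQ.1.1, hQ.1.2⟩, hQ.1.1, hQ.2⟩
  rw [← hdc] at h7
  have hup : ∑ Q ∈ out S E, (2 * ((LL S E Q).card : ℤ)) ≤
      ∑ Q ∈ out S E, ((2932 - 10 * (S.card : ℤ)) + 5 * cnt (DD F S Q) E) := by
    apply Finset.sum_le_sum
    intro Q hQ
    have h1 := LL_bound h8 hS hE hSE hk (mem_out.1 hQ).2 (hle Q hQ)
    have h2 := XX_add_DD S Q E
    rw [hXE, hcE] at h2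
    omega
  rw [Finset.sum_add_distrib, Finset.sum_const, ← Finset.mul_sum, ← Finset.mul_sum, hsD,
    nsmul_eq_mul] at hup
  have h7' : (7 : ℤ) * (PP S E).card ≤ ∑ Q ∈ out S E, ((LL S E Q).card : ℤ) := by
    have h7n : 7 * (PP S E).card ≤ ∑ Q ∈ out S E, (LL S E Q).card := by
      rw [smul_eq_mul, mul_comm] at h7
      exact h7
    exact_mod_cast h7n
  have ho : ((out S E).card : ℤ) = 32767 - 7 * S.card := by omega
  rw [ho] at hup
  obtain ⟨m, hm⟩ : ∃ m, S.card = m + 480 := ⟨S.card - 480, by omega⟩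
  have hm2 : m ≤ 106 := by omega
  rw [hm] at hbig hup
  have e1 : m + 480 - 1 = m + 479 := by omega
  have e2 : m + 480 - 440 = m + 40 := by omega
  rw [e1, e2] at hbig
  have hbig' : ((m : ℤ) + 480) * (m + 479) * (m + 40) ≤ 72 * ((PP S E).card : ℤ) := by
    exact_mod_cast hbig
  have hm2' : (m : ℤ) ≤ 106 := by exact_mod_cast hm2
  push_cast at hup
  have hm0 : (0 : ℤ) ≤ (m : ℤ) := Int.natCast_nonneg m
  clear hbig hm2 hout
  have hfin : 14 * (((m : ℤ) + 480) * (m + 479) * (m + 40)) ≤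
      72 * ((32767 - 7 * ((m : ℤ) + 480)) * (2932 - 10 * (m + 480)) +
        5 * (49 * ((m + 480) * (m + 480 - 1)))) := by
    linarith
  generalize (m : ℤ) = z at hfin hm0 hm2'
  nlinarith [mul_nonneg hm0 hm0, mul_nonneg hm0 (mul_nonneg hm0 hm0),
    mul_nonneg hm0 (sub_nonneg.2 hm2')]

end
end CapEight
open Module

namespace CapEight
open scoped Classical
open Submodule

section
variable {F V : Type*} [Field F] [Fintype F] [AddCommGroup V] [Module F V] [Fintype V]
variable {S : Finset V}

theorem lift_bound (h8 : Fintype.card F = 8) {U E : Submodule F V} (hUE : U ≤ E) (j : ℕ)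
    (hj : finrank F E = finrank F U + j) (B : ℕ)
    (hB : ∀ W, U ≤ W → W ≤ E → finrank F W = finrank F U + 1 → cnt S W ≤ B) :
    ∃ N : ℕ, N * 7 + 1 = 8 ^ j ∧
      (cnt S E : ℤ) ≤ cnt S U + N * ((B : ℤ) - cnt S U) := by
  refine ⟨(cov U E).card, cov_card' h8 hUE j hj, ?_⟩
  have h := cov_sum_int hUE S
  have h2 : ∑ W ∈ cov U E, ((cnt S W : ℤ) - cnt S U) ≤ ∑ W ∈ cov U E, ((B : ℤ) - cnt S U) := by
    apply Finset.sum_le_sum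
    intro W hW
    obtain ⟨h1, h2, h3⟩ := mem_cov hUE hW
    have := hB W h1 h2 h3
    omega
  rw [Finset.sum_const, nsmul_eq_mul, h] at h2
  linarith

theorem final_bound (h8 : Fintype.card F = 8) (hS : Cap F S) (m : ℕ)
    (hV : finrank F V = m + 6) :
    (7 * S.card : ℤ) ≤ 7 * (478 * 8 ^ (m + 1)) - 2 * (8 ^ (m + 1) - 1) + 7 := by
  have hT : finrank F (⊤ : Submodule F V) = m + 6 := by rw [finrank_top, hV]
  have hc : cnt S (⊤ : Submodule F V) = S.card := cnt_eq_card fun _ _ => mem_top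
  have hp : (8 : ℤ) ≤ 8 ^ (m + 1) := by
    rw [pow_succ]
    have : (1 : ℤ) ≤ 8 ^ m := one_le_pow₀ (by norm_num)
    linarith
  by_cases h4 : ∃ H : Submodule F V, finrank F H = 4 ∧ 61 ≤ cnt S H
  · obtain ⟨H, hH, h61⟩ := h4
    obtain ⟨N, hN, hle⟩ := lift_bound (S := S) h8 (le_top : H ≤ ⊤) (m + 2) (by omega) 479 (by
      intro W _ _ hW
      refine dim5 h8 (hS.subset (Finset.filter_subset (fun v => v ∈ W) S)) (E := W) (by omega) ?_
      intro a ha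
      exact (Finset.mem_filter.1 ha).2)
    rw [hc] at hle
    push_cast at hle
    have hN' : (N : ℤ) * 7 + 1 = 8 * 8 ^ (m + 1) := by
      have : ((N * 7 + 1 : ℕ) : ℤ) = ((8 ^ (m + 2) : ℕ) : ℤ) := by rw [hN]
      push_cast at this
      rw [this]; ring
    have h61' : (61 : ℤ) ≤ cnt S H := by exact_mod_cast h61
    generalize (8 : ℤ) ^ (m + 1) = p at *
    have hN1 : (1 : ℤ) ≤ N := by linarith
    nlinarith [mul_nonneg (sub_nonneg.2 hN1) (sub_nonneg.2 h61')]
  push Not at h4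
  by_cases h3 : ∃ H : Submodule F V, finrank F H = 3 ∧ 9 ≤ cnt S H
  · obtain ⟨H, hH, h9⟩ := h3
    obtain ⟨N, hN, hle⟩ := lift_bound (S := S) h8 (le_top : H ≤ ⊤) (m + 3) (by omega) 60 (by
      intro W _ _ hW
      have := h4 W (by omega)
      omega)
    rw [hc] at hle
    push_cast at hle
    have hN' : (N : ℤ) * 7 + 1 = 64 * 8 ^ (m + 1) := by
      have : ((N * 7 + 1 : ℕ) : ℤ) = ((8 ^ (m + 3) : ℕ) : ℤ) := by rw [hN]
      push_cast at this
      rw [this]; ring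
    have h9' : (9 : ℤ) ≤ cnt S H := by exact_mod_cast h9
    generalize (8 : ℤ) ^ (m + 1) = p at *
    have hN1 : (1 : ℤ) ≤ N := by linarith
    nlinarith [mul_nonneg (sub_nonneg.2 hN1) (sub_nonneg.2 h9')]
  push Not at h3
  rcases Nat.lt_or_ge 1 S.card with h1 | h1
  · obtain ⟨a, ha, b, hb, hab⟩ := Finset.one_lt_card.1 h1
    have hr := hS.finrank_secant ha hb hab
    have h2 := hS.cnt_secant ha hb hab
    obtain ⟨N, hN, hle⟩ := lift_bound (S := S) h8 (le_top : span F {a, b} ≤ ⊤) (m + 4)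
      (by omega) 8 (by
      intro W _ _ hW
      have := h3 W (by omega)
      omega)
    rw [hc, h2] at hle
    have hN' : (N : ℤ) * 7 + 1 = 512 * 8 ^ (m + 1) := by
      have : ((N * 7 + 1 : ℕ) : ℤ) = ((8 ^ (m + 4) : ℕ) : ℤ) := by rw [hN]
      push_cast at this
      rw [this]; ring
    generalize (8 : ℤ) ^ (m + 1) = p at *
    push_cast at hle
    linarith
  · have : (S.card : ℤ) ≤ 1 := by exact_mod_cast h1
    linarith

end
end CapEight

theorem CapEight.not_single {F : Type*} [Field F] {n : ℕ} {P Q : PGPoint F n} (h : P ≠ Q) :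
    P.rep ∉ Submodule.span F {Q.rep} := by
  intro hm
  apply h
  have h1 : P.submodule ≤ Q.submodule := by
    rw [Projectivization.submodule_eq, Projectivization.submodule_eq,
      Submodule.span_singleton_le_iff_mem]
    exact hm
  apply Projectivization.submodule_injective
  apply Submodule.eq_of_le_of_finrank_eq h1
  rw [Projectivization.finrank_submodule, Projectivization.finrank_submodule]

open scoped Classical in
theorem CapEight.transfer {F : Type*} [Field F] [Fintype F] {n : ℕ} {K : Set (PGPoint F n)}
    (hK : IsCap K) :
    ∃ S : Finset (Fin (n + 1) → F), CapEight.Cap F S ∧ K.ncard = S.card := by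
  have hinj : Function.Injective (fun P : PGPoint F n => P.rep) := by
    intro P Q h
    by_contra hne
    apply CapEight.not_single hne
    have h' : P.rep = Q.rep := h
    rw [h']
    exact Submodule.mem_span_singleton_self _
  refine ⟨((fun P : PGPoint F n => P.rep) '' K).toFinset, ⟨?_, ?_⟩, ?_⟩
  · simp only [Set.mem_toFinset, Set.mem_image, not_exists, not_and]
    intro P _
    exact P.rep_nonzero
  · simp only [Set.mem_toFinset, Set.mem_image]
    rintro _ ⟨A, hA, rfl⟩ _ ⟨B, hB, rfl⟩ _ ⟨C, hC, rfl⟩ h1 h2 hm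
    have hCA : C ≠ A := by rintro rfl; exact h1 rfl
    have hCB : C ≠ B := by rintro rfl; exact h2 rfl
    by_cases hAB : A = B
    · subst hAB
      apply CapEight.not_single hCA
      simpa using hm
    · apply hK A hA B hB C hC hAB hCA.symm hCB.symm
      unfold Coll3
      have hle : A.submodule ⊔ B.submodule ⊔ C.submodule ≤ Submodule.span F {A.rep, B.rep} := by
        simp only [Projectivization.submodule_eq, sup_le_iff, Submodule.span_singleton_le_iff_mem]
        exact ⟨⟨Submodule.subset_span (by simp), Submodule.subset_span (by simp)⟩, hm⟩
      refine (Submodule.finrank_mono hle).trans ?_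
      have h := finrank_span_finset_le_card (R := F) ({A.rep, B.rep} : Finset (Fin (n + 1) → F))
      have h' := Finset.card_le_two (a := A.rep) (b := B.rep)
      unfold Set.finrank at h
      rw [Finset.coe_insert, Finset.coe_singleton] at h
      omega
  · rw [← Set.ncard_eq_toFinset_card', Set.ncard_image_of_injective _ hinj]

theorem stmt13 (F : Type*) [Field F] [Fintype F] (hcard : Fintype.card F = 8)
    (n : ℕ) (hn : 5 ≤ n) (K : Set (PGPoint F n)) (hK : IsCap K) :
    (K.ncard : ℝ) ≤ 478 * (8 : ℝ) ^ (n - 4)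
      - 2 * (∑ i ∈ Finset.range (n - 4), (8 : ℝ) ^ i) + 1 := by
  classical
  obtain ⟨S, hS, hc⟩ := CapEight.transfer hK
  obtain ⟨m, rfl⟩ : ∃ m, n = m + 5 := ⟨n - 5, by omega⟩
  have h := CapEight.final_bound hcard hS m (by rw [Module.finrank_fin_fun])
  have e : m + 5 - 4 = m + 1 := by omega
  have hg := geom_sum_eq (show (8 : ℝ) ≠ 1 by norm_num) (m + 1)
  rw [hc, e, hg]
  have h' : (7 * S.card : ℝ) ≤ 7 * (478 * 8 ^ (m + 1)) - 2 * (8 ^ (m + 1) - 1) + 7 := by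
    exact_mod_cast h
  linarith
end
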